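/- Suppose a finite group G admits a Frobenius group of automorphisms FH with kernel F and complement H such that C_G(F) = 1. If C_G(H) is nilpotent, then G is nilpotent. -/

import Mathlib

/-- The subgroup of fixed points of a subgroup `S` of a group `A`
acting on `G` by automorphisms. -/
def autFixed {A G : Type*} [Group A] [Group G] [MulDistribMulAction A G]
    (S : Subgroup A) : Subgroup G where
  carrier := {g | ∀ a ∈ S, a • g = g}
  one_mem' := fun a _ => smul_one a
  mul_mem' := fun {x y} hx hy a ha => by rw [smul_mul', hx a ha, hy a ha]
  inv_mem' := fun {x} hx a ha => by rw [smul_inv', hx a ha]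

/-!
Fixed points of `F` and of `H` lift from quotients by invariant nilpotent subgroups, so a
counterexample of minimal order has nilpotent proper invariant subgroups and quotients. Thompson's
normal `p`-complement theorem provides it with an invariant elementary abelian normal `r`-subgroup;
let `V` be a minimal one, and let `U` be the subgroup of elements of order dividing `q` in the
center of `G ⧸ C_G(V)`, for a prime `q ≠ r` with `C_V(U) = 1`. The kernel `F` is nilpotent, again by
Thompson, and its `q'`-part `E` satisfies `C_U(E) = 1`. As `C_G(H)` is nilpotent, `C_U(H)`
centralizes `C_V(H)`.

Now let `B` be a hyperplane of `U` with `C_V(B) ≠ 1`, let `c ∈ C_U(H)`, and put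
`C = C_{EH}(U / B)`. A computation with traces on `V` shows that `a • c ∈ B` unless `C` meets the
conjugate of `H` by `a` nontrivially. The remaining cosets `aH`, if any, form one orbit of `C`, of
length prime to `q`; on it `a • c` is constant modulo `B`, and its product there lies in `B`
because the product over all of `EH ⧸ H` is `1`. So `a • c ∈ B` for all `a`. But for every `u ∈ U`
the power `u ^ |E|` is a product of such elements `a • c`, because `C_U(E) = 1`; hence `B = U`, a
contradiction.
-/

open Subgroup MulAction
open scoped Pointwise commutatorElement IsMulCommutative

/-! ### `p`-nilpotent groups -/

/-- A group is `p`-nilpotent if it has a normal `p`-complement, encoded as a normal subgroup of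
order prime to `p` whose quotient is a `p`-group. -/
def IsPNilpotent (p : ℕ) (G : Type*) [Group G] : Prop :=
  ∃ (N : Subgroup G) (_ : N.Normal), (Nat.card N).Coprime p ∧ IsPGroup p (G ⧸ N)

section PNilpotent

variable {p : ℕ} {G K : Type*} [Group G] [Group K]

theorem isPGroup_quotient_iff {N : Subgroup G} [N.Normal] :
    IsPGroup p (G ⧸ N) ↔ ∀ g : G, ∃ k : ℕ, g ^ p ^ k ∈ N := by
  simp only [IsPGroup, QuotientGroup.mk_surjective.forall, ← QuotientGroup.mk_pow,
    QuotientGroup.eq_one_iff]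

theorem disjoint_of_coprime_of_isPGroup [hp : Fact p.Prime] [Finite G] {N D : Subgroup G}
    (hN : (Nat.card N).Coprime p) (hD : IsPGroup p D) : Disjoint N D := by
  obtain ⟨n, hn⟩ := IsPGroup.iff_card.1 hD
  exact disjoint_of_coprime_natCard (hn ▸ hN.pow_right n)

theorem mem_of_pow_mem_of_coprime {S : Subgroup G} {g : G} {n : ℕ} (hn : n.Coprime (orderOf g))
    (h : g ^ n ∈ S) : g ∈ S := by
  obtain ⟨m, hm⟩ := exists_pow_eq_self_of_coprime hn
  exact hm ▸ pow_mem h m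

theorem mem_iff_coprime_orderOf [Finite G] {N : Subgroup G} [N.Normal]
    (hN : (Nat.card N).Coprime p) (hp : IsPGroup p (G ⧸ N)) {g : G} :
    g ∈ N ↔ (orderOf g).Coprime p := by
  refine ⟨fun hg ↦ hN.coprime_dvd_left (N.orderOf_dvd_natCard hg), fun hg ↦ ?_⟩
  obtain ⟨k, hk⟩ := isPGroup_quotient_iff.1 hp g
  exact mem_of_pow_mem_of_coprime (hg.pow_right k).symm hk

theorem exists_coprime_orderOf_pow [hp : Fact p.Prime] [Finite G] (g : G) :
    ∃ k : ℕ, (orderOf (g ^ p ^ k)).Coprime p := by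
  obtain ⟨k, m, hm, hg⟩ :=
    Nat.exists_eq_pow_mul_and_not_dvd (orderOf_pos g).ne' p hp.out.ne_one
  refine ⟨k, Nat.Coprime.coprime_dvd_left (orderOf_dvd_of_pow_eq_one ?_)
    ((Nat.Prime.coprime_iff_not_dvd hp.out).2 hm).symm⟩
  rw [← pow_mul, ← hg, pow_orderOf_eq_one]

theorem isPNilpotent_iff [hp : Fact p.Prime] [Finite G] :
    IsPNilpotent p G ↔ ∀ x y : G, (orderOf x).Coprime p → (orderOf y).Coprime p →
      (orderOf (x * y)).Coprime p := by
  constructor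
  · rintro ⟨N, _, hN, hq⟩ x y hx hy
    rw [← mem_iff_coprime_orderOf hN hq] at hx hy ⊢
    exact mul_mem hx hy
  · intro hmul
    let N : Subgroup G :=
      { carrier := {g | (orderOf g).Coprime p}
        one_mem' := by simp
        mul_mem' := hmul _ _
        inv_mem' := by simp }
    have hnormal : N.Normal := ⟨fun x (hx : (orderOf x).Coprime p) g ↦ by
      change (orderOf (MulAut.conj g x)).Coprime p
      rwa [MulEquiv.orderOf_eq]⟩
    refine ⟨N, hnormal, ?_, isPGroup_quotient_iff.2 exists_coprime_orderOf_pow⟩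
    rw [Nat.coprime_comm, Nat.Prime.coprime_iff_not_dvd hp.out]
    intro hdvd
    obtain ⟨⟨x, hx⟩, hxp⟩ := exists_prime_orderOf_dvd_card' p hdvd
    have hx : (orderOf x).Coprime p := hx
    rw [← N.orderOf_mk x hx, hxp, Nat.coprime_self] at hx
    exact hp.out.ne_one hx

namespace IsPNilpotent

theorem of_coprime_card (h : (Nat.card G).Coprime p) : IsPNilpotent p G :=
  ⟨⊤, inferInstance, by rwa [card_top], isPGroup_quotient_iff.2 fun _ ↦ ⟨0, mem_top _⟩⟩

theorem of_isPGroup (h : IsPGroup p G) : IsPNilpotent p G :=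
  ⟨⊥, inferInstance, by simp, h.to_quotient ⊥⟩

theorem of_surjective [Finite G] (f : G →* K) (hf : Function.Surjective f)
    (h : IsPNilpotent p G) : IsPNilpotent p K := by
  obtain ⟨N, hn, hN, hq⟩ := h
  refine ⟨N.map f, hn.map f hf, hN.coprime_dvd_left (N.card_map_dvd f), ?_⟩
  have := hn.map f hf
  rw [isPGroup_quotient_iff] at hq ⊢
  intro x
  obtain ⟨g, rfl⟩ := hf x
  obtain ⟨k, hk⟩ := hq g
  exact ⟨k, map_pow f g _ ▸ mem_map_of_mem f hk⟩

variable [hp : Fact p.Prime]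

theorem of_injective [Finite K] (f : G →* K) (hf : Function.Injective f)
    (h : IsPNilpotent p K) : IsPNilpotent p G := by
  have := Finite.of_injective f hf
  rw [isPNilpotent_iff] at h ⊢
  intro x y hx hy
  rw [← orderOf_injective f hf] at hx hy ⊢
  exact map_mul f x y ▸ h _ _ hx hy

theorem of_le [Finite G] {M L : Subgroup G} (h : M ≤ L) (hL : IsPNilpotent p L) :
    IsPNilpotent p M :=
  hL.of_injective (inclusion h) (inclusion_injective h)

theorem of_quotient [Finite G] (M : Subgroup G) [M.Normal] (hM : (Nat.card M).Coprime p)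
    (h : IsPNilpotent p (G ⧸ M)) : IsPNilpotent p G := by
  rw [isPNilpotent_iff] at h ⊢
  intro x y hx hy
  have hxy : (orderOf ((x * y : G) : G ⧸ M)).Coprime p :=
    h _ _ (hx.coprime_dvd_left (orderOf_map_dvd (QuotientGroup.mk' M) x))
      (hy.coprime_dvd_left (orderOf_map_dvd (QuotientGroup.mk' M) y))
  have hmem : (x * y) ^ orderOf ((x * y : G) : G ⧸ M) ∈ M := by
    rw [← QuotientGroup.eq_one_iff, QuotientGroup.mk_pow, pow_orderOf_eq_one]
  refine (hxy.mul_left hM).coprime_dvd_left (orderOf_dvd_of_pow_eq_one ?_)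
  rw [pow_mul]
  exact pow_card_eq_one' (x := (⟨_, hmem⟩ : M)) |> congrArg Subtype.val

theorem of_normal [Finite G] (M : Subgroup G) [M.Normal] (hM : IsPGroup p (G ⧸ M))
    (h : IsPNilpotent p M) : IsPNilpotent p G := by
  rw [isPNilpotent_iff] at h ⊢
  have mem_of_coprime : ∀ x : G, (orderOf x).Coprime p → x ∈ M := fun x hx ↦ by
    obtain ⟨k, hk⟩ := isPGroup_quotient_iff.1 hM x
    exact mem_of_pow_mem_of_coprime (hx.pow_right k).symm hk
  intro x y hx hy
  simpa using h ⟨x, mem_of_coprime x hx⟩ ⟨y, mem_of_coprime y hy⟩ (by simpa) (by simpa)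

protected theorem pi {ι : Type*} [Finite ι] {G : ι → Type*} [∀ i, Group (G i)]
    [∀ i, Finite (G i)] (h : ∀ i, IsPNilpotent p (G i)) : IsPNilpotent p (∀ i, G i) := by
  have orderOf_dvd (x : ∀ i, G i) (i : ι) : orderOf (x i) ∣ orderOf x :=
    orderOf_dvd_of_pow_eq_one (congrFun (pow_orderOf_eq_one x) i)
  have coprime_iff (x : ∀ i, G i) :
      (orderOf x).Coprime p ↔ ∀ i, (orderOf (x i)).Coprime p := by
    refine ⟨fun hx i ↦ hx.coprime_dvd_left (orderOf_dvd x i), fun hx ↦ ?_⟩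
    rw [Nat.coprime_comm, Nat.Prime.coprime_iff_not_dvd hp.out]
    intro hdvd
    have hy := orderOf_pow_orderOf_div (orderOf_pos x).ne' hdvd
    refine hp.out.ne_one (hy.symm.trans (orderOf_eq_one_iff.2 (funext fun i ↦ ?_)))
    exact orderOf_eq_one_iff.1 (Nat.eq_one_of_dvd_coprimes (hx i)
      (orderOf_pow_dvd (orderOf x / p)) ((orderOf_dvd _ i).trans hy.dvd))
  simp only [isPNilpotent_iff] at h ⊢
  simp only [coprime_iff]
  exact fun x y hx hy i ↦ h i _ _ (hx i) (hy i)

end IsPNilpotent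

theorem isPNilpotent_of_isNilpotent (p : ℕ) [hp : Fact p.Prime] (G : Type*) [Group G] [Finite G]
    [Group.IsNilpotent G] : IsPNilpotent p G := by
  let e := Sylow.directProductOfNormal (G := G) inferInstance
  refine .of_injective e.symm.toMonoidHom e.symm.injective (.pi fun q ↦ .pi fun P ↦ ?_)
  have hq : Fact (q : ℕ).Prime := ⟨Nat.prime_of_mem_primeFactors q.2⟩
  by_cases hqp : (q : ℕ) = p
  · exact .of_isPGroup (hqp ▸ P.isPGroup')
  · obtain ⟨n, hn⟩ := IsPGroup.iff_card.1 P.isPGroup'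
    exact .of_coprime_card (hn ▸ ((Nat.coprime_primes hq.out hp.out).2 hqp).pow_left n)

theorem sup_sylow_eq_top [hp : Fact p.Prime] [Finite G] {N : Subgroup G} [N.Normal]
    (hN : IsPGroup p (G ⧸ N)) (P : Sylow p G) : N ⊔ P = ⊤ := by
  obtain ⟨n, hn⟩ := IsPGroup.iff_card.1 hN
  have hcop : (p ^ n).Coprime (P : Subgroup G).index :=
    ((Nat.Prime.coprime_iff_not_dvd hp.out).2 P.not_dvd_index).pow_left n
  rw [← index_eq_card] at hn
  exact index_eq_one.1 (Nat.eq_one_of_dvd_coprimes hcop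
    (hn ▸ index_dvd_of_le le_sup_left) (index_dvd_of_le le_sup_right))

theorem IsPNilpotent.centralizer_sup_sylow [Fact p.Prime] [Finite G] (h : IsPNilpotent p G)
    (P : Sylow p G) (D : Subgroup G) [hD : D.Normal] (hDp : IsPGroup p D) :
    centralizer (D : Set G) ⊔ P = ⊤ := by
  obtain ⟨N, hn, hN, hq⟩ := h
  have hND : N ≤ centralizer (D : Set G) := fun x hx d hd ↦
    (commute_of_normal_of_disjoint N D hn hD (disjoint_of_coprime_of_isPGroup hN hDp) x d hx
      hd).symm
  exact top_le_iff.1 ((sup_sylow_eq_top hq P).ge.trans (sup_le_sup_right hND _))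

end PNilpotent

/-! ### Frobenius' normal complement theorem -/

/-- The hypothesis of Frobenius' normal `p`-complement theorem: the normalizers of the nontrivial
`p`-subgroups are `p`-nilpotent. -/
def LocallyPNilpotent (p : ℕ) (G : Type*) [Group G] : Prop :=
  ∀ U : Subgroup G, IsPGroup p U → U ≠ ⊥ → IsPNilpotent p (normalizer (U : Set G))

section Frobenius

variable {p : ℕ} {G : Type*} [Group G]

theorem lt_normalizer_inf_of_lt {S D : Subgroup G} [Group.IsNilpotent S] (h : D < S) :
    D < normalizer (D : Set G) ⊓ S := by
  have hlt : D.subgroupOf S < ⊤ := by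
    rw [lt_top_iff_ne_top, Ne, subgroupOf_eq_top]
    exact not_le_of_gt h
  obtain ⟨x, hxN, hxD⟩ :=
    SetLike.exists_of_lt (Group.normalizerCondition_of_isNilpotent (G := S) _ hlt)
  rw [← subgroupOf_normalizer_eq h.le] at hxN
  exact lt_of_le_of_ne (le_inf le_normalizer h.le) fun e ↦
    hxD (e.ge (show (x : G) ∈ normalizer (D : Set G) ⊓ S from ⟨hxN, x.2⟩))

theorem mem_conj_smul {S : Subgroup G} {k x : G} : x ∈ MulAut.conj k • S ↔ k⁻¹ * x * k ∈ S := by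
  simp [mem_pointwise_smul_iff_inv_smul_mem, ← map_inv]

variable [Finite G]

theorem card_lt_of_ne_top {M : Subgroup G} (hM : M ≠ ⊤) : Nat.card M < Nat.card G :=
  M.card_le_card_group.lt_of_ne (mt M.eq_top_of_card_eq hM)

theorem card_quotient_lt_of_ne_bot {N : Subgroup G} (hN : N ≠ ⊥) :
    Nat.card (G ⧸ N) < Nat.card G := by
  rw [card_eq_card_quotient_mul_card_subgroup N]
  exact lt_mul_of_one_lt_right Nat.card_pos (N.one_lt_card_iff_ne_bot.2 hN)

variable [Fact p.Prime]

theorem IsPNilpotent.exists_mem_centralizer_smul_eq (h : IsPNilpotent p G) (D : Subgroup G)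
    [D.Normal] (hD : IsPGroup p D) (P Q : Sylow p G) :
    ∃ k ∈ centralizer (D : Set G), k • P = Q := by
  obtain ⟨g, rfl⟩ := MulAction.exists_smul_eq G P Q
  obtain ⟨k, hk, u, hu, rfl⟩ :=
    mem_sup_of_normal_left.1 ((h.centralizer_sup_sylow P D hD).ge (mem_top g))
  exact ⟨k, hk, by rw [mul_smul, Sylow.smul_eq_iff_mem_normalizer.2 (le_normalizer hu)]⟩

theorem exists_le_smul_of_le_normalizer {D S T : Subgroup G} (hD : IsPGroup p D)
    (h : IsPNilpotent p (normalizer (D : Set G))) (hS : IsPGroup p S) (hT : IsPGroup p T)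
    (hSN : S ≤ normalizer (D : Set G)) (hTN : T ≤ normalizer (D : Set G)) :
    ∃ k ∈ centralizer (D : Set G), ∃ Q : Sylow p G, S ≤ Q ∧ T ≤ (k • Q : Sylow p G) := by
  set N := normalizer (D : Set G)
  obtain ⟨S₁, hS₁⟩ := (hS.comap_of_injective N.subtype N.subtype_injective).exists_le_sylow
  obtain ⟨T₁, hT₁⟩ := (hT.comap_of_injective N.subtype N.subtype_injective).exists_le_sylow
  obtain ⟨k, hk, rfl⟩ := h.exists_mem_centralizer_smul_eq (D.subgroupOf N)
    (hD.comap_of_injective N.subtype N.subtype_injective) S₁ T₁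
  obtain ⟨Q, hQ⟩ := (S₁.isPGroup'.map N.subtype).exists_le_sylow
  refine ⟨k, fun d hd ↦ congrArg Subtype.val (hk ⟨d, le_normalizer hd⟩ hd), Q,
    fun x hx ↦ hQ (mem_map_of_mem N.subtype (hS₁ (x := ⟨x, hSN hx⟩) hx)), fun x hx ↦ ?_⟩
  exact mem_conj_smul.2 (hQ (mem_map_of_mem N.subtype
    (mem_conj_smul.1 (hT₁ (x := ⟨x, hTN hx⟩) hx))))

/-- Downward induction on `S ⊓ T`: inside `N(S ⊓ T)` the intersection grows, since a proper subgroup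
of a `p`-group is properly contained in its normalizer. -/
theorem LocallyPNilpotent.exists_mem_centralizer_inf_smul_eq (hG : LocallyPNilpotent p G)
    (S T : Sylow p G) (hST : (S ⊓ T : Subgroup G) ≠ ⊥) :
    ∃ c ∈ centralizer ((S ⊓ T : Subgroup G) : Set G), c • S = T := by
  induction hD : (S ⊓ T : Subgroup G) using WellFoundedGT.induction generalizing S T with
  | ind D ih =>
  have hDS : D ≤ S := hD ▸ inf_le_left
  have hDT : D ≤ T := hD ▸ inf_le_right
  by_cases heq : S = T
  · exact ⟨1, one_mem _, by rwa [one_smul]⟩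
  have hDS' : D < S := hDS.lt_of_ne fun e ↦
    heq (Sylow.ext (S.3 T.2 (e ▸ hDT)).symm)
  have hDT' : D < T := hDT.lt_of_ne fun e ↦ heq (Sylow.ext (T.3 S.2 (e ▸ hDS)))
  have hSnil : Group.IsNilpotent S := S.2.isNilpotent
  have hTnil : Group.IsNilpotent T := T.2.isNilpotent
  obtain ⟨k, hk, Q, hSQ, hTQ⟩ := exists_le_smul_of_le_normalizer (S.2.to_le hDS)
    (hG D (S.2.to_le hDS) (hD ▸ hST)) (S.2.to_le inf_le_right) (T.2.to_le inf_le_right)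
    (inf_le_left (b := (S : Subgroup G))) (inf_le_left (b := (T : Subgroup G)))
  have link (X Y : Sylow p G) (hXY : D < (X ⊓ Y : Subgroup G)) :
      ∃ c ∈ centralizer (D : Set G), c • X = Y := by
    obtain ⟨c, hc, e⟩ := ih _ hXY X Y (ne_bot_of_gt hXY) rfl
    exact ⟨c, centralizer_le hXY.le hc, e⟩
  obtain ⟨c, hc, rfl⟩ := link S Q ((lt_normalizer_inf_of_lt hDS').trans_le
    (le_inf inf_le_right hSQ))
  obtain ⟨c', hc', rfl⟩ := link _ T ((lt_normalizer_inf_of_lt hDT').trans_le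
    (le_inf hTQ inf_le_right))
  exact ⟨c' * k * c, mul_mem (mul_mem hc' hk) hc, by simp only [mul_smul]⟩

theorem LocallyPNilpotent.exists_conj_eq_conj (hG : LocallyPNilpotent p G) (P : Sylow p G)
    {x g : G} (hx : x ∈ P) (hgx : g * x * g⁻¹ ∈ P) : ∃ u ∈ P, u * x * u⁻¹ = g * x * g⁻¹ := by
  obtain rfl | hx1 := eq_or_ne x 1
  · exact ⟨1, one_mem P, by simp⟩
  have hmem : x ∈ (P ⊓ (g⁻¹ • P : Sylow p G) : Subgroup G) :=
    ⟨hx, mem_conj_smul.2 (by rwa [inv_inv])⟩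
  obtain ⟨c, hc, e⟩ := hG.exists_mem_centralizer_inf_smul_eq P (g⁻¹ • P)
    (ne_bot_iff_exists_ne_one.2 ⟨⟨x, hmem⟩, fun h ↦ hx1 (congrArg Subtype.val h)⟩)
  have hcx : x * c = c * x := hc x hmem
  rw [eq_inv_smul_iff, ← mul_smul, Sylow.smul_eq_iff_mem_normalizer] at e
  have hPne : (P : Subgroup G) ≠ ⊥ :=
    ne_bot_iff_exists_ne_one.2 ⟨⟨x, hx⟩, fun h ↦ hx1 (congrArg Subtype.val h)⟩
  set N := normalizer (P : Set G)
  have hPN : ((P : Subgroup G).subgroupOf N).Normal := normal_in_normalizer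
  obtain ⟨k, hk, u, hu, huk⟩ := mem_sup_of_normal_left.1 <|
    ((hG P P.2 hPne).centralizer_sup_sylow (P.subtype le_normalizer)
      ((P : Subgroup G).subgroupOf N) (P.2.comap_of_injective _ N.subtype_injective)).ge
      (mem_top (⟨g * c, e⟩ : N))
  have hgc : g * c = k * u := congrArg Subtype.val huk.symm
  have hu : (u : G) ∈ P := hu
  refine ⟨u, hu, ?_⟩
  have hku : u * x * u⁻¹ * k = k * (u * x * u⁻¹) :=
    congrArg Subtype.val (hk ⟨u * x * u⁻¹, le_normalizer (mul_mem (mul_mem hu hx) (inv_mem hu))⟩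
      (mul_mem (mul_mem hu hx) (inv_mem hu)))
  calc (u : G) * x * (u : G)⁻¹
    _ = k * (u * x * (u : G)⁻¹) * (k : G)⁻¹ := eq_mul_inv_of_mul_eq hku
    _ = k * u * x * (k * u : G)⁻¹ := by group
    _ = g * (c * x) * c⁻¹ * g⁻¹ := by rw [← hgc]; group
    _ = g * x * g⁻¹ := by rw [← hcx]; group

theorem LocallyPNilpotent.focalSubgroupOf_eq (hG : LocallyPNilpotent p G) (P : Sylow p G) :
    (P : Subgroup G).focalSubgroupOf = commutator P := by
  refine le_antisymm ?_ (commutator_le_focalSubgroupOf _)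
  rw [focalSubgroupOf_eq_closure, closure_le]
  rintro ⟨_, hy⟩ ⟨x, hx, g, rfl⟩
  have hgx : g * x⁻¹ * g⁻¹ ∈ (P : Subgroup G) := by
    simpa [commutatorElement_def, mul_assoc] using mul_mem (inv_mem hx) hy
  obtain ⟨u, hu, e⟩ := hG.exists_conj_eq_conj P (inv_mem hx) hgx
  have hxu : (⟨⁅x, g⁆, hy⟩ : P) = ⁅(⟨x, hx⟩ : P), ⟨u, hu⟩⁆ := Subtype.ext <| by
    change x * g * x⁻¹ * g⁻¹ = x * u * x⁻¹ * u⁻¹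
    simp only [mul_assoc] at e ⊢
    rw [e]
  exact hxu ▸ commutator_mem_commutator (mem_top _) (mem_top _)

theorem LocallyPNilpotent.subgroup (hG : LocallyPNilpotent p G) (M : Subgroup G) :
    LocallyPNilpotent p M := by
  intro U hU hne
  have hUM := hG (U.map M.subtype) (hU.map _)
    ((map_eq_bot_iff_of_injective U M.subtype_injective).not.2 hne)
  refine .of_injective ((M.subtype.comp (normalizer (U : Set M)).subtype).codRestrict _ fun x ↦
    le_normalizer_map M.subtype (mem_map_of_mem _ x.2)) (fun a b hab ↦ ?_) hUM
  exact Subtype.ext (Subtype.ext (congrArg (fun x : normalizer _ ↦ (x : G)) hab))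

theorem LocallyPNilpotent.isPNilpotent {G : Type*} [Group G] [Finite G]
    (hG : LocallyPNilpotent p G) : IsPNilpotent p G := by
  induction hn : Nat.card G using Nat.strong_induction_on generalizing G with
  | h n ih =>
  have P : Sylow p G := default
  by_cases hP : (P : Subgroup G) = ⊥
  · exact .of_coprime_card ((Nat.Prime.coprime_iff_not_dvd Fact.out).2
      (P.dvd_card_of_dvd_card.mt (by simp [hP, Nat.Prime.ne_one Fact.out]))).symm
  have hPnontriv : Nontrivial P := nontrivial_iff_ne_bot _ |>.2 hP
  have hPnil : Group.IsNilpotent P := P.2.isNilpotent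
  have hfocal : (P : Subgroup G).focalSubgroupOf ≠ ⊤ := by
    rw [hG.focalSubgroupOf_eq P]
    exact (Group.IsSolvable.commutator_lt_top_of_nontrivial P).ne
  let M := (P : Subgroup G).transferFocal.ker
  have hquot : IsPGroup p (G ⧸ M) := (P.2.to_quotient _).of_equiv
    (transferFocal.quotientKerMulEquivQuotientFocalSubroupOf P).symm
  have hM : M ≠ ⊤ := fun hM ↦ hfocal <| by
    have := QuotientGroup.subsingleton_quotient_top (G := G)
    rw [← hM] at this
    exact QuotientGroup.subsingleton_iff.1
      (transferFocal.quotientKerMulEquivQuotientFocalSubroupOf P).symm.subsingleton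
  exact .of_normal M hquot (ih _ (hn ▸ card_lt_of_ne_top hM) (hG.subgroup M) rfl)

end Frobenius

/-! ### Groups acting by automorphisms -/

section FixedPoints

variable {A G : Type*} [Group A] [Group G] [MulDistribMulAction A G]

theorem autFixed_anti {S T : Subgroup A} (h : S ≤ T) :
    autFixed (G := G) T ≤ autFixed S := fun _ hg a ha ↦ hg a (h ha)

theorem mem_autFixed_iff_le_stabilizer {S : Subgroup A} {g : G} :
    g ∈ autFixed S ↔ S ≤ MulAction.stabilizer A g := Iff.rfl

theorem mem_autFixed_zpowers {a : A} {g : G} : g ∈ autFixed (zpowers a) ↔ a • g = g := by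
  rw [mem_autFixed_iff_le_stabilizer, zpowers_le, MulAction.mem_stabilizer_iff]

theorem autFixed_sup (S T : Subgroup A) :
    autFixed (G := G) (S ⊔ T) = autFixed S ⊓ autFixed T := by
  ext g
  simp only [mem_inf, mem_autFixed_iff_le_stabilizer, sup_le_iff]

variable (A) in
/-- A subgroup of a group with operators `A` is *invariant* if the operators map it into itself. -/
class IsSMulInvariant (N : Subgroup G) : Prop where
  smul_mem : ∀ (a : A) {g : G}, g ∈ N → a • g ∈ N

namespace IsSMulInvariant

instance mulDistribMulAction (N : Subgroup G) [IsSMulInvariant A N] : MulDistribMulAction A N where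
  smul a n := ⟨a • (n : G), smul_mem a n.2⟩
  one_smul n := Subtype.ext (one_smul A (n : G))
  mul_smul a b n := Subtype.ext (mul_smul a b (n : G))
  smul_mul a x y := Subtype.ext (smul_mul' a (x : G) y)
  smul_one a := Subtype.ext (smul_one a)

theorem coe_smul {N : Subgroup G} [IsSMulInvariant A N] (a : A) (n : N) :
    ((a • n : N) : G) = a • (n : G) := rfl

instance restrict (S : Subgroup A) (N : Subgroup G) [IsSMulInvariant A N] : IsSMulInvariant S N :=
  ⟨fun s _ ↦ smul_mem (s : A)⟩

end IsSMulInvariant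

theorem inf_autFixed_ne_bot {p : ℕ} [Fact p.Prime] [Finite G] {S : Subgroup A} (hS : IsPGroup p S)
    (Y : Subgroup G) [IsSMulInvariant S Y] (hY : p ∣ Nat.card Y) : Y ⊓ autFixed S ≠ ⊥ := by
  obtain ⟨y, hy, hne⟩ := hS.exists_fixed_point_of_prime_dvd_card_of_fixed_point Y hY
    (a := 1) fun s ↦ smul_one s
  exact ne_bot_iff_exists_ne_one.2 ⟨⟨y, y.2, fun s hs ↦ congrArg Subtype.val (hy ⟨s, hs⟩)⟩,
    fun h ↦ hne (Subtype.ext (congrArg Subtype.val h).symm)⟩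

end FixedPoints

section Trace

variable (A V : Type*) [Group A] [Group V] [IsMulCommutative V] [MulDistribMulAction A V]

/-- The trace (or norm) of an action on an abelian group, sending `v` to `∏ a, a • v`. -/
def traceHom [Fintype A] : V →* V where
  toFun v := ∏ a : A, a • v
  map_one' := by simp only [smul_one, Finset.prod_const_one]
  map_mul' x y := by simp only [smul_mul', Finset.prod_mul_distrib]

variable {A V}

theorem traceHom_apply [Fintype A] (v : V) : traceHom A V v = ∏ a : A, a • v := rfl

theorem traceHom_smul_of_mem_centralizer {U : Subgroup A} [Fintype U] {b : A}
    (hb : b ∈ centralizer (U : Set A)) (v : V) :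
    traceHom U V (b • v) = b • traceHom U V v := by
  simp only [traceHom_apply, Finset.smul_prod']
  refine Finset.prod_congr rfl fun u _ ↦ ?_
  rw [Subgroup.smul_def, Subgroup.smul_def, ← mul_smul, ← mul_smul, mem_centralizer_iff.1 hb u u.2]

variable [Fintype A]

theorem traceHom_smul (a : A) (v : V) : traceHom A V (a • v) = traceHom A V v := by
  simp only [traceHom_apply, ← mul_smul]
  exact Equiv.prod_comp (Equiv.mulRight a) (· • v)

theorem smul_traceHom (a : A) (v : V) : a • traceHom A V v = traceHom A V v := by
  simp only [traceHom_apply, Finset.smul_prod', ← mul_smul]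
  exact Equiv.prod_comp (Equiv.mulLeft a) (· • v)

theorem traceHom_eq_one (h : autFixed (G := V) (⊤ : Subgroup A) = ⊥) (v : V) :
    traceHom A V v = 1 := by
  rw [← mem_bot, ← h]
  exact fun a _ ↦ smul_traceHom a v

theorem traceHom_eq_pow {v : V} (hv : ∀ a : A, a • v = v) : traceHom A V v = v ^ Nat.card A := by
  simp only [traceHom_apply, hv, Finset.prod_const, Finset.card_univ, Nat.card_eq_fintype_card]

theorem eq_one_of_traceHom_eq_one (h : (Nat.card A).Coprime (Nat.card V)) {v : V}
    (hv : ∀ a : A, a • v = v) (htr : traceHom A V v = 1) : v = 1 := by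
  rw [traceHom_eq_pow hv] at htr
  exact orderOf_eq_one_iff.1 (Nat.eq_one_of_dvd_coprimes h (orderOf_dvd_of_pow_eq_one htr)
    (orderOf_dvd_natCard v))

instance ker_traceHom_isSMulInvariant : IsSMulInvariant A (traceHom A V).ker :=
  ⟨fun a _ hv ↦ (traceHom_smul a _).trans hv⟩

theorem smul_div_mem_ker_traceHom (a : A) (v : V) : a • v / v ∈ (traceHom A V).ker := by
  rw [MonoidHom.mem_ker, map_div, traceHom_smul, div_self']

end Trace

section Coprime

variable {A V : Type*} [Group A] [Group V] [IsMulCommutative V] [MulDistribMulAction A V]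

theorem exists_ker_sup_zpowers_eq_top {K : Type*} [Group K] (f : A →* K) [IsCyclic f.range] :
    ∃ a : A, f.ker ⊔ zpowers a = ⊤ := by
  obtain ⟨⟨_, a, rfl⟩, ha⟩ := IsCyclic.exists_zpow_surjective (G := f.range)
  refine ⟨a, ?_⟩
  rw [sup_comm, ← comap_map_eq, MonoidHom.map_zpowers, eq_top_iff]
  intro u _
  obtain ⟨n, hn⟩ := ha ⟨f u, u, rfl⟩
  exact ⟨n, congrArg Subtype.val hn⟩

variable (A V) in
/-- The commutative subring of `End V` generated by `A` has an associated prime `P` on `V`, and `A`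
acts on the vectors annihilated by `P` through the cyclic group of units of a finite field. -/
theorem exists_sup_zpowers_eq_top_and_autFixed_ne_bot [IsMulCommutative A] [Finite V]
    [Nontrivial V] :
    ∃ (B : Subgroup A) (a : A), B ⊔ zpowers a = ⊤ ∧ autFixed (G := V) B ≠ ⊥ := by
  let ρ := Representation.ofMulDistribMulAction A V
  have hcomm : ∀ x ∈ Set.range ρ, ∀ y ∈ Set.range ρ, x * y = y * x := by
    rintro _ ⟨a, rfl⟩ _ ⟨b, rfl⟩
    rw [← map_mul, ← map_mul, mul_comm']
  have := Subring.isMulCommutative_closure hcomm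
  let E := Subring.closure (Set.range ρ)
  have : Finite (Additive V) := inferInstanceAs (Finite V)
  have : Nontrivial (Additive V) := inferInstanceAs (Nontrivial V)
  have : Finite (Module.End ℤ (Additive V)) := Finite.of_injective _ DFunLike.coe_injective
  have : Finite E := inferInstance
  obtain ⟨P, hP⟩ := associatedPrimes.nonempty E (Additive V)
  obtain ⟨hPp, v, hv⟩ := isAssociatedPrime_iff.1 hP
  let j : A →* E := ρ.codRestrict E fun a ↦ Subring.subset_closure ⟨a, rfl⟩
  have : Finite (E ⧸ P) := Finite.of_surjective _ Ideal.Quotient.mk_surjective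
  let k : A →* (E ⧸ P)ˣ := (Units.map (Ideal.Quotient.mk P : E →* E ⧸ P)).comp j.toHomUnits
  obtain ⟨a, ha⟩ := exists_ker_sup_zpowers_eq_top k
  refine ⟨k.ker, a, ha, ne_bot_iff_exists_ne_one.2 ⟨⟨v.toMul, fun b hb ↦ ?_⟩, fun h ↦ ?_⟩⟩
  · have hbP : j b - 1 ∈ P := Ideal.Quotient.eq.1 (congrArg Units.val hb)
    rw [hv, Submodule.mem_colon_singleton, Submodule.mem_bot, sub_smul, one_smul,
      sub_eq_zero] at hbP
    exact hbP
  · have hv0 : v = 0 := congrArg Subtype.val h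
    exact hPp.ne_top (by rw [hv, hv0]; ext; simp)

theorem autFixed_eq_top_of_autFixed_le {p : ℕ} [Fact p.Prime] [Finite V] (hV : IsPGroup p V)
    {B U : Subgroup A} [Finite U] (hB : IsPGroup p B) (hU : (Nat.card U).Coprime p)
    (hBU : B ≤ centralizer (U : Set A)) (h : autFixed (G := V) B ≤ autFixed U) :
    autFixed (G := V) U = ⊤ := by
  have := Fintype.ofFinite U
  have hcop : (Nat.card U).Coprime (Nat.card V) := by
    obtain ⟨n, hn⟩ := IsPGroup.iff_card.1 hV
    exact hn ▸ hU.pow_right n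
  let Y := (traceHom U V).ker
  have : IsSMulInvariant B Y := ⟨fun b v hv ↦ by
    rw [MonoidHom.mem_ker] at hv ⊢
    rw [Subgroup.smul_def, traceHom_smul_of_mem_centralizer (hBU b.2), hv, smul_one]⟩
  have hY : Y = ⊥ := by
    by_contra hne
    have : Nontrivial Y := (nontrivial_iff_ne_bot Y).2 hne
    obtain ⟨n, hn, hcard⟩ := (hV.to_subgroup Y).nontrivial_iff_card.1 this
    refine inf_autFixed_ne_bot hB Y (hcard ▸ dvd_pow_self p hn.ne')
      (eq_bot_iff.2 fun y ⟨hyY, hyB⟩ ↦ ?_)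
    exact eq_one_of_traceHom_eq_one hcop (fun u ↦ h hyB u u.2) hyY
  refine eq_top_iff.2 fun v _ u hu ↦ ?_
  have huv := smul_div_mem_ker_traceHom (⟨u, hu⟩ : U) v
  rwa [show (traceHom U V).ker = ⊥ from hY, mem_bot, div_eq_one] at huv

theorem exists_sup_zpowers_eq_top_and_not_autFixed_le [IsMulCommutative A] [Finite A] [Finite V]
    (h : (Nat.card A).Coprime (Nat.card V)) (hne : autFixed (G := V) (⊤ : Subgroup A) ≠ ⊤) :
    ∃ (B : Subgroup A) (a : A),
      B ⊔ zpowers a = ⊤ ∧ ¬ autFixed (G := V) B ≤ autFixed (zpowers a) := by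
  have := Fintype.ofFinite A
  let Y := (traceHom A V).ker
  have : Nontrivial Y := by
    refine (nontrivial_iff_ne_bot Y).2 fun hY ↦ hne (eq_top_iff.2 fun v _ a _ ↦ ?_)
    have hav := smul_div_mem_ker_traceHom a v
    rwa [show (traceHom A V).ker = ⊥ from hY, mem_bot, div_eq_one] at hav
  obtain ⟨B, a, hBa, hfix⟩ := exists_sup_zpowers_eq_top_and_autFixed_ne_bot A Y
  refine ⟨B, a, hBa, fun hle ↦ hfix (eq_bot_iff.2 fun v hv ↦ Subtype.ext ?_)⟩
  have hvB : (v : V) ∈ autFixed B := fun b hb ↦ congrArg Subtype.val (hv b hb)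
  have hvA : (v : V) ∈ autFixed (B ⊔ zpowers a) := by
    rw [autFixed_sup]
    exact ⟨hvB, hle hvB⟩
  exact eq_one_of_traceHom_eq_one h (fun x ↦ hvA x (hBa ▸ mem_top x)) v.2

end Coprime

/-! ### Quadratic action -/

section Ring

variable {R : Type*} [Ring R] {p : ℕ}

theorem pow_prime_pow_totient_eq_self (hp : p.Prime) (hR : (p : R) = 0) {s : Set R}
    (hs : ∀ x ∈ s, ∀ y ∈ s, x * y = y * x) {m : ℕ} (hm : m.Coprime p) (hsm : ∀ x ∈ s, x ^ m = 1)
    {x : R} (hx : x ∈ Subring.closure s) : x ^ p ^ m.totient = x := by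
  have := Subring.isMulCommutative_closure hs
  have hadd {x y : R} (h : Commute x y) :
      (x + y) ^ p ^ m.totient = x ^ p ^ m.totient + y ^ p ^ m.totient := by
    rw [h.add_pow_prime_pow_eq hp, hR, zero_mul, zero_mul, zero_mul, add_zero]
  have hzero : (0 : R) ^ p ^ m.totient = 0 := zero_pow (pow_ne_zero _ hp.ne_zero)
  induction hx using Subring.closure_induction with
  | mem x hx =>
    rw [pow_eq_pow_mod _ (hsm x hx), Nat.ModEq.pow_totient hm.symm,
      ← pow_eq_pow_mod _ (hsm x hx), pow_one]
  | zero => exact hzero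
  | one => exact one_pow _
  | add x y hx hy ihx ihy =>
    rw [hadd (congrArg Subtype.val (mul_comm' (⟨x, hx⟩ : Subring.closure s) ⟨y, hy⟩)), ihx, ihy]
  | neg x _ ih =>
    have h := hadd (Commute.refl x).neg_right
    rw [add_neg_cancel, hzero, ih] at h
    exact (neg_eq_of_add_eq_zero_right h.symm).symm
  | mul x y hx hy ihx ihy =>
    have h : Commute x y := congrArg Subtype.val (mul_comm' (⟨x, hx⟩ : Subring.closure s) ⟨y, hy⟩)
    rw [h.mul_pow, ihx, ihy]

theorem eq_zero_of_mul_self_eq_zero_of_mem_closure (hp : p.Prime) (hR : (p : R) = 0) {s : Set R}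
    (hs : ∀ x ∈ s, ∀ y ∈ s, x * y = y * x) {m : ℕ} (hm : m.Coprime p) (hsm : ∀ x ∈ s, x ^ m = 1)
    {x : R} (hx : x ∈ Subring.closure s) (h : x * x = 0) : x = 0 := by
  have hm0 : m.totient ≠ 0 := by
    rw [Ne, Nat.totient_eq_zero]
    rintro rfl
    exact hp.ne_one ((Nat.coprime_zero_left p).1 hm)
  rw [← pow_prime_pow_totient_eq_self hp hR hs hm hsm hx]
  exact pow_eq_zero_of_le (hp.two_le.trans (Nat.le_self_pow hm0 p)) ((pow_two x).trans h)

theorem eq_zero_of_add_self_eq_zero_of_odd (hp : Odd p) (hR : (p : R) = 0) {x : R}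
    (h : x + x = 0) : x = 0 := by
  obtain ⟨k, rfl⟩ := hp
  have h0 : ((2 * k + 1 : ℕ) : R) * x = k * (x + x) + x := by push_cast; noncomm_ring
  rwa [hR, h, zero_mul, mul_zero, zero_add, eq_comm] at h0

section SquareZero

variable (h2 : ∀ x : R, x + x = 0 → x = 0) {E : Subring R} (hE : ∀ x ∈ E, x * x = 0 → x = 0)
  {N : R} (hN : N * N = 0) {u : R} (hu : u ∈ E) (hu₁ : (1 + N) * u * (1 - N) ∈ E)
  (hu₂ : (1 - N) * u * (1 + N) ∈ E)

include h2 hE hN hu hu₁ hu₂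

theorem mul_mul_eq_zero_of_mul_self_eq_zero : N * u * N = 0 := by
  refine h2 _ (hE _ ?_ ?_)
  · have : N * u * N + N * u * N = u + u - (1 + N) * u * (1 - N) - (1 - N) * u * (1 + N) := by
      noncomm_ring
    rw [this]
    exact E.sub_mem (E.sub_mem (E.add_mem hu hu) hu₁) hu₂
  · calc _ = 4 • (N * u * (N * N) * u * N) := by noncomm_ring
      _ = 0 := by rw [hN]; simp only [mul_zero, zero_mul, smul_zero]

theorem commute_of_mul_self_eq_zero : Commute N u := by
  have hβ : N * u * N = 0 := mul_mul_eq_zero_of_mul_self_eq_zero h2 hE hN hu hu₁ hu₂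
  have hγ : N * (u * u) * N = 0 := by
    refine mul_mul_eq_zero_of_mul_self_eq_zero h2 hE hN (E.mul_mem hu hu) ?_ ?_
    · have : (1 + N) * (u * u) * (1 - N) =
          (1 + N) * u * (1 - N) * ((1 + N) * u * (1 - N)) +
            (1 + N) * u * (N * N) * u * (1 - N) := by
        noncomm_ring
      rw [this, hN, mul_zero, zero_mul, zero_mul, add_zero]
      exact E.mul_mem hu₁ hu₁
    · have : (1 - N) * (u * u) * (1 + N) =
          (1 - N) * u * (1 + N) * ((1 - N) * u * (1 + N)) +
            (1 - N) * u * (N * N) * u * (1 + N) := by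
        noncomm_ring
      rw [this, hN, mul_zero, zero_mul, zero_mul, add_zero]
      exact E.mul_mem hu₂ hu₂
  refine sub_eq_zero.1 (h2 _ (hE _ ?_ ?_))
  · have : N * u - u * N + (N * u - u * N) = (1 + N) * u * (1 - N) - (1 - N) * u * (1 + N) := by
      noncomm_ring
    exact this ▸ E.sub_mem hu₁ hu₂
  · calc _ = 4 • (N * u * N * u + u * (N * u * N) - N * (u * u) * N - u * (N * N) * u) := by
          noncomm_ring
      _ = 0 := by rw [hβ, hγ, hN]; simp only [mul_zero, zero_mul, add_zero, sub_zero, smul_zero]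

end SquareZero

end Ring

/-- An abelian group is *elementary abelian* for the prime `p` if its exponent divides `p`. -/
class IsElementaryAbelian (p : ℕ) (G : Type*) [Group G] : Prop extends IsMulCommutative G where
  pow_eq_one : ∀ x : G, x ^ p = 1

section ElementaryAbelian

variable {p : ℕ} {G : Type*} [Group G]

theorem isElementaryAbelian_of_le {S T : Subgroup G} [hT : IsElementaryAbelian p T] (h : S ≤ T) :
    IsElementaryAbelian p S where
  is_comm.comm x y := Subtype.ext
    (congrArg Subtype.val (mul_comm' (⟨x, h x.2⟩ : T) ⟨y, h y.2⟩) :)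
  pow_eq_one x := Subtype.ext (congrArg Subtype.val (hT.pow_eq_one ⟨x, h x.2⟩) :)

instance isElementaryAbelian_subgroup [IsElementaryAbelian p G] (S : Subgroup G) :
    IsElementaryAbelian p S where
  pow_eq_one x := Subtype.ext (IsElementaryAbelian.pow_eq_one (x : G))

theorem isPGroup_of_isElementaryAbelian [h : IsElementaryAbelian p G] : IsPGroup p G :=
  fun x ↦ ⟨1, (pow_one p).symm ▸ h.pow_eq_one x⟩

theorem card_zpowers_le_of_isElementaryAbelian [Fact p.Prime] [h : IsElementaryAbelian p G]
    (x : G) : Nat.card (zpowers x) ≤ p := by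
  rw [Nat.card_zpowers]
  exact Nat.le_of_dvd (Fact.out : p.Prime).pos (orderOf_dvd_of_pow_eq_one (h.pow_eq_one x))

end ElementaryAbelian

section Quadratic

variable {C Z : Type*} [Group C] [Group Z] [MulDistribMulAction C Z] {p : ℕ} [Fact p.Prime]

theorem le_autFixed_of_card_le [Finite Z] {S : Subgroup C} (hS : IsPGroup p S) (Y : Subgroup Z)
    [IsSMulInvariant S Y] (hYp : IsPGroup p Y) (hY : Nat.card Y ≤ p) : Y ≤ autFixed S := by
  rcases subsingleton_or_nontrivial Y with h | h
  · exact (eq_bot_of_subsingleton Y).trans_le bot_le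
  obtain ⟨n, hn, hYcard⟩ := hYp.nontrivial_iff_card.1 h
  have hYeq : Nat.card Y = p :=
    hY.antisymm (hYcard ▸ Nat.le_self_pow hn.ne' p)
  have hdvd : Nat.card (Y ⊓ autFixed S : Subgroup Z) ∣ p := hYeq ▸ card_dvd_of_le inf_le_left
  have hcard := ((Nat.dvd_prime Fact.out).1 hdvd).resolve_left
    (mt card_eq_one.1 (inf_autFixed_ne_bot hS Y hYeq.symm.dvd))
  exact inf_eq_left.1 (eq_of_le_of_card_ge inf_le_left (hYeq.trans hcard.symm).le)

theorem smul_div_mem_autFixed_of_card_le [Finite Z] [IsMulCommutative Z] (hZ : IsPGroup p Z)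
    {a : C} (ha : IsPGroup p (zpowers a))
    (hcard : Nat.card Z ≤ p * Nat.card (autFixed (G := Z) (zpowers a))) (z : Z) :
    a • z / z ∈ autFixed (zpowers a) := by
  let D : Z →* Z := MulDistribMulAction.toMonoidHom Z a / MonoidHom.id Z
  have hker : D.ker = autFixed (zpowers a) := by
    ext z
    rw [mem_autFixed_zpowers, ← div_eq_one]
    rfl
  have : IsSMulInvariant (zpowers a) D.range := by
    refine ⟨?_⟩
    rintro ⟨_, n, rfl⟩ _ ⟨y, rfl⟩
    refine ⟨a ^ n • y, ?_⟩
    change a • a ^ n • y / a ^ n • y = a ^ n • (a • y / y)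
    rw [smul_div', ← mul_smul, ← mul_smul, ((Commute.refl a).zpow_right n).eq]
  have hD : Nat.card D.range ≤ p := by
    rw [← hker, ← D.ker.card_mul_index, index_ker, mul_comm p] at hcard
    exact Nat.le_of_mul_le_mul_left hcard Nat.card_pos
  exact le_autFixed_of_card_le ha D.range (hZ.to_subgroup _) hD ⟨z, rfl⟩

theorem commutatorElement_smul_eq_of_quadratic (hp2 : p ≠ 2) [hZ : IsElementaryAbelian p Z]
    {a : C} (ha : ∀ z : Z, a • z / z ∈ autFixed (zpowers a)) (Q : Subgroup C) [IsMulCommutative Q]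
    (hQ : (Nat.card Q).Coprime p) (haQ : a ∈ normalizer (Q : Set C)) {u : C} (hu : u ∈ Q) (z : Z) :
    ⁅a, u⁆ • z = z := by
  let ρ := Representation.ofMulDistribMulAction C Z
  let E := Subring.closure (ρ '' Q)
  have hp : p.Prime := Fact.out
  have hR : ((p : ℕ) : Module.End ℤ (Additive Z)) = 0 := by
    ext z
    exact congrArg Additive.ofMul (hZ.pow_eq_one z.toMul)
  have hE : ∀ x ∈ E, x * x = 0 → x = 0 := fun x ↦ by
    refine eq_zero_of_mul_self_eq_zero_of_mem_closure hp hR ?_ hQ ?_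
    · rintro _ ⟨x, hx, rfl⟩ _ ⟨y, hy, rfl⟩
      rw [← map_mul, ← map_mul]
      exact congrArg (fun q : Q ↦ ρ q) (mul_comm' (⟨x, hx⟩ : Q) ⟨y, hy⟩)
    · rintro _ ⟨x, hx, rfl⟩
      rw [← map_pow, show x ^ Nat.card Q = 1 from
        congrArg Subtype.val (pow_card_eq_one' (x := (⟨x, hx⟩ : Q))), map_one]
  have hN : (ρ a - 1) * (ρ a - 1) = 0 := by
    refine LinearMap.ext fun z ↦ ?_
    have haz := div_eq_one.2 (mem_autFixed_zpowers.1 (ha (Additive.toMul z)))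
    exact congrArg Additive.ofMul haz
  have ha' : 1 - (ρ a - 1) = ρ a⁻¹ := by
    refine left_inv_eq_right_inv (a := ρ a) ?_ (by rw [← map_mul, mul_inv_cancel, map_one])
    calc _ = 1 - (ρ a - 1) * (ρ a - 1) := by noncomm_ring
      _ = 1 := by rw [hN, sub_zero]
  have hcomm : Commute (ρ a - 1) (ρ u) := by
    refine commute_of_mul_self_eq_zero (E := E)
      (fun _ ↦ eq_zero_of_add_self_eq_zero_of_odd (hp.odd_of_ne_two hp2) hR) hE hN
      (Subring.subset_closure ⟨u, hu, rfl⟩) ?_ ?_ <;>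
    rw [ha', add_sub_cancel, ← map_mul, ← map_mul]
    · exact Subring.subset_closure ⟨_, (mem_normalizer_iff.1 haQ u).1 hu, rfl⟩
    · exact Subring.subset_closure ⟨_, (mem_normalizer_iff''.1 haQ u).1 hu, rfl⟩
  have hau : ρ (a * u) = ρ (u * a) := by
    rw [map_mul, map_mul]
    simpa only [sub_mul, mul_sub, one_mul, mul_one, sub_left_inj] using hcomm.eq
  have h1 : ρ ⁅a, u⁆ = 1 := by
    rw [commutatorElement_def, mul_assoc, map_mul, hau, ← map_mul, ← mul_assoc,
      mul_inv_cancel_right, mul_inv_cancel, map_one]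
  exact congrArg Additive.toMul (congr($h1 (Additive.ofMul z)) :)

end Quadratic

section Conjugation

/-- The action by conjugation of a subgroup `A` on a subgroup `Q` which it normalizes. -/
abbrev conjAction {Γ : Type*} [Group Γ] {A Q : Subgroup Γ} (h : A ≤ normalizer (Q : Set Γ)) :
    MulDistribMulAction A Q :=
  MulDistribMulAction.compHom Q (Q.normalizerMonoidHom.comp (inclusion h))

instance autFixed_isSMulInvariant_centralizer {A G : Type*} [Group A] [Group G]
    [MulDistribMulAction A G] (B : Subgroup A) :
    IsSMulInvariant (centralizer (B : Set A)) (autFixed (G := G) B) :=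
  ⟨fun c g hg b hb ↦ by
    rw [Subgroup.smul_def, ← mul_smul, mem_centralizer_iff.1 c.2 b hb, mul_smul, hg b hb]⟩

theorem card_le_card_mul_card_of_sup_eq_top {G : Type*} [Group G] {B C : Subgroup G} [B.Normal]
    [Finite C] (h : B ⊔ C = ⊤) : Nat.card G ≤ Nat.card B * Nat.card C := by
  rw [← B.card_mul_index, ← relIndex_top_right, ← h, relIndex_sup_left]
  exact Nat.mul_le_mul_left _ (Nat.le_of_dvd Nat.card_pos (relIndex_dvd_card B C))

end Conjugation

section Faithful

variable {Γ Z : Type*} [Group Γ] [Group Z] [Finite Z] [MulDistribMulAction Γ Z]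
  [FaithfulSMul Γ Z] {p : ℕ} [Fact p.Prime] [IsElementaryAbelian p Z] {Q : Subgroup Γ}
  [IsMulCommutative Q] [Finite Q]

theorem mul_card_autFixed_lt (hp2 : p ≠ 2) (hQp : (Nat.card Q).Coprime p) {B : Subgroup Γ}
    (hB : IsPGroup p B) {a q : Γ} (ha : IsPGroup p (zpowers a))
    (haB : a ∈ centralizer (B : Set Γ)) (haQ : a ∈ normalizer (Q : Set Γ)) (hqQ : q ∈ Q)
    (hqB : q ∈ centralizer (B : Set Γ)) (haq : ⁅a, q⁆ ≠ 1) :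
    p * Nat.card (autFixed (G := Z) (B ⊔ zpowers a)) < Nat.card (autFixed (G := Z) B) := by
  by_contra! hle
  let C := centralizer (B : Set Γ)
  let Z₁ := autFixed (G := Z) B
  have hcard : Nat.card Z₁ ≤ p * Nat.card (autFixed (G := Z₁) (zpowers (⟨a, haB⟩ : C))) := by
    refine hle.trans (Nat.mul_le_mul_left p ?_)
    rw [autFixed_sup, ← card_map_of_injective Z₁.subtype_injective]
    exact card_le_of_le fun z hz ↦ ⟨⟨z, hz.1⟩,
      mem_autFixed_zpowers.2 (Subtype.ext (hz.2 a (mem_zpowers a))), rfl⟩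
  have haC : IsPGroup p (zpowers (⟨a, haB⟩ : C)) :=
    (ha.comap_of_injective C.subtype C.subtype_injective).to_le
      (zpowers_le.2 (mem_zpowers a))
  have hfix : autFixed (G := Z) B ≤ autFixed (zpowers ⁅a, q⁆) := fun z hz ↦ by
    have hQC : (Nat.card (Q.subgroupOf C)).Coprime p :=
      hQp.coprime_dvd_left (card_comap_dvd_of_injective Q C.subtype C.subtype_injective)
    have haQC : (⟨a, haB⟩ : C) ∈ normalizer (Q.subgroupOf C : Set C) :=
      mem_normalizer_iff.2 fun x ↦ mem_normalizer_iff.1 haQ x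
    have h := commutatorElement_smul_eq_of_quadratic hp2
      (smul_div_mem_autFixed_of_card_le isPGroup_of_isElementaryAbelian haC hcard)
      (Q.subgroupOf C) hQC haQC (mem_subgroupOf.2 hqQ : (⟨q, hqB⟩ : C) ∈ Q.subgroupOf C) ⟨z, hz⟩
    exact mem_autFixed_zpowers.2 (congrArg Subtype.val h)
  have hmem : ⁅a, q⁆ ∈ Q := mul_mem ((mem_normalizer_iff.1 haQ q).1 hqQ) (inv_mem hqQ)
  have hle : zpowers ⁅a, q⁆ ≤ Q := zpowers_le.2 hmem
  have : Finite (zpowers ⁅a, q⁆) := Finite.Set.subset (Q : Set Γ) hle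
  have hBC : B ≤ centralizer (zpowers ⁅a, q⁆ : Set Γ) := by
    rw [le_centralizer_iff, zpowers_le]
    exact mul_mem (mul_mem (mul_mem haB hqB) (inv_mem haB)) (inv_mem hqB)
  have htop : autFixed (G := Z) (zpowers ⁅a, q⁆) = ⊤ :=
    autFixed_eq_top_of_autFixed_le isPGroup_of_isElementaryAbelian hB
      (hQp.coprime_dvd_left (card_dvd_of_le hle)) hBC hfix
  refine haq (FaithfulSMul.eq_of_smul_eq_smul (α := Z) fun z ↦ ?_)
  rw [one_smul, mem_autFixed_zpowers.1 (htop ▸ mem_top z)]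

theorem exists_lt_and_mul_card_autFixed_lt (hp2 : p ≠ 2) (hQp : (Nat.card Q).Coprime p)
    {A : Subgroup Γ} [Finite A] [IsElementaryAbelian p A] (hAQ : A ≤ normalizer (Q : Set Γ))
    (hdisj : Disjoint A (centralizer Q)) (hA : A ≠ ⊥) :
    ∃ B < A, Nat.card A ≤ Nat.card B * p ∧
      p * Nat.card (autFixed (G := Z) A) < Nat.card (autFixed (G := Z) B) := by
  let := conjAction hAQ
  have hAp : IsPGroup p A := isPGroup_of_isElementaryAbelian
  have hcop : (Nat.card A).Coprime (Nat.card Q) := by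
    obtain ⟨n, hn⟩ := IsPGroup.iff_card.1 hAp
    exact hn ▸ (hQp.pow_right n).symm
  have hconj {a : A} {q : Q} : a • q = q ↔ (a : Γ) * q = q * a :=
    Subtype.ext_iff.trans mul_inv_eq_iff_eq_mul
  have hne : autFixed (G := Q) (⊤ : Subgroup A) ≠ ⊤ := fun htop ↦ hA <| by
    refine hdisj.eq_bot_of_le fun a ha ↦ mem_centralizer_iff.2 fun q hq ↦ ?_
    have h : (⟨q, hq⟩ : Q) ∈ autFixed (⊤ : Subgroup A) := htop ▸ mem_top _
    exact (hconj.1 (h ⟨a, ha⟩ (mem_top _))).symm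
  obtain ⟨B, a, hBa, hle⟩ := exists_sup_zpowers_eq_top_and_not_autFixed_le hcop hne
  obtain ⟨q, hqB, hqa⟩ := SetLike.not_le_iff_exists.1 hle
  rw [mem_autFixed_zpowers, hconj, ← commutatorElement_eq_one_iff_mul_comm] at hqa
  have hsup : B.map A.subtype ⊔ zpowers (a : Γ) = A := by
    have h := congrArg (map A.subtype) hBa
    rwa [Subgroup.map_sup, MonoidHom.map_zpowers, ← MonoidHom.range_eq_map, range_subtype] at h
  have haB : (a : Γ) ∈ centralizer (B.map A.subtype : Set Γ) := by
    rintro _ ⟨b, -, rfl⟩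
    exact congrArg Subtype.val (mul_comm' b a)
  have hqB' : (q : Γ) ∈ centralizer (B.map A.subtype : Set Γ) := by
    rintro _ ⟨b, hb, rfl⟩
    exact hconj.1 (hqB b hb)
  have hlt := mul_card_autFixed_lt (Z := Z) hp2 hQp (hAp.to_le (map_subtype_le B))
    (hAp.to_le (zpowers_le.2 a.2)) haB (hAQ a.2) q.2 hqB' hqa
  rw [hsup] at hlt
  refine ⟨B.map A.subtype, lt_of_le_of_ne (map_subtype_le B) fun h ↦ ?_, ?_, hlt⟩
  · rw [h] at hlt
    exact hlt.not_ge (Nat.le_mul_of_pos_left _ (Fact.out : p.Prime).pos)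
  · rw [card_map_of_injective A.subtype_injective]
    exact (card_le_card_mul_card_of_sup_eq_top hBa).trans
      (Nat.mul_le_mul_left _ (card_zpowers_le_of_isElementaryAbelian a))

theorem card_mul_card_autFixed_lt (hp2 : p ≠ 2) (hQp : (Nat.card Q).Coprime p)
    {A : Subgroup Γ} [Finite A] [IsElementaryAbelian p A] (hAQ : A ≤ normalizer (Q : Set Γ))
    (hdisj : Disjoint A (centralizer Q)) (hA : A ≠ ⊥) :
    Nat.card A * Nat.card (autFixed (G := Z) A) < Nat.card Z := by
  obtain ⟨B, hBA, hcard, hlt⟩ := exists_lt_and_mul_card_autFixed_lt (Z := Z) hp2 hQp hAQ hdisj hA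
  have hBfin : Finite B := Finite.Set.subset (A : Set Γ) hBA.le
  have hB : Nat.card B * Nat.card (autFixed (G := Z) B) ≤ Nat.card Z := by
    by_cases hB : B = ⊥
    · rw [hB, card_bot, one_mul]
      exact card_le_card_group _
    · have : IsElementaryAbelian p B := isElementaryAbelian_of_le hBA.le
      exact (card_mul_card_autFixed_lt hp2 hQp (hBA.le.trans hAQ) (hdisj.mono_left hBA.le) hB).le
  calc Nat.card A * Nat.card (autFixed (G := Z) A)
      ≤ Nat.card B * p * Nat.card (autFixed (G := Z) A) := Nat.mul_le_mul_right _ hcard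
    _ = Nat.card B * (p * Nat.card (autFixed (G := Z) A)) := mul_assoc _ _ _
    _ < Nat.card B * Nat.card (autFixed (G := Z) B) := Nat.mul_lt_mul_of_pos_left hlt Nat.card_pos
    _ ≤ Nat.card Z := hB
termination_by Nat.card A
decreasing_by
  exact (card_le_of_le hBA.le).lt_of_ne fun h ↦ hBA.ne (eq_of_le_of_card_ge hBA.le h.ge)

end Faithful

/-! ### Thompson's normal complement theorem -/

section Normalizers

variable {G K : Type*} [Group G] [Group K]

theorem normalizer_le_normalizer_map_subtype {P : Subgroup G} (X : Subgroup P)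
    [hX : X.Characteristic] : normalizer (P : Set G) ≤ normalizer (X.map P.subtype : Set G) := by
  rw [le_normalizer_iff]
  rintro g hg _ ⟨x, hx, rfl⟩
  exact ⟨P.normalizerMonoidHom ⟨g, hg⟩ x,
    characteristic_iff_map_le.1 hX (P.normalizerMonoidHom ⟨g, hg⟩) (mem_map_of_mem _ hx), rfl⟩

theorem characteristic_map_mulEquiv (e : G ≃* K) {X : Subgroup G} [hX : X.Characteristic] :
    (X.map (e : G →* K)).Characteristic := by
  refine characteristic_iff_map_le.2 fun φ ↦ ?_
  rintro _ ⟨_, ⟨x, hx, rfl⟩, rfl⟩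
  exact ⟨((e.trans φ).trans e.symm) x,
    characteristic_iff_map_le.1 hX ((e.trans φ).trans e.symm) (mem_map_of_mem _ hx),
    e.apply_symm_apply _⟩

theorem eq_of_le_of_subset_mul {B C Q : Subgroup G} (hBQ : B ≤ Q) (hQ : (Q : Set G) ⊆ B * C)
    (hdisj : Disjoint Q C) : B = Q := by
  refine le_antisymm hBQ fun x hx ↦ ?_
  obtain ⟨b, hb, c, hc, rfl⟩ := hQ hx
  obtain rfl : c = 1 := disjoint_def.1 hdisj (by simpa using mul_mem (inv_mem (hBQ hb)) hx) hc
  simpa using hb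

variable {p : ℕ} [Fact p.Prime]

/- A Frattini argument: `Y` is a Sylow subgroup of `Y ⊔ M`, so an element normalizing `Y ⊔ M` can
be corrected by an element of `M` to normalize `Y`. -/
theorem normalizer_map_mk'_le [Finite G] (M : Subgroup G) [M.Normal] (hM : (Nat.card M).Coprime p)
    {Y : Subgroup G} (hY : IsPGroup p Y) :
    normalizer (Y.map (QuotientGroup.mk' M) : Set (G ⧸ M)) ≤
      (normalizer (Y : Set G)).map (QuotientGroup.mk' M) := by
  set W := Y ⊔ M
  have hYW : Y ≤ W := le_sup_left
  let S : Sylow p W := ⟨Y.subgroupOf W, hY.comap_of_injective _ W.subtype_injective, by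
    intro Q hQ hle
    have h : Y = Q.map W.subtype := by
      refine eq_of_le_of_subset_mul (C := M) (fun y hy ↦ ⟨⟨y, hYW hy⟩, hle hy, rfl⟩) ?_
        (disjoint_of_coprime_of_isPGroup hM (hQ.map _)).symm
      rw [← mul_normal]
      exact map_subtype_le Q
    rw [h, subgroupOf, comap_map_eq_self_of_injective W.subtype_injective]⟩
  intro k hk
  obtain ⟨g, rfl⟩ := QuotientGroup.mk'_surjective M k
  rw [← mem_comap, comap_normalizer_eq_of_surjective _ (QuotientGroup.mk'_surjective M),
    comap_map_eq, QuotientGroup.ker_mk'] at hk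
  let g' : normalizer (W : Set G) := ⟨g, hk⟩
  obtain ⟨⟨w, hwW⟩, hw⟩ := MulAction.exists_smul_eq W (g' • S) S
  have hconj : ∀ y ∈ Y, (w * g) * y * (w * g)⁻¹ ∈ Y := fun y hy ↦ by
    have h := smul_mem_pointwise_smul _ (MulAut.conj (⟨w, hwW⟩ : W)) (g' • S : Sylow p W).1
      (smul_mem_pointwise_smul ⟨y, hYW hy⟩ g' (S : Subgroup W) hy)
    rw [← Sylow.pointwise_smul_def, ← Sylow.smul_def, hw] at h
    have h : w * (g * y * g⁻¹) * w⁻¹ ∈ Y := h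
    simpa only [mul_inv_rev, mul_assoc] using h
  obtain ⟨y, hy, m, hm, rfl⟩ := (mul_normal Y M).le hwW
  have hyw := mem_normalizer_fintype hconj
  refine ⟨y⁻¹ * (y * m * g), mul_mem (inv_mem (le_normalizer hy)) hyw, ?_⟩
  have : QuotientGroup.mk' M m = 1 := (QuotientGroup.eq_one_iff m).2 hm
  simp only [mul_assoc, inv_mul_cancel_left, map_mul, this, one_mul]

theorem normalizer_map_le_normalizer_map_map {f : G →* K}
    (hf : Function.Injective f) {P : Subgroup G} (X : Subgroup P) [X.Characteristic] :
    normalizer (P.map f : Set K) ≤ normalizer ((X.map P.subtype).map f : Set K) := by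
  let e := P.equivMapOfInjective f hf
  have := characteristic_map_mulEquiv e (X := X)
  have hmap : (X.map P.subtype).map f = (X.map (e : P →* P.map f)).map (P.map f).subtype := by
    rw [map_map, map_map]; rfl
  exact hmap ▸ normalizer_le_normalizer_map_subtype (X.map (e : P →* P.map f))

theorem IsPNilpotent.normalizer_of_map [Finite K] {f : G →* K} (hf : Function.Injective f)
    {X : Subgroup G} (h : IsPNilpotent p (normalizer (X.map f : Set K))) :
    IsPNilpotent p (normalizer (X : Set G)) :=
  .of_injective ((inclusion (le_normalizer_map f)).comp (f.subgroupMap _))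
    (fun _ _ hxy ↦ Subtype.ext (hf (congrArg Subtype.val hxy))) h

end Normalizers

/-- The hypothesis of Thompson's normal `p`-complement theorem, for a Sylow `p`-subgroup `P`: the
normalizers in `G` of the nontrivial characteristic subgroups of `P` are `p`-nilpotent. -/
def ThompsonCondition (p : ℕ) {G : Type*} [Group G] (P : Subgroup G) : Prop :=
  ∀ X : Subgroup P, X.Characteristic → X ≠ ⊥ → IsPNilpotent p (normalizer (X.map P.subtype : Set G))

namespace ThompsonCondition

variable {p : ℕ} {G K : Type*} [Group G] [Group K]

theorem of_map [Fact p.Prime] [Finite K] {f : G →* K} (hf : Function.Injective f) {P : Subgroup G}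
    (h : ThompsonCondition p (P.map f)) : ThompsonCondition p P := by
  intro X hX hne
  let e := P.equivMapOfInjective f hf
  have hmap : (X.map (e : P →* P.map f)).map (P.map f).subtype = (X.map P.subtype).map f := by
    rw [map_map, map_map]; rfl
  refine .normalizer_of_map hf (hmap ▸ h _ (characteristic_map_mulEquiv e) ?_)
  rwa [Ne, map_eq_bot_iff_of_injective _ e.injective]

variable [Finite G]

theorem map_mk'_of_isPGroup {P U : Subgroup G} [U.Normal] (hU : U ≤ P)
    (h : ∀ W : Subgroup G, U < W → W ≤ P → P ≤ normalizer (W : Set G) →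
      IsPNilpotent p (normalizer (W : Set G))) :
    ThompsonCondition p (P.map (QuotientGroup.mk' U)) := by
  have hπ := QuotientGroup.mk'_surjective U
  set π := QuotientGroup.mk' U
  intro X hX hne
  set Y := X.map (P.map π).subtype
  have hmap : (Y.comap π).map π = Y := map_comap_eq_self_of_surjective hπ Y
  have hlt : U < Y.comap π := by
    refine lt_of_le_of_ne (fun u hu ↦ ?_) fun e ↦ hne ?_
    · rw [mem_comap, show π u = 1 from (QuotientGroup.eq_one_iff u).2 hu]
      exact one_mem Y
    · rw [← map_eq_bot_iff_of_injective X (subtype_injective _)]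
      exact hmap.symm.trans (e ▸ QuotientGroup.map_mk'_self U)
  have hle : Y.comap π ≤ P := by
    have h := comap_mono (f := π) (map_subtype_le X)
    rwa [comap_map_eq, QuotientGroup.ker_mk', sup_eq_left.2 hU] at h
  have hPY : P ≤ (normalizer (Y : Set (G ⧸ U))).comap π :=
    map_le_iff_le_comap.1 (le_normalizer.trans (normalizer_le_normalizer_map_subtype X))
  rw [comap_normalizer_eq_of_surjective _ hπ] at hPY
  rw [← map_comap_eq_self_of_surjective hπ (normalizer (Y : Set (G ⧸ U))),
    comap_normalizer_eq_of_surjective _ hπ]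
  exact (h _ hlt hle hPY).of_surjective _ (π.subgroupMap_surjective _)

variable [Fact p.Prime]

theorem sylow {P : Sylow p G} (h : ThompsonCondition p (P : Subgroup G)) (Q : Sylow p G) :
    ThompsonCondition p (Q : Subgroup G) := by
  obtain ⟨g, rfl⟩ := MulAction.exists_smul_eq G Q P
  exact .of_map (f := (MulAut.conj g).toMonoidHom) (MulAut.conj g).injective h

theorem map_mk'_of_coprime {P : Sylow p G} (h : ThompsonCondition p (P : Subgroup G))
    (M : Subgroup G) [M.Normal] (hM : (Nat.card M).Coprime p) :
    ThompsonCondition p ((P : Subgroup G).map (QuotientGroup.mk' M)) := by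
  set π := QuotientGroup.mk' M
  intro X hX hne
  have hinj : Function.Injective (π.subgroupMap P) := (injective_iff_map_eq_one _).2 fun x hx ↦
    Subtype.ext (disjoint_def.1 (disjoint_of_coprime_of_isPGroup hM P.isPGroup')
      ((QuotientGroup.eq_one_iff _).1 (congrArg Subtype.val hx)) x.2)
  let e := MulEquiv.ofBijective (π.subgroupMap P) ⟨hinj, π.subgroupMap_surjective P⟩
  set Y := (X.map (e.symm : _ →* (P : Subgroup G))).map (P : Subgroup G).subtype
  have hmap : X.map ((P : Subgroup G).map π).subtype = Y.map π := by
    rw [map_map, map_map]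
    refine congrArg (X.map ·) (MonoidHom.ext fun x ↦ ?_)
    exact congrArg Subtype.val (e.apply_symm_apply x).symm
  have hY : IsPNilpotent p (normalizer (Y : Set G)) := by
    refine h _ (characteristic_map_mulEquiv e.symm) ?_
    rwa [Ne, map_eq_bot_iff_of_injective _ e.symm.injective]
  have hYp : IsPGroup p Y := (P.isPGroup'.to_subgroup _).map _
  rw [hmap]
  exact .of_le (normalizer_map_mk'_le M hM hYp) (hY.of_surjective _ (π.subgroupMap_surjective _))

end ThompsonCondition

section Structure

variable {p : ℕ} {G : Type*} [Group G]

theorem normal_inf_centralizer {K P : Subgroup G} [K.Normal] (hKP : K ⊔ P = ⊤) :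
    (P ⊓ centralizer (K : Set G)).Normal := by
  rw [← normalizer_eq_top_iff, eq_top_iff, ← hKP, sup_le_iff]
  constructor <;> rw [le_normalizer_iff] <;> rintro g hg x ⟨hxP, hxK⟩
  · have : g * x * g⁻¹ = x := mul_inv_eq_of_eq_mul (mem_centralizer_iff.1 hxK g hg)
    exact this.symm ▸ ⟨hxP, hxK⟩
  · exact ⟨P.mul_mem (P.mul_mem hg hxP) (P.inv_mem hg), normal_centralizer.conj_mem x hxK g⟩

variable [Finite G]

theorem isPGroup_of_isPNilpotent (hO : ∀ M : Subgroup G, M.Normal → (Nat.card M).Coprime p → M = ⊥)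
    {D : Subgroup G} [D.Normal] (h : IsPNilpotent p D) : IsPGroup p D := by
  obtain ⟨N, hN, hNc, hq⟩ := h
  have hchar : N.Characteristic := characteristic_iff_le_comap.2 fun φ x hx ↦ by
    rw [mem_comap, mem_iff_coprime_orderOf hNc hq, MulEquiv.coe_toMonoidHom, φ.orderOf_eq]
    exact (mem_iff_coprime_orderOf hNc hq).1 hx
  have hbot := hO (N.map D.subtype) inferInstance
    (by rwa [card_map_of_injective D.subtype_injective])
  obtain rfl := (map_eq_bot_iff_of_injective _ D.subtype_injective).1 hbot
  exact hq.of_equiv QuotientGroup.quotientBot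

variable [Fact p.Prime]

theorem isPNilpotent_of_normalizer_le_centralizer (P : Sylow p G)
    (hP : normalizer (P : Set G) ≤ centralizer (P : Set G)) : IsPNilpotent p G :=
  ⟨(MonoidHom.transferSylow P hP).ker, inferInstance,
    ((Nat.Prime.coprime_iff_not_dvd Fact.out).2
      (MonoidHom.not_dvd_card_ker_transferSylow P hP)).symm,
    (P.2.to_subgroup (MonoidHom.transferSylow P hP).range).of_equiv
      (QuotientGroup.quotientKerEquivRange _).symm⟩

theorem centralizer_le_of_isPNilpotent_quotient
    (hO : ∀ M : Subgroup G, M.Normal → (Nat.card M).Coprime p → M = ⊥)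
    {U : Subgroup G} [U.Normal] (hU : IsPGroup p U)
    (hmax : ∀ W : Subgroup G, W.Normal → IsPGroup p W → W ≤ U) (hq : IsPNilpotent p (G ⧸ U)) :
    centralizer (U : Set G) ≤ U := by
  obtain ⟨K', hK', hKc, hKp⟩ := hq
  set K := K'.comap (QuotientGroup.mk' U)
  set D := centralizer (U : Set G) ⊓ K
  have hUD : ¬ p ∣ (U.subgroupOf D).index := by
    refine (Nat.Prime.coprime_iff_not_dvd Fact.out).1 (hKc.coprime_dvd_left ?_).symm
    change U.relIndex D ∣ _
    conv_lhs => rw [← QuotientGroup.ker_mk' U, relIndex_ker]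
    exact card_dvd_of_le (map_le_iff_le_comap.2 inf_le_right)
  have hUDp : IsPGroup p (U.subgroupOf D) := hU.comap_of_injective _ D.subtype_injective
  have hD : IsPGroup p D := by
    refine isPGroup_of_isPNilpotent hO
      (isPNilpotent_of_normalizer_le_centralizer (hUDp.toSylow hUD) fun x _ u hu ↦ ?_)
    exact Subtype.ext (mem_centralizer_iff.1 x.2.1 u hu)
  refine hmax _ inferInstance fun c ↦ ?_
  obtain ⟨k, hk⟩ := isPGroup_quotient_iff.1 hKp (c : G)
  obtain ⟨l, hl⟩ := hD ⟨(c : G) ^ p ^ k, pow_mem c.2 _, hk⟩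
  exact ⟨k + l, Subtype.ext (by simpa [pow_add, pow_mul] using congrArg Subtype.val hl)⟩

theorem eq_sylow_of_isPNilpotent {U : Subgroup G} [U.Normal] (hU : IsPGroup p U)
    (hCU : centralizer (U : Set G) ≤ U) {P : Sylow p G} {L : Subgroup G}
    (hPL : (P : Subgroup G) ≤ L) (hL : IsPNilpotent p L) : L = P := by
  have hUP := hU.le_sylow_of_normal P
  have htop := hL.centralizer_sup_sylow (P.subtype hPL) (U.subgroupOf L)
    (hU.comap_of_injective _ L.subtype_injective)
  have hC : centralizer (U.subgroupOf L : Set L) ≤ P.subtype hPL := fun x hx ↦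
    hUP (hCU fun u hu ↦ congrArg Subtype.val (hx ⟨u, hPL (hUP hu)⟩ hu))
  rw [sup_eq_right.2 hC] at htop
  exact (subgroupOf_eq_top.1 htop).antisymm hPL

end Structure

section Maximal

variable {p : ℕ} {G : Type*} [Group G] {K : Subgroup G} {P : Sylow p G}

theorem eq_of_le_normalizer_of_isMax (hdisj : Disjoint K P)
    (hmax : ∀ L : Subgroup G, (P : Subgroup G) ≤ L → L = ⊤ ∨ L = P) {B : Subgroup G} (hBK : B ≤ K)
    (hB : B ≠ ⊥) (hPB : (P : Subgroup G) ≤ normalizer (B : Set G)) : B = K := by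
  rcases hmax (B ⊔ P) le_sup_right with h | h
  · refine eq_of_le_of_subset_mul hBK (fun x _ ↦ ?_) hdisj
    rw [← coe_mul_of_right_le_normalizer_left _ _ hPB, h]
    exact mem_top x
  · exact absurd (hdisj.mono_left hBK |>.eq_bot_of_le (h ▸ le_sup_left)) hB

variable [Finite G] [Fact p.Prime] [K.Normal]

theorem exists_sylow_le_normalizer_map (P : Sylow p G) (hK : (Nat.card K).Coprime p) (q : ℕ)
    [Fact q.Prime] : ∃ Q : Sylow q K,
      (P : Subgroup G) ≤ normalizer ((Q : Subgroup K).map K.subtype : Set G) := by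
  let := conjAction (A := (P : Subgroup G)) (Q := K) le_normalizer_of_normal
  have hcard : ¬ p ∣ Nat.card (Sylow q K) := fun h ↦ by
    have Q : Sylow q K := default
    exact (Nat.Prime.coprime_iff_not_dvd Fact.out).1 hK.symm
      (h.trans (Q.card_dvd_index.trans (Q : Subgroup K).index_dvd_card))
  obtain ⟨Q, hQ⟩ := P.2.nonempty_fixed_point_of_prime_not_dvd_card (Sylow q K) hcard
  refine ⟨Q, le_normalizer_iff.2 ?_⟩
  rintro g hg _ ⟨x, hx, rfl⟩
  have hgx : (⟨g, hg⟩ : (P : Subgroup G)) • x ∈ ((⟨g, hg⟩ : (P : Subgroup G)) • Q : Sylow q K) :=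
    smul_mem_pointwise_smul x _ (Q : Subgroup K) hx
  rw [hQ] at hgx
  exact ⟨_, hgx, rfl⟩

theorem isMulCommutative_of_isMax (hK : (Nat.card K).Coprime p)
    (hmax : ∀ L : Subgroup G, (P : Subgroup G) ≤ L → L = ⊤ ∨ L = P) : IsMulCommutative K := by
  rcases subsingleton_or_nontrivial K with h | h
  · infer_instance
  have hdisj := disjoint_of_coprime_of_isPGroup hK P.2
  obtain ⟨q, hq, hqK⟩ := Nat.exists_prime_and_dvd (Finite.one_lt_card (α := K)).ne'
  have : Fact q.Prime := ⟨hq⟩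
  obtain ⟨Q, hPQ⟩ := exists_sylow_le_normalizer_map P hK q
  have hQK : (Q : Subgroup K).map K.subtype = K := by
    refine eq_of_le_normalizer_of_isMax hdisj hmax (map_subtype_le _) ?_ hPQ
    rw [Ne, map_eq_bot_iff_of_injective _ K.subtype_injective]
    exact Q.ne_bot_of_dvd_card hqK
  have hKq : IsPGroup q K := hQK ▸ Q.2.map _
  have hcenter : (center K).map K.subtype = K := by
    refine eq_of_le_normalizer_of_isMax hdisj hmax (map_subtype_le _) ?_ le_normalizer_of_normal
    rw [Ne, map_eq_bot_iff_of_injective _ K.subtype_injective]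
    exact (nontrivial_iff_ne_bot _).1 hKq.center_nontrivial
  have htop : center K = ⊤ := map_injective K.subtype_injective
    (hcenter.trans (by rw [← MonoidHom.range_eq_map, range_subtype]))
  exact ⟨⟨fun x y ↦ mem_center_iff.1 (htop ▸ mem_top y) x⟩⟩

end Maximal

section OmegaCenter

variable {p : ℕ} {G : Type*} [Group G]

/-- The subgroup `Ω₁(Z(G))` of the central elements `z` with `z ^ p = 1`. -/
def omegaCenter (p : ℕ) (G : Type*) [Group G] : Subgroup G where
  carrier := {z | z ∈ center G ∧ z ^ p = 1}
  one_mem' := ⟨one_mem _, one_pow p⟩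
  mul_mem' {a b} ha hb := ⟨mul_mem ha.1 hb.1, by
    rw [Commute.mul_pow (mem_center_iff.1 hb.1 a), ha.2, hb.2, one_mul]⟩
  inv_mem' ha := ⟨inv_mem ha.1, by rw [inv_pow, ha.2, inv_one]⟩

instance omegaCenter_characteristic : (omegaCenter p G).Characteristic :=
  characteristic_iff_map_le.2 fun φ ↦ by
    rintro _ ⟨z, ⟨hz, hzp⟩, rfl⟩
    exact ⟨characteristic_iff_map_le.1 inferInstance φ (mem_map_of_mem _ hz),
      (map_pow φ z p).symm.trans (hzp ▸ map_one φ)⟩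

theorem prime_dvd_card_of_isPGroup [Fact p.Prime] [Finite G] [Nontrivial G] (hG : IsPGroup p G) :
    p ∣ Nat.card G := by
  obtain ⟨n, hn, hcard⟩ := hG.nontrivial_iff_card.1 inferInstance
  exact hcard ▸ dvd_pow_self p hn.ne'

theorem omegaCenter_ne_bot [Fact p.Prime] [Finite G] [Nontrivial G] (hG : IsPGroup p G) :
    omegaCenter p G ≠ ⊥ := by
  have := hG.center_nontrivial
  obtain ⟨z, hz⟩ := exists_prime_orderOf_dvd_card' p
    (prime_dvd_card_of_isPGroup (hG.to_subgroup (center G)))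
  refine ne_bot_iff_exists_ne_one.2 ⟨⟨z, z.2, ?_⟩, fun h ↦ ?_⟩
  · exact congrArg Subtype.val (hz ▸ pow_orderOf_eq_one z)
  · have hz1 : (z : G) = 1 := congrArg Subtype.val h
    obtain rfl : z = 1 := Subtype.ext hz1
    exact (Fact.out : p.Prime).ne_one (hz.symm.trans orderOf_one)

theorem mem_map_omegaCenter {U : Subgroup G} {z : G} :
    z ∈ (omegaCenter p U).map U.subtype ↔ z ∈ U ∧ z ∈ centralizer (U : Set G) ∧ z ^ p = 1 := by
  constructor
  · rintro ⟨z, ⟨hz, hzp⟩, rfl⟩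
    exact ⟨z.2, fun u hu ↦ congrArg Subtype.val (mem_center_iff.1 hz ⟨u, hu⟩),
      congrArg Subtype.val hzp⟩
  · rintro ⟨hz, hzU, hzp⟩
    exact ⟨⟨z, hz⟩, ⟨mem_center_iff.2 fun u ↦ Subtype.ext (hzU u u.2), Subtype.ext hzp⟩, rfl⟩

end OmegaCenter

section LargestElementaryAbelian

variable {p : ℕ} {G K : Type*} [Group G] [Group K]

theorem isElementaryAbelian_of_surjective {f : G →* K} (hf : Function.Surjective f)
    [IsElementaryAbelian p G] : IsElementaryAbelian p K where
  is_comm.comm := hf.forall₂.2 fun x y ↦ by rw [← map_mul, mul_comm', map_mul]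
  pow_eq_one := hf.forall.2 fun x ↦ by
    rw [← map_pow, IsElementaryAbelian.pow_eq_one (p := p) x, map_one]

instance isElementaryAbelian_map (f : G →* K) (E : Subgroup G) [IsElementaryAbelian p E] :
    IsElementaryAbelian p (E.map f) :=
  isElementaryAbelian_of_surjective (f.subgroupMap_surjective E)

theorem isElementaryAbelian_map_iff {f : G →* K} (hf : Function.Injective f) {E : Subgroup G} :
    IsElementaryAbelian p (E.map f) ↔ IsElementaryAbelian p E :=
  ⟨fun _ ↦ isElementaryAbelian_of_surjective (f := (E.equivMapOfInjective f hf).symm.toMonoidHom)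
    (E.equivMapOfInjective f hf).symm.surjective, fun _ ↦ inferInstance⟩

instance omegaCenter_isElementaryAbelian : IsElementaryAbelian p (omegaCenter p G) where
  is_comm.comm x y := Subtype.ext (mem_center_iff.1 y.2.1 x)
  pow_eq_one x := Subtype.ext x.2.2

theorem isElementaryAbelian_sup {D Z : Subgroup G} [IsElementaryAbelian p D]
    [IsElementaryAbelian p Z] (h : D ≤ centralizer (Z : Set G)) :
    IsElementaryAbelian p (D ⊔ Z : Subgroup G) := by
  let f : D × Z →* G := D.subtype.noncommCoprod Z.subtype fun d z ↦ (h d.2 z z.2).symm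
  have : IsElementaryAbelian p (D × Z) :=
    { is_comm.comm := mul_comm'
      pow_eq_one x := Prod.ext (IsElementaryAbelian.pow_eq_one x.1)
        (IsElementaryAbelian.pow_eq_one x.2) }
  have hf : f.range = D ⊔ Z := (MonoidHom.noncommCoprod_range _ _ _).trans
    (by rw [range_subtype, range_subtype])
  exact hf ▸ isElementaryAbelian_of_surjective f.rangeRestrict_surjective

/-- `E` is an elementary abelian `p`-subgroup of `P` of the largest possible order. -/
structure IsLargestElementaryAbelian (p : ℕ) (P E : Subgroup G) : Prop where
  le : E ≤ P
  isElementaryAbelian : IsElementaryAbelian p E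
  card_le : ∀ D ≤ P, IsElementaryAbelian p D → Nat.card D ≤ Nat.card E

/-- The Thompson subgroup `J(P)`, generated by the elementary abelian subgroups of `P` of the
largest possible order. -/
def thompsonSubgroup (p : ℕ) (P : Subgroup G) : Subgroup G :=
  sSup {E | IsLargestElementaryAbelian p P E}

theorem isLargestElementaryAbelian_map_iff {f : G →* K} (hf : Function.Injective f)
    {P E : Subgroup G} :
    IsLargestElementaryAbelian p (P.map f) (E.map f) ↔ IsLargestElementaryAbelian p P E := by
  constructor
  · rintro ⟨hle, hE, hmax⟩
    refine ⟨(map_le_map_iff_of_injective hf).1 hle, (isElementaryAbelian_map_iff hf).1 hE,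
      fun D hD hDe ↦ ?_⟩
    have h := hmax (D.map f) (map_mono hD) inferInstance
    rwa [card_map_of_injective hf, card_map_of_injective hf] at h
  · rintro ⟨hle, hE, hmax⟩
    refine ⟨map_mono hle, inferInstance, fun D hD hDe ↦ ?_⟩
    have hDf : (D.comap f).map f = D := map_comap_eq_self (hD.trans (map_le_range f P))
    rw [← hDf] at hDe hD ⊢
    rw [card_map_of_injective hf, card_map_of_injective hf]
    exact hmax _ ((map_le_map_iff_of_injective hf).1 hD) ((isElementaryAbelian_map_iff hf).1 hDe)

theorem map_thompsonSubgroup {f : G →* K} (hf : Function.Injective f) (P : Subgroup G) :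
    (thompsonSubgroup p P).map f = thompsonSubgroup p (P.map f) := by
  refine le_antisymm (map_le_iff_le_comap.2 (sSup_le fun E hE ↦ ?_)) (sSup_le fun E hE ↦ ?_)
  · exact map_le_iff_le_comap.1 (le_sSup ((isLargestElementaryAbelian_map_iff hf).2 hE))
  · have hEf : (E.comap f).map f = E := map_comap_eq_self (hE.le.trans (map_le_range f P))
    rw [← hEf] at hE ⊢
    exact map_mono (le_sSup ((isLargestElementaryAbelian_map_iff hf).1 hE))

instance thompsonSubgroup_top_characteristic :
    (thompsonSubgroup p (⊤ : Subgroup G)).Characteristic :=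
  characteristic_iff_map_le.2 fun φ ↦ by
    rw [map_thompsonSubgroup φ.injective, map_top_of_surjective _ φ.surjective]

theorem map_subtype_thompsonSubgroup_top (P : Subgroup G) :
    (thompsonSubgroup p (⊤ : Subgroup P)).map P.subtype = thompsonSubgroup p P := by
  rw [map_thompsonSubgroup P.subtype_injective, ← MonoidHom.range_eq_map, range_subtype]

instance thompsonSubgroup_normal (U : Subgroup G) [U.Normal] : (thompsonSubgroup p U).Normal := by
  rw [← map_subtype_thompsonSubgroup_top U]
  infer_instance

variable [Finite G]

theorem exists_isLargestElementaryAbelian (p : ℕ) (P : Subgroup G) :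
    ∃ E, IsLargestElementaryAbelian p P E := by
  obtain ⟨E, ⟨hEP, hE⟩, hmax⟩ := Set.exists_max_image
    {E : Subgroup G | E ≤ P ∧ IsElementaryAbelian p E} (fun E ↦ Nat.card E) (Set.toFinite _)
    ⟨⊥, bot_le, ⟨fun x ↦ Subsingleton.elim _ _⟩⟩
  exact ⟨E, hEP, hE, fun D hD hDe ↦ hmax D ⟨hD, hDe⟩⟩

theorem thompsonSubgroup_top_ne_bot [Fact p.Prime] [Nontrivial G] (hG : IsPGroup p G) :
    thompsonSubgroup p (⊤ : Subgroup G) ≠ ⊥ := by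
  obtain ⟨E, hE⟩ := exists_isLargestElementaryAbelian p (⊤ : Subgroup G)
  refine ne_bot_of_le_ne_bot (b := E) (fun hbot ↦ omegaCenter_ne_bot hG ?_) (le_sSup hE)
  have h := hE.card_le (omegaCenter p G) le_top inferInstance
  rwa [hbot, card_bot, card_le_one_iff_eq_bot] at h

theorem thompsonSubgroup_eq_of_le {P U : Subgroup G} (hU : U ≤ P)
    (h : ∀ E, IsLargestElementaryAbelian p P E → E ≤ U) :
    thompsonSubgroup p P = thompsonSubgroup p U := by
  obtain ⟨E₀, hE₀⟩ := exists_isLargestElementaryAbelian p P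
  refine congrArg sSup (Set.ext fun E ↦ ⟨fun hE ↦ ?_, fun hE ↦ ?_⟩)
  · exact ⟨h E hE, hE.isElementaryAbelian, fun D hD ↦ hE.card_le D (hD.trans hU)⟩
  · exact ⟨hE.le.trans hU, hE.isElementaryAbelian, fun D hD hDe ↦
      (hE₀.card_le D hD hDe).trans (hE.card_le E₀ (h E₀ hE₀) hE₀.isElementaryAbelian)⟩

/- `(E ⊓ C(Z)) ⊔ Z` is elementary abelian, so its order is at most that of `E`. -/
theorem IsLargestElementaryAbelian.card_le_relIndex_mul {P Z E : Subgroup G} [Z.Normal]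
    [IsElementaryAbelian p Z] (hE : IsLargestElementaryAbelian p P E) (hZ : Z ≤ P) :
    Nat.card Z ≤ (centralizer (Z : Set G)).relIndex E *
      Nat.card (Z ⊓ centralizer (E : Set G) : Subgroup G) := by
  have := hE.isElementaryAbelian
  set D := E ⊓ centralizer (Z : Set G)
  have hDE : D ≤ E := inf_le_left
  have : IsElementaryAbelian p D := isElementaryAbelian_of_le hDE
  have hsup := hE.card_le (D ⊔ Z) (sup_le (hDE.trans hE.le) hZ)
    (isElementaryAbelian_sup inf_le_right)
  have hDZ : (Z ⊓ D : Subgroup G) ≤ Z ⊓ centralizer (E : Set G) := le_inf inf_le_left <|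
    inf_le_right.trans fun d hd e he ↦
      congrArg Subtype.val (mul_comm' (⟨e, he⟩ : E) (⟨d, hDE hd⟩ : E))
  have h1 := relIndex_mul_relIndex ⊥ Z (D ⊔ Z) bot_le le_sup_right
  have h2 := relIndex_mul_relIndex ⊥ D E bot_le hDE
  have h3 := relIndex_mul_relIndex ⊥ (Z ⊓ D) D bot_le inf_le_right
  rw [relIndex_bot_left, relIndex_bot_left, relIndex_sup_right] at h1
  rw [relIndex_bot_left, relIndex_bot_left, inf_relIndex_left] at h2
  rw [relIndex_bot_left, relIndex_bot_left, inf_relIndex_right] at h3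
  rw [← h1, ← h2, ← h3] at hsup
  have hpos : 0 < Z.relIndex D := Nat.pos_of_ne_zero (index_ne_zero_of_finite (H := Z.subgroupOf D))
  refine Nat.le_of_mul_le_mul_right ?_ hpos
  calc _ ≤ _ := hsup
    _ = (centralizer (Z : Set G)).relIndex E * Nat.card (Z ⊓ D : Subgroup G) * Z.relIndex D := by
      ring
    _ ≤ _ := by gcongr; exact Nat.card_mono (Set.toFinite _) hDZ

end LargestElementaryAbelian

section Thompson

variable {p : ℕ} [Fact p.Prime] {G : Type*} [Group G] [Finite G]

/-- The faithful action of `G ⧸ C(Z)` on a normal subgroup `Z` by conjugation. -/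
instance quotientCentralizerAction {G : Type*} [Group G] (Z : Subgroup G) [Z.Normal] :
    MulDistribMulAction (G ⧸ centralizer (Z : Set G)) Z :=
  MulDistribMulAction.compHom Z <| QuotientGroup.lift (centralizer (Z : Set G))
    (MulAut.conjNormal (H := Z)) fun g hg ↦ MulEquiv.ext fun z ↦ Subtype.ext <| by
      rw [MulAut.conjNormal_apply, ← mem_centralizer_iff.1 hg z z.2]
      simp

theorem IsLargestElementaryAbelian.le_of_eq_centralizer (hp2 : p ≠ 2) {P Z E U : Subgroup G}
    [Z.Normal] [IsElementaryAbelian p Z] [U.Normal] (hE : IsLargestElementaryAbelian p P E)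
    (hZ : Z ≤ P) (hU : U = centralizer (Z : Set G)) {K : Subgroup (G ⧸ U)} [K.Normal]
    [IsMulCommutative K] (hK : (Nat.card K).Coprime p)
    (hdisj : Disjoint (P.map (QuotientGroup.mk' U)) (centralizer (K : Set (G ⧸ U)))) : E ≤ U := by
  subst hU
  set π := QuotientGroup.mk' (centralizer (Z : Set G))
  by_contra hEC
  have := hE.isElementaryAbelian
  have hfaith : FaithfulSMul (G ⧸ centralizer (Z : Set G)) Z := by
    refine ⟨fun {a b} h ↦ ?_⟩
    obtain ⟨⟨a, rfl⟩, b, rfl⟩ := And.intro (QuotientGroup.mk_surjective a)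
      (QuotientGroup.mk_surjective b)
    refine QuotientGroup.eq.2 fun z hz ↦ ?_
    have h : a * z * a⁻¹ = b * z * b⁻¹ := congrArg Subtype.val (h ⟨z, hz⟩)
    rw [eq_mul_inv_iff_mul_eq, mul_assoc _ a⁻¹, mul_assoc, ← eq_inv_mul_iff_mul_eq] at h
    rw [h]
    group
  have hA : E.map π ≠ ⊥ := by
    rwa [Ne, Subgroup.map_eq_bot_iff, QuotientGroup.ker_mk']
  have hlt := card_mul_card_autFixed_lt (Z := Z) hp2 hK (A := E.map π) le_normalizer_of_normal
    (hdisj.mono_left (map_mono hE.le)) hA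
  refine hlt.not_ge ((hE.card_le_relIndex_mul hZ).trans ?_)
  have hcard : (centralizer (Z : Set G)).relIndex E = Nat.card (E.map π) := by
    rw [← relIndex_ker, QuotientGroup.ker_mk']
  have hle : Z ⊓ centralizer (E : Set G) ≤ (autFixed (G := Z) (E.map π)).map Z.subtype := by
    rintro z ⟨hz, hzE⟩
    refine ⟨⟨z, hz⟩, ?_, rfl⟩
    rintro _ ⟨e, he, rfl⟩
    exact Subtype.ext (mul_inv_eq_of_eq_mul (hzE e he))
  have hcard' : Nat.card ((autFixed (G := Z) (E.map π)).map Z.subtype) =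
      Nat.card (autFixed (G := Z) (E.map π)) := card_map_of_injective Z.subtype_injective
  rw [hcard, ← hcard']
  exact Nat.mul_le_mul_left _ (Nat.card_mono (Set.toFinite _) hle)

namespace ThompsonCondition

theorem not_normal {P : Subgroup G} (h : ThompsonCondition p P) (hG : ¬ IsPNilpotent p G)
    {X : Subgroup P} [X.Characteristic] (hX : X ≠ ⊥) : ¬ (X.map P.subtype).Normal := fun hn ↦ by
  have hN := h X inferInstance hX
  rw [normalizer_eq_top_iff.2 hn] at hN
  exact hG (hN.of_injective (topEquiv (G := G)).symm.toMonoidHom (topEquiv (G := G)).symm.injective)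

/- `N(Ω₁(Z(P)))` contains `P` and is proper, hence equals `P`; so `C(Ω₁(Z(U)))` is a normal
`p`-subgroup. -/
theorem centralizer_map_omegaCenter {P : Sylow p G} (h : ThompsonCondition p (P : Subgroup G))
    (hG : ¬ IsPNilpotent p G) {U : Subgroup G} [U.Normal] (hUP : U ≤ P) (hUne : U ≠ ⊥)
    (hCU : centralizer (U : Set G) ≤ U)
    (hmax : ∀ W : Subgroup G, W.Normal → IsPGroup p W → W ≤ U)
    (hP : ∀ L : Subgroup G, (P : Subgroup G) ≤ L → L = ⊤ ∨ L = P) :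
    centralizer ((omegaCenter p U).map U.subtype : Set G) = U := by
  refine le_antisymm (hmax _ normal_centralizer ?_) fun u hu z hz ↦
    ((mem_map_omegaCenter.1 hz).2.1 u hu).symm
  set Z₀ := (omegaCenter p (P : Subgroup G)).map (P : Subgroup G).subtype
  have : Nontrivial (P : Subgroup G) := (nontrivial_iff_ne_bot _).2 (ne_bot_of_le_ne_bot hUne hUP)
  have hN : normalizer (Z₀ : Set G) = P :=
    (hP _ (le_normalizer.trans (normalizer_le_normalizer_map_subtype _))).resolve_left
      (normalizer_eq_top_iff.not.2 (h.not_normal hG (omegaCenter_ne_bot P.2)))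
  have hZ₀ : Z₀ ≤ (omegaCenter p U).map U.subtype := fun z hz ↦ by
    obtain ⟨-, hzP, hzp⟩ := mem_map_omegaCenter.1 hz
    have hzU := centralizer_le hUP hzP
    exact mem_map_omegaCenter.2 ⟨hCU hzU, hzU, hzp⟩
  exact P.2.to_le (((centralizer_le hZ₀).trans (centralizer_le_normalizer _)).trans hN.le)

theorem isPNilpotent_of_quotient (hp2 : p ≠ 2) {P : Sylow p G}
    (h : ThompsonCondition p (P : Subgroup G))
    (hO : ∀ M : Subgroup G, M.Normal → (Nat.card M).Coprime p → M = ⊥)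
    {U : Subgroup G} [U.Normal] (hU : IsPGroup p U) (hUne : U ≠ ⊥)
    (hmax : ∀ W : Subgroup G, W.Normal → IsPGroup p W → W ≤ U) (hq : IsPNilpotent p (G ⧸ U))
    (ih : ∀ L : Subgroup G, (P : Subgroup G) ≤ L → L ≠ ⊤ → IsPNilpotent p L) :
    IsPNilpotent p G := by
  by_contra hG
  have hUP := hU.le_sylow_of_normal P
  have hCU := centralizer_le_of_isPNilpotent_quotient hO hU hmax hq
  have hP (L : Subgroup G) (hL : (P : Subgroup G) ≤ L) : L = ⊤ ∨ L = P :=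
    or_iff_not_imp_left.2 fun hne ↦ eq_sylow_of_isPNilpotent hU hCU hL (ih L hL hne)
  obtain ⟨K, hK, hKc, hKp⟩ := hq
  have hπ := QuotientGroup.mk'_surjective U
  set π := QuotientGroup.mk' U
  let P' : Sylow p (G ⧸ U) := P.mapSurjective hπ
  have hKmul : IsMulCommutative K := isMulCommutative_of_isMax (P := P') hKc fun L hL ↦ by
    rw [← map_comap_eq_self_of_surjective hπ L]
    rcases hP _ (map_le_iff_le_comap.1 hL) with e | e <;> rw [e]
    exacts [.inl (map_top_of_surjective π hπ), .inr rfl]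
  have hdisj : Disjoint (P' : Subgroup (G ⧸ U)) (centralizer (K : Set (G ⧸ U))) := by
    have hn := normal_inf_centralizer (sup_sylow_eq_top hKp P')
    have hW := hmax _ (hn.comap π) <| (P'.2.to_le inf_le_left).comap_of_ker_isPGroup π
      ((QuotientGroup.ker_mk' U).symm ▸ hU)
    rw [disjoint_iff, ← map_comap_eq_self_of_surjective hπ (_ ⊓ _), Subgroup.map_eq_bot_iff,
      QuotientGroup.ker_mk']
    exact hW
  have hCZ := h.centralizer_map_omegaCenter hG hUP hUne hCU hmax hP
  have hJ := thompsonSubgroup_eq_of_le hUP fun E hE ↦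
    hE.le_of_eq_centralizer hp2 ((map_subtype_le _).trans hUP) hCZ.symm hKc hdisj
  refine h.not_normal hG (X := thompsonSubgroup p ⊤) ?_ ?_
  · have : Nontrivial (P : Subgroup G) :=
      (nontrivial_iff_ne_bot _).2 (ne_bot_of_le_ne_bot hUne hUP)
    exact thompsonSubgroup_top_ne_bot P.2
  · rw [map_subtype_thompsonSubgroup_top, hJ]
    infer_instance

end ThompsonCondition

end Thompson

section Thompson

variable {p : ℕ} [Fact p.Prime] {G : Type*} [Group G] [Finite G]

theorem card_le_ordProj {T L : Subgroup G} (hT : IsPGroup p T) (hTL : T ≤ L) :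
    Nat.card T ≤ ordProj[p] (Nat.card L) := by
  obtain ⟨n, hn⟩ := IsPGroup.iff_card.1 hT
  rw [hn]
  refine Nat.pow_le_pow_right (Fact.out : p.Prime).pos ?_
  rw [← (Fact.out : p.Prime).pow_dvd_iff_le_factorization Nat.card_pos.ne', ← hn]
  exact card_dvd_of_le hTL

theorem ThompsonCondition.of_maximal {P : Sylow p G} (h : ThompsonCondition p (P : Subgroup G))
    {L : Subgroup G} (hL : ∀ W : Subgroup G, IsPGroup p W → W ≠ ⊥ →
      ordProj[p] (Nat.card L) < ordProj[p] (Nat.card (normalizer (W : Set G))) →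
      IsPNilpotent p (normalizer (W : Set G))) (S : Sylow p L) :
    ThompsonCondition p (S : Subgroup L) := by
  have hS : IsPGroup p ((S : Subgroup L).map L.subtype) := S.2.map _
  obtain ⟨T, hST⟩ := hS.exists_le_sylow
  obtain hlt | heq := hST.lt_or_eq
  · have : Group.IsNilpotent T := T.2.isNilpotent
    intro X hX hne
    refine .normalizer_of_map L.subtype_injective (hL _ ((S.2.to_subgroup X).map _ |>.map _) ?_ ?_)
    · rwa [Ne, map_eq_bot_iff_of_injective _ L.subtype_injective,
        map_eq_bot_iff_of_injective _ (subtype_injective _)]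
    · have hle : normalizer ((S : Subgroup L).map L.subtype : Set G) ⊓ T ≤
          normalizer ((X.map (S : Subgroup L).subtype).map L.subtype : Set G) :=
        inf_le_left.trans (normalizer_map_le_normalizer_map_map L.subtype_injective X)
      refine lt_of_lt_of_le ?_ (card_le_ordProj (T.2.to_le inf_le_right) hle)
      rw [← S.card_eq_multiplicity, ← card_map_of_injective L.subtype_injective]
      exact Set.ncard_lt_ncard (lt_normalizer_inf_of_lt hlt)
  · exact .of_map L.subtype_injective (heq ▸ h.sylow T)

/- Among the nontrivial `p`-subgroups whose normalizer `N` is not `p`-nilpotent, choose `U` with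
`|N|ₚ` as large as possible and then with `|U|` as large as possible. -/
theorem ThompsonCondition.exists_normal {P : Sylow p G}
    (h : ThompsonCondition p (P : Subgroup G)) (hG : ¬ IsPNilpotent p G)
    (ih : ∀ L : Subgroup G, L ≠ ⊤ → ∀ S : Sylow p L, ThompsonCondition p (S : Subgroup L) →
      IsPNilpotent p L) :
    ∃ U : Subgroup G, U.Normal ∧ IsPGroup p U ∧ U ≠ ⊥ ∧ ∀ W : Subgroup G, U < W → IsPGroup p W →
      P ≤ normalizer (W : Set G) → IsPNilpotent p (normalizer (W : Set G)) := by
  have hloc : ∃ U : Subgroup G, IsPGroup p U ∧ U ≠ ⊥ ∧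
      ¬ IsPNilpotent p (normalizer (U : Set G)) := by
    by_contra! hall
    exact hG (LocallyPNilpotent.isPNilpotent hall)
  obtain ⟨U, ⟨hU, hUne, hUN⟩, hmax⟩ := Set.exists_max_image _
    (fun U : Subgroup G ↦ toLex (ordProj[p] (Nat.card (normalizer (U : Set G))), Nat.card U))
    (Set.toFinite _) hloc
  simp only [Prod.Lex.toLex_le_toLex] at hmax
  have hN : normalizer (U : Set G) = ⊤ := by
    by_contra hne
    refine hUN (ih _ hne default (h.of_maximal (fun W hW hWne hlt ↦ ?_) _))
    by_contra hWN
    have := hmax W ⟨hW, hWne, hWN⟩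
    lia
  refine ⟨U, normalizer_eq_top_iff.1 hN, hU, hUne, fun W hUW hW hPW ↦ ?_⟩
  by_contra hWN
  have hcard : Nat.card U < Nat.card W := Set.ncard_lt_ncard hUW
  have hle := hmax W ⟨hW, ne_bot_of_gt hUW, hWN⟩
  have hPle : Nat.card P ≤ _ := card_le_ordProj P.2 hPW
  rw [P.card_eq_multiplicity] at hPle
  rw [hN, card_top] at hle
  lia

theorem ThompsonCondition.isPNilpotent {G : Type*} [Group G] [Finite G] (hp2 : p ≠ 2)
    {P : Sylow p G} (h : ThompsonCondition p (P : Subgroup G)) : IsPNilpotent p G := by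
  induction hn : Nat.card G using Nat.strong_induction_on generalizing G with | _ n ih
  subst hn
  have ihL (L : Subgroup G) (hL : L ≠ ⊤) (S : Sylow p L)
      (hS : ThompsonCondition p (S : Subgroup L)) : IsPNilpotent p L :=
    ih _ (card_lt_of_ne_top hL) hS rfl
  have ihq (M : Subgroup G) [M.Normal] (hM : M ≠ ⊥)
      (hP : ThompsonCondition p ((P : Subgroup G).map (QuotientGroup.mk' M))) :
      IsPNilpotent p (G ⧸ M) :=
    ih _ (card_quotient_lt_of_ne_bot hM) (P := P.mapSurjective (QuotientGroup.mk'_surjective M))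
      hP rfl
  by_contra hG
  have hO (M : Subgroup G) (hMn : M.Normal) (hM : (Nat.card M).Coprime p) : M = ⊥ := by
    by_contra hne
    exact hG (.of_quotient M hM (ihq M hne (h.map_mk'_of_coprime M hM)))
  obtain ⟨U, hUn, hU, hUne, hmax⟩ := h.exists_normal hG ihL
  have hUP := hU.le_sylow_of_normal P
  refine hG (h.isPNilpotent_of_quotient hp2 hO hU hUne (fun W hWn hW ↦ ?_) ?_ fun L hPL hL ↦ ?_)
  · by_contra hWU
    have hN := hmax (W ⊔ U) (right_lt_sup.2 hWU) (hW.to_sup_of_normal_right hU)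
    rw [normalizer_eq_top] at hN
    exact hG ((hN le_top).of_injective (topEquiv (G := G)).symm.toMonoidHom
      topEquiv.symm.injective)
  · exact ihq U hUne <| .map_mk'_of_isPGroup hUP fun W hUW hWP hPW ↦
      hmax W hUW (P.2.to_le hWP) hPW
  · refine ihL L hL (P.subtype hPL) (.of_map L.subtype_injective ?_)
    rw [Sylow.coe_subtype, subgroupOf_map_subtype, inf_eq_left.2 hPL]
    exact h

end Thompson

/-! ### Glauberman's lemma -/

section Glauberman

universe u v

/-- The conclusion of Glauberman's lemma for the acting group `D`: whenever `D` acts compatibly on a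
finite group `G` of coprime order and on a set `Ω` on which `G` is transitive, it fixes a point of
`Ω`. -/
def HasCoprimeFixedPoints (D : Type u) [Group D] : Prop :=
  ∀ (G Ω : Type v) [Group G] [Finite G] [MulDistribMulAction D G] [MulAction D Ω] [MulAction G Ω]
    [SMulDistribClass D G Ω] [IsPretransitive G Ω] [Nonempty Ω],
    (Nat.card D).Coprime (Nat.card G) → (fixedPoints D Ω).Nonempty

variable {D : Type u} {G Ω : Type v} [Group D] [Group G] [Finite G] [MulDistribMulAction D G]
  [MulAction D Ω] [MulAction G Ω] [SMulDistribClass D G Ω]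

/- Apply the definition to the coset `g * N`, on which `N` acts transitively by
`n • t = t * n⁻¹`. -/
theorem HasCoprimeFixedPoints.exists_mul_mem_fixedPoints (h : HasCoprimeFixedPoints.{u, v} D)
    {N : Subgroup G} [IsSMulInvariant D N] (hc : (Nat.card D).Coprime (Nat.card N)) {g : G}
    (hg : ∀ d : D, g⁻¹ * d • g ∈ N) : ∃ n ∈ N, g * n ∈ fixedPoints D G := by
  let T : SubMulAction D G :=
    { carrier := {t | g⁻¹ * t ∈ N}
      smul_mem' d t ht := by
        rw [Set.mem_ofPred_eq] at ht ⊢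
        simpa using mul_mem (hg d) (IsSMulInvariant.smul_mem d ht) }
  have hT (t : T) : g⁻¹ * t ∈ N := t.2
  let : MulAction N T :=
    { smul n t := ⟨t * (n : G)⁻¹, show g⁻¹ * ((t : G) * (n : G)⁻¹) ∈ N by
        simpa only [mul_assoc] using mul_mem (hT t) (inv_mem n.2)⟩
      one_smul t := Subtype.ext (by simp [HSMul.hSMul])
      mul_smul m n t := Subtype.ext (by simp [HSMul.hSMul, mul_assoc]) }
  have hsmul (n : N) (t : T) : ((n • t : T) : G) = t * (n : G)⁻¹ := rfl
  have : SMulDistribClass D N T := ⟨fun d n t ↦ Subtype.ext <| by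
    simp [hsmul, IsSMulInvariant.coe_smul]⟩
  have : IsPretransitive N T := ⟨fun s t ↦ ⟨⟨(t : G)⁻¹ * s, by
    simpa only [mul_inv_rev, inv_inv, mul_assoc, mul_inv_cancel_left]
      using mul_mem (inv_mem (hT t)) (hT s)⟩, Subtype.ext (by simp [hsmul])⟩⟩
  have : Nonempty T := ⟨⟨g, show g⁻¹ * g ∈ N by simp⟩⟩
  obtain ⟨t, ht⟩ := h N T hc
  exact ⟨g⁻¹ * t, t.2, fun d ↦ by
    rw [mul_inv_cancel_left]; exact congrArg Subtype.val (ht d)⟩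

theorem HasCoprimeFixedPoints.exists_smul_eq [IsPretransitive G Ω]
    (h : HasCoprimeFixedPoints.{u, v} D) (hc : (Nat.card D).Coprime (Nat.card G)) {ω ω' : Ω}
    (hω : ω ∈ fixedPoints D Ω) (hω' : ω' ∈ fixedPoints D Ω) :
    ∃ g ∈ fixedPoints D G, g • ω = ω' := by
  have : IsSMulInvariant D (stabilizer G ω) := ⟨fun d n hn ↦ by
    rw [mem_stabilizer_iff] at hn ⊢
    rw [← hω d, ← smul_distrib_smul, hn]⟩
  obtain ⟨g, rfl⟩ := MulAction.exists_smul_eq G ω ω'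
  obtain ⟨n, hn, hgn⟩ := h.exists_mul_mem_fixedPoints (N := stabilizer G ω) (g := g)
    (hc.coprime_dvd_right (card_subgroup_dvd_card _)) fun d ↦ by
      rw [mem_stabilizer_iff, mul_smul, inv_smul_eq_iff]
      nth_rw 1 [← hω d]
      rw [← smul_distrib_smul, hω' d]
  exact ⟨g * n, hgn, by rw [mul_smul, mem_stabilizer_iff.1 hn]⟩

theorem HasCoprimeFixedPoints.card_fixedPoints_dvd [IsPretransitive G Ω] [Nonempty Ω]
    (h : HasCoprimeFixedPoints.{u, v} D) (hc : (Nat.card D).Coprime (Nat.card G)) :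
    Nat.card (fixedPoints D Ω) ∣ Nat.card G := by
  obtain ⟨ω, hω⟩ := h G Ω hc
  have horbit : fixedPoints D Ω = orbit (FixedPoints.subgroup D G) ω := by
    ext ω'
    constructor
    · intro hω'
      obtain ⟨g, hg, rfl⟩ := h.exists_smul_eq hc hω hω'
      exact ⟨⟨g, hg⟩, rfl⟩
    · rintro ⟨⟨g, hg⟩, rfl⟩ d
      change d • g • ω = g • ω
      rw [smul_distrib_smul, hg d, hω d]
  rw [horbit, Nat.card_coe_set_eq, ← index_stabilizer]
  exact (index_dvd_card _).trans (card_subgroup_dvd_card _)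

theorem hasCoprimeFixedPoints (D : Type u) [Group D] [Finite D] [Group.IsNilpotent D] :
    HasCoprimeFixedPoints.{u, v} D := by
  induction hn : Nat.card D using Nat.strong_induction_on generalizing D with | _ n ih
  subst hn
  intro G Ω _ _ _ _ _ _ _ _ hc
  cases subsingleton_or_nontrivial D with
  | inl _ => exact ⟨Classical.arbitrary Ω, fun d ↦ by rw [Subsingleton.elim d 1, one_smul]⟩
  | inr _ =>
  obtain ⟨p, hp, hpD⟩ := Nat.exists_prime_and_dvd (Finite.one_lt_card (α := D)).ne'
  have := Fact.mk hp
  obtain ⟨M, hMn, hMc, hMp⟩ := isPNilpotent_of_isNilpotent p D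
  have hM : M ≠ ⊤ := by
    rintro rfl
    rw [card_top, Nat.coprime_comm, hp.coprime_iff_not_dvd] at hMc
    exact hMc hpD
  have hMG := hc.coprime_dvd_left (card_subgroup_dvd_card M)
  have : SMulDistribClass M G Ω := ⟨fun m ↦ smul_distrib_smul (m : D)⟩
  have hdvd : Nat.card (fixedPoints M Ω) ∣ Nat.card G :=
    (ih _ (card_lt_of_ne_top hM) M rfl).card_fixedPoints_dvd hMG
  obtain ⟨S⟩ : Nonempty (Sylow p D) := inferInstance
  obtain ⟨ω, hω⟩ := S.2.nonempty_fixed_point_of_prime_not_dvd_card (fixedPoints M Ω) fun h ↦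
    hp.one_lt.ne' (Nat.eq_one_of_dvd_coprimes hc hpD (h.trans hdvd))
  have htop : M ⊔ S ≤ stabilizer D (ω : Ω) :=
    sup_le (fun m hm ↦ ω.2 ⟨m, hm⟩) fun s hs ↦ congrArg Subtype.val (hω ⟨s, hs⟩)
  rw [sup_sylow_eq_top hMp S] at htop
  exact ⟨ω, fun d ↦ htop (mem_top d)⟩

end Glauberman

theorem sylow_smulDistribClass (r : ℕ) (A G : Type*) [Group A] [Group G]
    [MulDistribMulAction A G] : SMulDistribClass A G (Sylow r G) :=
  ⟨fun a g P ↦ Sylow.ext <| Subgroup.ext fun x ↦ by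
    simp only [Sylow.pointwise_smul_def, Sylow.smul_def, mem_pointwise_smul_iff_inv_smul_mem,
      ← map_inv, MulAut.smul_def, MulAut.conj_apply, smul_mul', smul_inv', inv_smul_smul]⟩

theorem exists_sylow_isSMulInvariant (r : ℕ) [Fact r.Prime] {A G : Type*} [Group A] [Finite A]
    [Group G] [Finite G] [MulDistribMulAction A G] (D : Subgroup A) [D.Normal] [Group.IsNilpotent D]
    (hc : (Nat.card D).Coprime (Nat.card G)) (hfix : autFixed (G := G) D = ⊥) :
    ∃ P : Sylow r G, IsSMulInvariant A (P : Subgroup G) := by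
  have := sylow_smulDistribClass r A G
  have : SMulDistribClass D G (Sylow r G) := ⟨fun d ↦ smul_distrib_smul (d : A)⟩
  have hD := hasCoprimeFixedPoints D
  obtain ⟨P, hP⟩ := hD G (Sylow r G) hc
  refine ⟨P, ⟨fun a x hx ↦ ?_⟩⟩
  obtain ⟨g, hg, hgP⟩ := hD.exists_smul_eq hc hP (smul_mem_fixedPoints_of_normal a hP)
  have hg1 : g ∈ autFixed (G := G) D := fun d hd ↦ hg ⟨d, hd⟩
  rw [hfix, mem_bot] at hg1
  rw [hg1, one_smul] at hgP
  rw [hgP]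
  exact smul_mem_pointwise_smul x a (P : Subgroup G) hx

/-! ### Invariant subgroups and quotients -/

section Invariant

variable {A G : Type*} [Group A] [Group G] [MulDistribMulAction A G]

instance autFixed_isSMulInvariant (S : Subgroup A) [hS : S.Normal] :
    IsSMulInvariant A (autFixed (G := G) S) :=
  ⟨fun a g hg s hs ↦ by
    have h := hg _ (hS.conj_mem' s hs a)
    rw [mul_smul, mul_smul, inv_smul_eq_iff] at h
    exact h⟩

instance characteristic_isSMulInvariant (N : Subgroup G) [hN : N.Characteristic] :
    IsSMulInvariant A N :=
  ⟨fun a _ hg ↦ characteristic_iff_map_le.1 hN (MulDistribMulAction.toMulEquiv G a)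
    (mem_map_of_mem _ hg)⟩

namespace IsSMulInvariant

variable (N M : Subgroup G) [IsSMulInvariant A N] [IsSMulInvariant A M]

instance inf : IsSMulInvariant A (N ⊓ M : Subgroup G) :=
  ⟨fun a _ hg ↦ ⟨smul_mem a hg.1, smul_mem a hg.2⟩⟩

instance centralizer : IsSMulInvariant A (centralizer (N : Set G)) :=
  ⟨fun a g hg n hn ↦ by
    have h := congrArg (a • ·) (hg _ (smul_mem a⁻¹ hn))
    simpa only [smul_mul', smul_inv_smul] using h⟩

theorem smul_mem_iff {N : Subgroup G} [IsSMulInvariant A N] (a : A) {g : G} :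
    a • g ∈ N ↔ g ∈ N :=
  ⟨fun h ↦ by simpa only [inv_smul_smul] using smul_mem a⁻¹ h, smul_mem a⟩

instance normalizer : IsSMulInvariant A (normalizer (N : Set G)) :=
  ⟨fun a g hg ↦ mem_normalizer_iff.2 fun x ↦ by
    rw [← smul_mem_iff (N := N) a⁻¹, mem_normalizer_iff.1 hg, ← smul_mem_iff (N := N) a]
    simp only [smul_mul', smul_inv', smul_inv_smul]⟩

instance map_subtype (X : Subgroup N) [IsSMulInvariant A X] :
    IsSMulInvariant A (X.map N.subtype) :=
  ⟨fun a ↦ by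
    rintro _ ⟨x, hx, rfl⟩
    exact ⟨a • x, smul_mem a hx, rfl⟩⟩

variable [N.Normal]

instance quotientAction : QuotientAction A N :=
  ⟨fun a x y h ↦ by rw [← smul_inv', ← smul_mul']; exact smul_mem a h⟩

instance quotientMulDistribMulAction : MulDistribMulAction A (G ⧸ N) where
  smul_mul a := by
    rintro ⟨x⟩ ⟨y⟩
    exact congrArg ((↑) : G → G ⧸ N) (smul_mul' a x y)
  smul_one a := congrArg ((↑) : G → G ⧸ N) (smul_one a)

instance map_mk' : IsSMulInvariant A (M.map (QuotientGroup.mk' N)) :=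
  ⟨fun a ↦ by
    rintro _ ⟨x, hx, rfl⟩
    exact ⟨a • x, smul_mem a hx, rfl⟩⟩

instance comap_mk' (X : Subgroup (G ⧸ N)) [IsSMulInvariant A X] :
    IsSMulInvariant A (X.comap (QuotientGroup.mk' N)) :=
  ⟨fun a g (hg : (g : G ⧸ N) ∈ X) ↦ smul_mem (N := X) a hg⟩

instance smulDistribClass_quotient_centralizer :
    SMulDistribClass A (G ⧸ Subgroup.centralizer (N : Set G)) N :=
  ⟨fun a x v ↦ by
    obtain ⟨g, rfl⟩ := QuotientGroup.mk_surjective x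
    refine Subtype.ext ?_
    change a • (g * v * g⁻¹) = a • g * a • (v : G) * (a • g)⁻¹
    rw [smul_mul', smul_mul', smul_inv']⟩

end IsSMulInvariant

end Invariant

section NilpotentParts

variable {p : ℕ}

theorem characteristic_of_coprime {G : Type*} [Group G] [Finite G] {N : Subgroup G} [N.Normal]
    (hN : (Nat.card N).Coprime p) (hq : IsPGroup p (G ⧸ N)) : N.Characteristic :=
  characteristic_iff_le_comap.2 fun φ g hg ↦ by
    rw [mem_comap, mem_iff_coprime_orderOf hN hq] at *
    rwa [orderOf_injective _ φ.injective]

variable [Fact p.Prime]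

theorem omegaCenter_ne_bot_of_dvd_card {G : Type*} [Group G] [Finite G] [Group.IsNilpotent G]
    (h : p ∣ Nat.card G) : omegaCenter p G ≠ ⊥ := by
  obtain ⟨P⟩ : Nonempty (Sylow p G) := inferInstance
  obtain ⟨N, hNn, hNc, hNp⟩ := isPNilpotent_of_isNilpotent p G
  have : Nontrivial P := (nontrivial_iff_ne_bot _).2 (P.ne_bot_of_dvd_card h)
  obtain ⟨⟨z, hz⟩, hz1⟩ := ne_bot_iff_exists_ne_one.1 (omegaCenter_ne_bot P.2)
  refine ne_bot_iff_exists_ne_one.2 ⟨⟨z, mem_center_iff.2 fun g ↦ ?_, ?_⟩, fun h ↦ hz1 ?_⟩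
  · obtain ⟨n, hn, x, hx, rfl⟩ := mem_sup_of_normal_left.1 (sup_sylow_eq_top hNp P ▸ mem_top g)
    have hzn := commute_of_normal_of_disjoint N P hNn inferInstance
      (disjoint_of_coprime_of_isPGroup hNc P.2) n z hn z.2
    have hzx := congrArg Subtype.val (mem_center_iff.1 hz.1 ⟨x, hx⟩)
    exact hzn.mul_left hzx
  · exact congrArg Subtype.val hz.2
  · exact Subtype.ext (Subtype.ext congr(($h : G)))

theorem exists_normal_sup_eq_of_isNilpotent (p : ℕ) [Fact p.Prime] {A : Type*} [Group A] [Finite A]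
    (D : Subgroup A) [D.Normal] [Group.IsNilpotent D] :
    ∃ E P : Subgroup A, E.Normal ∧ P.Normal ∧ E ⊔ P = D ∧ (Nat.card E).Coprime p ∧
      IsPGroup p P := by
  obtain ⟨N, hNn, hNc, hNp⟩ := isPNilpotent_of_isNilpotent p D
  obtain ⟨P⟩ : Nonempty (Sylow p D) := inferInstance
  have hN := characteristic_of_coprime hNc hNp
  have hP := P.characteristic_of_normal inferInstance
  refine ⟨N.map D.subtype, (P : Subgroup D).map D.subtype, inferInstance, inferInstance, ?_, ?_,
    P.2.map _⟩
  · rw [← Subgroup.map_sup, sup_sylow_eq_top hNp, ← MonoidHom.range_eq_map, range_subtype]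
  · rwa [card_map_of_injective D.subtype_injective]

theorem inf_autFixed_eq_bot {A G : Type*} [Group A] [Group G] [Finite G] [MulDistribMulAction A G]
    {E P : Subgroup A} [E.Normal] (hP : IsPGroup p P) (hfix : autFixed (G := G) (E ⊔ P) = ⊥)
    {Y : Subgroup G} [IsSMulInvariant A Y] (hY : IsPGroup p Y) : Y ⊓ autFixed E = ⊥ := by
  by_contra hne
  have := (nontrivial_iff_ne_bot _).2 hne
  refine inf_autFixed_ne_bot hP (Y ⊓ autFixed E)
    (prime_dvd_card_of_isPGroup (hY.to_le inf_le_left)) ?_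
  rw [inf_assoc, ← autFixed_sup, hfix, inf_bot_eq]

end NilpotentParts

/-! ### Minimal non-nilpotent groups with operators -/

section ElementaryInvariant

variable {A G : Type*} [Group A] [Group G] [MulDistribMulAction A G]

variable (A) in
/-- A nontrivial normal `A`-invariant subgroup that is elementary abelian of exponent `r`. -/
structure IsElementaryInvariant (r : ℕ) (V : Subgroup G) : Prop where
  prime : r.Prime
  normal : V.Normal
  isSMulInvariant : IsSMulInvariant A V
  isElementaryAbelian : IsElementaryAbelian r V
  ne_bot : V ≠ ⊥

variable (A G) in
/-- A finite group with operators `A` is *minimal non-nilpotent* if it is not nilpotent while its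
proper invariant subgroups and its proper quotients by invariant subgroups are. -/
structure IsMinimalNonNilpotent : Prop where
  not_isNilpotent : ¬ Group.IsNilpotent G
  isNilpotent_of_ne_top : ∀ (N : Subgroup G) [IsSMulInvariant A N], N ≠ ⊤ → Group.IsNilpotent N
  isNilpotent_quotient : ∀ (N : Subgroup G) [N.Normal] [IsSMulInvariant A N], N ≠ ⊥ →
    Group.IsNilpotent (G ⧸ N)

variable [Finite G]

theorem exists_prime_ne_dvd_card {p : ℕ} (h : ¬ IsPGroup p G) :
    ∃ q, q.Prime ∧ q ≠ p ∧ q ∣ Nat.card G := by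
  by_contra! hno
  exact h (IsPGroup.of_card (Nat.eq_prime_pow_of_unique_prime_dvd Nat.card_pos.ne' fun hq hqG ↦
    by_contra fun hne ↦ hno _ hq hne hqG))

theorem exists_isElementaryInvariant_of_ne_bot {N : Subgroup G} [N.Normal] [IsSMulInvariant A N]
    [Group.IsNilpotent N] (hN : N ≠ ⊥) : ∃ r V, IsElementaryInvariant A r V ∧ V ≤ N := by
  obtain ⟨r, hr, hrN⟩ := Nat.exists_prime_and_dvd (mt card_eq_one.1 hN)
  have := Fact.mk hr
  refine ⟨r, (omegaCenter r N).map N.subtype, ⟨hr, inferInstance, inferInstance, inferInstance, ?_⟩,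
    map_subtype_le _⟩
  rw [Ne, map_eq_bot_iff_of_injective _ N.subtype_injective]
  exact omegaCenter_ne_bot_of_dvd_card hrN

theorem exists_sylow_eq_of_maximal {r : ℕ} [Fact r.Prime] {R : Subgroup G}
    (hR : Maximal (fun R : Subgroup G ↦ IsSMulInvariant A R ∧ IsPGroup r R) R)
    [Group.IsNilpotent (normalizer (R : Set G))] : ∃ P : Sylow r G, (P : Subgroup G) = R := by
  obtain ⟨P, hRP⟩ := hR.prop.2.exists_le_sylow
  refine ⟨P, (hRP.eq_of_not_lt fun hlt ↦ ?_).symm⟩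
  have := P.2.isNilpotent
  have := hR.prop.1
  set N := normalizer (R : Set G)
  obtain ⟨T, hT⟩ := (P.2.comap_of_injective N.subtype N.subtype_injective).exists_le_sylow
  have := T.characteristic_of_normal inferInstance
  have hPT : N ⊓ P ≤ (T : Subgroup N).map N.subtype := fun x hx ↦ ⟨⟨x, hx.1⟩, hT hx.2, rfl⟩
  have hTR : (T : Subgroup N).map N.subtype ≤ R := hR.2 ⟨inferInstance, T.2.map _⟩
    ((le_inf le_normalizer hRP).trans hPT)
  exact (lt_normalizer_inf_of_lt hlt).not_ge (hPT.trans hTR)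

namespace IsMinimalNonNilpotent

variable (hG : IsMinimalNonNilpotent A G)

include hG

theorem isNilpotent_normalizer (hno : ¬ ∃ r V, IsElementaryInvariant A r (V : Subgroup G))
    {X : Subgroup G} [IsSMulInvariant A X] [Group.IsNilpotent X] (hX : X ≠ ⊥) :
    Group.IsNilpotent (normalizer (X : Set G)) :=
  hG.isNilpotent_of_ne_top _ fun htop ↦
    have := normalizer_eq_top_iff.1 htop
    have ⟨r, V, hV, _⟩ := exists_isElementaryInvariant_of_ne_bot (A := A) hX
    hno ⟨r, V, hV⟩

/- Otherwise normalizers of invariant `r`-subgroups are nilpotent, so a maximal invariant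
`r`-subgroup is a Sylow subgroup satisfying Thompson's condition. -/
theorem exists_isElementaryInvariant_of_isPGroup {r : ℕ} [Fact r.Prime] (hr2 : r ≠ 2)
    {R : Subgroup G} [IsSMulInvariant A R] (hRr : IsPGroup r R) (hR : R ≠ ⊥) :
    ∃ s V, IsElementaryInvariant A s (V : Subgroup G) := by
  by_contra hno
  obtain ⟨S, hRS, hS⟩ := (Set.toFinite {S : Subgroup G | IsSMulInvariant A S ∧ IsPGroup r S}
    ).exists_le_maximal ⟨‹IsSMulInvariant A R›, hRr⟩
  have := hS.prop.1
  have := hS.prop.2.isNilpotent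
  have hSbot : S ≠ ⊥ := ne_bot_of_le_ne_bot hR hRS
  have := hG.isNilpotent_normalizer hno hSbot
  obtain ⟨P, rfl⟩ := exists_sylow_eq_of_maximal hS
  have hP : ThompsonCondition r (P : Subgroup G) := fun X _ hX ↦ by
    have := (hS.prop.2.to_le (map_subtype_le X)).isNilpotent
    have := hG.isNilpotent_normalizer hno (X := X.map (P : Subgroup G).subtype) <|
      (map_eq_bot_iff_of_injective _ (subtype_injective _)).not.2 hX
    exact isPNilpotent_of_isNilpotent r _
  obtain ⟨N, hNn, hNc, hNr⟩ := hP.isPNilpotent hr2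
  have := characteristic_of_coprime hNc hNr
  have hNtop : N ≠ ⊤ := by
    rintro rfl
    exact hSbot (top_disjoint.1 (disjoint_of_coprime_of_isPGroup hNc P.2))
  have := hG.isNilpotent_of_ne_top N hNtop
  obtain rfl : N = ⊥ := by_contra fun hN ↦
    have ⟨r, V, hV, _⟩ := exists_isElementaryInvariant_of_ne_bot (A := A) hN
    hno ⟨r, V, hV⟩
  exact hG.not_isNilpotent (hNr.of_equiv QuotientGroup.quotientBot).isNilpotent

theorem exists_isElementaryInvariant_of_dvd_card {r : ℕ} (hr : r.Prime) (hr2 : r ≠ 2)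
    {X : Subgroup G} [IsSMulInvariant A X] (hX : X ≠ ⊤) (hrX : r ∣ Nat.card X) :
    ∃ s V, IsElementaryInvariant A s (V : Subgroup G) := by
  have := Fact.mk hr
  have := hG.isNilpotent_of_ne_top X hX
  refine hG.exists_isElementaryInvariant_of_isPGroup hr2
    (R := (omegaCenter r X).map X.subtype) isPGroup_of_isElementaryAbelian ?_
  rw [Ne, map_eq_bot_iff_of_injective _ X.subtype_injective]
  exact omegaCenter_ne_bot_of_dvd_card hrX

end IsMinimalNonNilpotent

end ElementaryInvariant

section Existence

variable {A G : Type*} [Group A] [Finite A] [Group G] [Finite G] [MulDistribMulAction A G]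

theorem coprime_card_of_minimal {q : ℕ} (hprop : ∀ (X : Subgroup G) [IsSMulInvariant A X],
      X ≠ ⊤ → ∀ r, r.Prime → r ∣ Nat.card X → r = q) {D : Subgroup A} [Group.IsNilpotent D]
    (hD : Minimal (fun D : Subgroup A ↦ D.Normal ∧ autFixed (G := G) D = ⊥) D) :
    (Nat.card D).Coprime (Nat.card G) := by
  refine Nat.coprime_of_dvd fun p hp hpD hpG ↦ ?_
  have := Fact.mk hp
  have := hD.prop.1
  obtain ⟨E, P, hE, hP, hEP, hEc, hPp⟩ := exists_normal_sup_eq_of_isNilpotent p D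
  have hfix : autFixed (G := G) E ⊓ autFixed P = ⊥ := by rw [← autFixed_sup, hEP, hD.prop.2]
  have hEbot : autFixed (G := G) E ≠ ⊥ := fun h ↦ by
    have hDE : D ≤ E := hD.2 ⟨hE, h⟩ (hEP ▸ le_sup_left)
    exact (hp.coprime_iff_not_dvd.1 hEc.symm) (hpD.trans (card_dvd_of_le hDE))
  have hpE : ¬ p ∣ Nat.card (autFixed (G := G) E) := fun h ↦ inf_autFixed_ne_bot hPp _ h hfix
  obtain ⟨s, hs, hsE⟩ := Nat.exists_prime_and_dvd (mt card_eq_one.1 hEbot)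
  have hsq : s = q := hprop _ (fun h ↦ hpE (by rwa [h, card_top])) s hs hsE
  have hpP : p ∣ Nat.card (autFixed (G := G) P) := by
    have hfixed : Nat.card (fixedPoints P G) = Nat.card (autFixed (G := G) P) :=
      Nat.card_congr (Equiv.subtypeEquivRight fun _ ↦ Subtype.forall)
    rw [← hfixed]
    exact Nat.modEq_zero_iff_dvd.1
      ((hPp.card_modEq_card_fixedPoints G).symm.trans hpG.modEq_zero_nat)
  have hpq : p = q := hprop _ (fun h ↦ hEbot (by rwa [h, inf_top_eq] at hfix)) p hp hpP
  exact hpE (hpq ▸ hsq ▸ hsE)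

namespace IsMinimalNonNilpotent

theorem exists_isElementaryInvariant (hG : IsMinimalNonNilpotent A G) (F : Subgroup A) [F.Normal]
    [Group.IsNilpotent F] (hF : autFixed (G := G) F = ⊥) :
    ∃ r V, IsElementaryInvariant A r (V : Subgroup G) := by
  by_contra hno
  obtain ⟨D, hDF, hD⟩ := (Set.toFinite {D : Subgroup A | D.Normal ∧ autFixed (G := G) D = ⊥}
    ).exists_le_minimal ⟨‹F.Normal›, hF⟩
  have := hD.prop.1
  have : Group.IsNilpotent D := Group.nilpotent_of_mulEquiv (subgroupOfEquivOfLe hDF)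
  have hc := coprime_card_of_minimal (fun X _ hX r hr hrX ↦ by_contra fun hr2 ↦
    hno (hG.exists_isElementaryInvariant_of_dvd_card hr hr2 hX hrX)) hD
  obtain ⟨r, hr, hr2, hrG⟩ := exists_prime_ne_dvd_card (p := 2) fun h ↦
    hG.not_isNilpotent h.isNilpotent
  have := Fact.mk hr
  obtain ⟨P, hP⟩ := exists_sylow_isSMulInvariant r D hc hD.prop.2
  exact hno (hG.exists_isElementaryInvariant_of_isPGroup hr2 P.2 (P.ne_bot_of_dvd_card hrG))

end IsMinimalNonNilpotent

end Existence

section MinimalInvariant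

variable {A G : Type*} [Group A] [Group G] [MulDistribMulAction A G] {r : ℕ} {V : Subgroup G}

theorem IsMinimalNonNilpotent.centralizer_ne_top (hG : IsMinimalNonNilpotent A G)
    (hV : IsElementaryInvariant A r V) : centralizer (V : Set G) ≠ ⊤ := fun h ↦ by
  have := hV.normal
  have := hV.isSMulInvariant
  have := hG.isNilpotent_quotient V hV.ne_bot
  refine hG.not_isNilpotent (Subgroup.isNilpotent_of_ker_le_center (QuotientGroup.mk' V) ?_)
  rw [QuotientGroup.ker_mk']
  exact centralizer_eq_top_iff_subset.1 h

variable (hV : Minimal (IsElementaryInvariant A r) V)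

include hV

theorem eq_bot_or_eq_of_minimal (X : Subgroup G) [X.Normal] [IsSMulInvariant A X] (hXV : X ≤ V) :
    X = ⊥ ∨ X = V := by
  have := hV.prop.isElementaryAbelian
  exact or_iff_not_imp_left.2 fun hX ↦ hXV.antisymm (hV.2 ⟨hV.prop.prime, inferInstance,
    inferInstance, isElementaryAbelian_of_le hXV, hX⟩ hXV)

theorem inf_center_eq_bot_of_minimal (hC : centralizer (V : Set G) ≠ ⊤) : V ⊓ center G = ⊥ := by
  have := hV.prop.normal
  have := hV.prop.isSMulInvariant
  refine (eq_bot_or_eq_of_minimal hV _ inf_le_left).resolve_right fun h ↦ hC ?_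
  have hVc : V ≤ center G := inf_eq_left.1 h
  exact centralizer_eq_top_iff_subset.2 hVc

theorem autFixed_omegaCenter_eq_bot_of_minimal [V.Normal] {q : ℕ}
    (hU : omegaCenter q (G ⧸ centralizer (V : Set G)) ≠ ⊥) :
    autFixed (G := V) (omegaCenter q (G ⧸ centralizer (V : Set G))) = ⊥ := by
  have := hV.prop.isSMulInvariant
  set U := omegaCenter q (G ⧸ centralizer (V : Set G))
  set W := U.comap (QuotientGroup.mk' (centralizer (V : Set G)))
  have hfix {v : V} (hv : v ∈ autFixed U) : (v : G) ∈ centralizer (W : Set G) := fun w hw ↦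
    mul_inv_eq_iff_eq_mul.1 congr(($(hv _ hw) : G))
  have hVW : V ⊓ centralizer (W : Set G) = ⊥ := by
    refine (eq_bot_or_eq_of_minimal hV _ inf_le_left).resolve_right fun h ↦ hU ?_
    refine (eq_bot_iff_forall _).2 fun u hu ↦ ?_
    obtain ⟨g, rfl⟩ := QuotientGroup.mk_surjective u
    exact (QuotientGroup.eq_one_iff g).2 fun v hv ↦ ((inf_eq_left.1 h hv) g hu).symm
  exact (eq_bot_iff_forall _).2 fun v hv ↦ Subtype.ext ((eq_bot_iff_forall _).1 hVW v
    ⟨v.2, hfix hv⟩)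

theorem IsMinimalNonNilpotent.exists_autFixed_omegaCenter_eq_bot [Finite G]
    (hG : IsMinimalNonNilpotent A G) [V.Normal] : ∃ q, q.Prime ∧ q ≠ r ∧
      autFixed (G := V) (omegaCenter q (G ⧸ centralizer (V : Set G))) = ⊥ := by
  have := hV.prop.isSMulInvariant
  have := hV.prop.isElementaryAbelian
  have := Fact.mk hV.prop.prime
  have hVC : V ≤ centralizer (V : Set G) := le_centralizer V
  have hGV := hG.isNilpotent_quotient V hV.prop.ne_bot
  have : Group.IsNilpotent (G ⧸ centralizer (V : Set G)) :=
    Group.nilpotent_of_surjective (QuotientGroup.map V _ (.id G) hVC)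
      (QuotientGroup.map_surjective_of_surjective _ _ _ QuotientGroup.mk_surjective hVC)
  have hC := hG.centralizer_ne_top hV.prop
  have hK : ¬ IsPGroup r (G ⧸ centralizer (V : Set G)) := fun h ↦ by
    have : Nontrivial V := (nontrivial_iff_ne_bot _).2 hV.prop.ne_bot
    obtain ⟨v, hv, hv1⟩ := h.exists_fixed_point_of_prime_dvd_card_of_fixed_point V
      (prime_dvd_card_of_isPGroup isPGroup_of_isElementaryAbelian) (a := 1) fun x ↦ smul_one x
    have hvC : (v : G) ∈ V ⊓ center G :=
      ⟨v.2, mem_center_iff.2 fun g ↦ mul_inv_eq_iff_eq_mul.1 congr(($(hv g) : G))⟩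
    rw [inf_center_eq_bot_of_minimal hV hC, mem_bot] at hvC
    exact hv1 (Subtype.ext hvC).symm
  obtain ⟨q, hq, hqr, hqK⟩ := exists_prime_ne_dvd_card hK
  have := Fact.mk hq
  exact ⟨q, hq, hqr, autFixed_omegaCenter_eq_bot_of_minimal hV
    (omegaCenter_ne_bot_of_dvd_card hqK)⟩

end MinimalInvariant

/-! ### Frobenius actions -/

section FrobeniusAction

variable (H U : Type*) {V : Type*} [Group H] [Group U] [Group V] [IsMulCommutative V]
  [MulDistribMulAction H U] [MulDistribMulAction H V] [MulDistribMulAction U V]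

/-- `H` acts on `U` as a Frobenius complement acts on its kernel: no nontrivial element of `H` fixes
a nontrivial element of `U`. -/
def IsFrobeniusAction : Prop :=
  ∀ h : H, h ≠ 1 → ∀ u : U, h • u = u → u = 1

variable {H U}

theorem exists_map_smul_eq_mul (H X : Type*) [Group H] [MulAction H X] :
    ∃ κ : X → H, ∀ x, stabilizer H x = ⊥ → ∀ h : H, κ (h • x) = h * κ x := by
  let rep (x : X) : X := (Quotient.mk (orbitRel H X) x).out
  have hrep (x : X) : ∃ h : H, h • rep x = x := (orbitRel H X).symm (Quotient.mk_out x)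
  choose κ hκ using hrep
  refine ⟨κ, fun x hx h ↦ ?_⟩
  have hrep_smul : rep (h • x) = rep x := congrArg Quotient.out (Quotient.sound ⟨h, rfl⟩)
  have hmem : (h * κ x)⁻¹ * κ (h • x) ∈ stabilizer H (rep x) := by
    rw [mem_stabilizer_iff, mul_smul, inv_smul_eq_iff, mul_smul, hκ, ← hrep_smul, hκ]
  rw [← hκ x, stabilizer_smul_eq_stabilizer_map_conj, map_eq_bot_iff_of_injective _
    (MulAut.conj (κ x)).injective] at hx
  rw [hx, mem_bot, inv_mul_eq_one] at hmem
  exact hmem.symm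

namespace IsFrobeniusAction

theorem stabilizer_eq_bot (hfree : IsFrobeniusAction H U) {u : U} (hu : u ≠ 1) :
    stabilizer H u = ⊥ :=
  eq_bot_iff.2 fun h hh ↦ by_contra fun hne ↦ hu (hfree h hne u hh)

theorem injective_mul_smul_inv (hfree : IsFrobeniusAction H U) {h : H} (hh : h ≠ 1) :
    Function.Injective fun u : U ↦ u * h • u⁻¹ := fun x y hxy ↦ by
  have hfix : h • (y⁻¹ * x) = y⁻¹ * x := by
    dsimp only at hxy
    rw [smul_inv', smul_inv', mul_inv_eq_iff_eq_mul] at hxy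
    rw [smul_mul', smul_inv', eq_comm, inv_mul_eq_iff_eq_mul, ← mul_assoc]
    exact hxy
  exact (inv_mul_eq_one.1 (hfree h hh _ hfix)).symm

variable [Fintype U] [SMulDistribClass H U V]

theorem pow_card_eq_prod [Fintype H] (hfree : IsFrobeniusAction H U)
    (htr : ∀ v : V, traceHom U V v = 1) (v : V) :
    v ^ Nat.card U = ∏ u : U, u • traceHom H V (u⁻¹ • v) := by
  simp only [traceHom_apply, Finset.smul_prod']
  rw [Finset.prod_comm, Finset.prod_eq_single_of_mem (1 : H) (Finset.mem_univ _)]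
  · simp only [one_smul, smul_inv_smul, Finset.prod_const, Finset.card_univ,
      Nat.card_eq_fintype_card]
  · intro h _ hh
    have hbij := Finite.injective_iff_bijective.1 (hfree.injective_mul_smul_inv hh)
    refine Eq.trans ?_ (htr (h • v))
    rw [traceHom_apply, ← (Equiv.ofBijective _ hbij).prod_comp (· • h • v)]
    refine Finset.prod_congr rfl fun u _ ↦ ?_
    rw [smul_distrib_smul h u⁻¹ v, Equiv.ofBijective_apply, mul_smul]

/- If `κ : U → H` commutes with the action of `H` off `1`, then `∏ x ≠ 1, (x • d (κ x))⁻¹` is a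
solution. -/
theorem exists_mul_smul_eq (hfree : IsFrobeniusAction H U) (htr : ∀ v : V, traceHom U V v = 1)
    (d : H → V) (hd : ∀ h k, d (h * k) = d h * h • d k) : ∃ v : V, ∀ h, d h * h • v = v := by
  classical
  obtain ⟨κ, hκ⟩ := exists_map_smul_eq_mul H U
  let s := Finset.univ.erase (1 : U)
  have hprod (v : V) : ∏ x ∈ s, x • v = v⁻¹ := by
    rw [eq_inv_iff_mul_eq_one, ← htr v, traceHom_apply,
      ← Finset.prod_erase_mul _ _ (Finset.mem_univ (1 : U)), one_smul]
  have hsmul (h : H) : h • ∏ x ∈ s, x • d (κ x) = d h * ∏ x ∈ s, x • d (κ x) := calc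
    h • ∏ x ∈ s, x • d (κ x) = ∏ x ∈ s, x • ((d h)⁻¹ * d (κ x)) := by
      rw [Finset.smul_prod']
      refine Finset.prod_equiv (toPerm h) (fun x ↦ ?_) fun x hx ↦ ?_
      · simp only [s, Finset.mem_erase, Finset.mem_univ, and_true, toPerm_apply, ne_eq]
        rw [smul_eq_iff_eq_inv_smul, smul_one]
      · rw [toPerm_apply, hκ x (hfree.stabilizer_eq_bot (Finset.ne_of_mem_erase hx)), hd,
          inv_mul_cancel_left, smul_distrib_smul]
    _ = d h * ∏ x ∈ s, x • d (κ x) := by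
      simp only [smul_mul', Finset.prod_mul_distrib, hprod, inv_inv]
  exact ⟨(∏ x ∈ s, x • d (κ x))⁻¹, fun h ↦ by
    rw [smul_inv', hsmul, mul_inv, mul_inv_cancel_left]⟩

end IsFrobeniusAction

end FrobeniusAction

/-! ### Lifting fixed points -/

section FixedPointsLift

variable {A G : Type*} [Group A] [Group G] [MulDistribMulAction A G]

/-- Every coset of `N` stabilized by `S` contains a fixed point of `S`. If `N` is a normal invariant
subgroup, this says that the fixed points of `S` in `G ⧸ N` lift to fixed points in `G`. -/
def FixedPointsLift (S : Subgroup A) (N : Subgroup G) : Prop :=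
  ∀ g, (∀ a ∈ S, g⁻¹ * a • g ∈ N) → ∃ n ∈ N, g * n ∈ autFixed S

/-- The nontrivial elements of `H` do not commute with nontrivial elements of `F`. If `F` is normal,
this says that `F ⊔ H` is a Frobenius group with kernel `F` and complement `H`, apart from the
nontriviality of `F` and `H`. -/
def IsFrobeniusPair (F H : Subgroup A) : Prop :=
  ∀ h ∈ H, h ≠ 1 → ∀ f ∈ F, h * f * h⁻¹ = f → f = 1

variable {S F H : Subgroup A} {N X : Subgroup G}

theorem IsFrobeniusPair.isFrobeniusAction (h : IsFrobeniusPair F H)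
    (hHF : H ≤ normalizer (F : Set A)) : @IsFrobeniusAction H F _ _ (conjAction hHF) :=
  fun a ha f haf ↦ Subtype.ext <|
    h a a.2 (mt OneMemClass.coe_eq_one.1 ha) f f.2 (congrArg Subtype.val haf)

theorem smulDistribClass_conjAction (X : Type*) [MulAction A X] (hHF : H ≤ normalizer (F : Set A)) :
    @SMulDistribClass H F X (conjAction hHF).toSMul _ _ :=
  @SMulDistribClass.mk H F X (conjAction hHF).toSMul _ _ fun h f x ↦ by
    change (h : A) • (f : A) • x = ((h : A) * f * (h : A)⁻¹) • (h : A) • x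
    rw [← mul_smul, ← mul_smul, inv_mul_cancel_right]

namespace FixedPointsLift

variable (S) in
theorem bot : FixedPointsLift S (⊥ : Subgroup G) := fun g hg ↦
  ⟨1, one_mem _, fun a ha ↦ by simpa only [mul_one] using (inv_mul_eq_one.1 (hg a ha)).symm⟩

theorem of_coprime [Finite S] [Group.IsNilpotent S] [Finite G] [IsSMulInvariant S N]
    (hc : (Nat.card S).Coprime (Nat.card N)) : FixedPointsLift S N := fun g hg ↦ by
  obtain ⟨n, hn, hgn⟩ := (hasCoprimeFixedPoints S).exists_mul_mem_fixedPoints hc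
    fun a : S ↦ hg a a.2
  exact ⟨n, hn, fun a ha ↦ hgn ⟨a, ha⟩⟩

theorem of_isMulCommutative [Finite A] [F.Normal] [IsMulCommutative N] [IsSMulInvariant A N]
    (hFH : IsFrobeniusPair F H) (hF : autFixed (G := G) F = ⊥) : FixedPointsLift H N :=
  fun g hg ↦ by
  have hHF : H ≤ normalizer (F : Set A) := (F.normalizer_eq_top).symm ▸ le_top
  let := conjAction hHF
  let := Fintype.ofFinite F
  have := smulDistribClass_conjAction N hHF
  have hFN : autFixed (G := N) (⊤ : Subgroup F) = ⊥ := eq_bot_iff.2 fun n hn ↦ by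
    have hnF : (n : G) ∈ autFixed F := fun f hf ↦ congrArg Subtype.val (hn ⟨f, hf⟩ (mem_top _))
    rw [hF, mem_bot] at hnF
    exact Subtype.ext hnF
  obtain ⟨n, hn⟩ := (hFH.isFrobeniusAction hHF).exists_mul_smul_eq (traceHom_eq_one hFN)
    (fun h ↦ (⟨g⁻¹ * (h : A) • g, hg h h.2⟩ : N)) fun h k ↦ Subtype.ext <| by
      change g⁻¹ * ((h : A) * k) • g = g⁻¹ * (h : A) • g * ((h : A) • (g⁻¹ * (k : A) • g))
      rw [mul_smul, smul_mul' (h : A), smul_inv', mul_assoc, mul_inv_cancel_left]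
  refine ⟨n, n.2, fun h hh ↦ ?_⟩
  have hgn : g⁻¹ * h • g * h • (n : G) = n := congrArg Subtype.val (hn ⟨h, hh⟩)
  rwa [smul_mul', ← inv_mul_eq_iff_eq_mul, ← mul_assoc]

theorem of_isPGroup [Finite A] [Finite G] [F.Normal] [Group.IsNilpotent F] [IsSMulInvariant A N]
    {r : ℕ} [Fact r.Prime] (hF : autFixed (G := G) F = ⊥) (hN : IsPGroup r N) :
    FixedPointsLift F N := fun g hg ↦ by
  obtain ⟨E, P, hE, _, rfl, hEr, hP⟩ := exists_normal_sup_eq_of_isNilpotent r F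
  have hEF : E ≤ E ⊔ P := le_sup_left
  have : Group.IsNilpotent E := Group.nilpotent_of_mulEquiv (subgroupOfEquivOfLe hEF)
  have hc : (Nat.card E).Coprime (Nat.card N) := by
    obtain ⟨n, hn⟩ := IsPGroup.iff_card.1 hN
    exact hn ▸ hEr.pow_right n
  obtain ⟨n, hn, hgn⟩ := of_coprime hc g fun a ha ↦ hg a (hEF ha)
  refine ⟨n, hn, fun f hf ↦ ?_⟩
  have hmemN : (g * n)⁻¹ * f • (g * n) ∈ N := by
    simpa only [smul_mul', mul_inv_rev, mul_assoc] using
      mul_mem (mul_mem (inv_mem hn) (hg f hf)) (IsSMulInvariant.smul_mem f hn)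
  have hmemE : (g * n)⁻¹ * f • (g * n) ∈ autFixed E :=
    mul_mem ((autFixed E).inv_mem hgn) (IsSMulInvariant.smul_mem f hgn)
  have hmem : (g * n)⁻¹ * f • (g * n) ∈ N ⊓ autFixed E := ⟨hmemN, hmemE⟩
  rw [inf_autFixed_eq_bot hP hF hN, mem_bot] at hmem
  exact (inv_mul_eq_one.1 hmem).symm

variable [X.Normal] [IsSMulInvariant A X]

theorem of_map (hX : FixedPointsLift S X) (h : FixedPointsLift S (N.map (QuotientGroup.mk' X)))
    (hXN : X ≤ N) : FixedPointsLift S N := fun g hg ↦ by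
  obtain ⟨_, ⟨x, hx, rfl⟩, hgx⟩ := h g fun a ha ↦ ⟨_, hg a ha, rfl⟩
  obtain ⟨y, hy, hgxy⟩ := hX (g * x) fun a ha ↦ QuotientGroup.eq.1 (hgx a ha).symm
  exact ⟨x * y, mul_mem hx (hXN hy), by rwa [← mul_assoc]⟩

theorem autFixed_quotient (hX : FixedPointsLift S X) :
    autFixed (G := G ⧸ X) S = (autFixed S).map (QuotientGroup.mk' X) := by
  refine le_antisymm (fun x hx ↦ ?_) ?_
  · obtain ⟨g, rfl⟩ := QuotientGroup.mk_surjective x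
    obtain ⟨n, hn, hgn⟩ := hX g fun a ha ↦ QuotientGroup.eq.1 (hx a ha).symm
    exact ⟨g * n, hgn, QuotientGroup.mk_mul_of_mem g hn⟩
  · rintro _ ⟨g, hg, rfl⟩ a ha
    exact congrArg ((↑) : G → G ⧸ X) (hg a ha)

theorem autFixed_quotient_eq_bot (hX : FixedPointsLift S X) (hS : autFixed (G := G) S = ⊥) :
    autFixed (G := G ⧸ X) S = ⊥ := by
  rw [hX.autFixed_quotient, hS, Subgroup.map_bot]

end FixedPointsLift

universe u

/- Induction on `|G|`, passing to the quotient by an elementary abelian invariant subgroup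
contained in `N`. -/
theorem fixedPointsLift_of_isElementaryInvariant {A : Type*} [Group A] [Finite A]
    {F S : Subgroup A} [F.Normal] [Group.IsNilpotent F]
    (hS : ∀ (G : Type u) [Group G] [Finite G] [MulDistribMulAction A G],
      autFixed (G := G) F = ⊥ →
      ∀ (r : ℕ) (V : Subgroup G), IsElementaryInvariant A r V → FixedPointsLift S V)
    {G : Type u} [Group G] [Finite G] [MulDistribMulAction A G] (hF : autFixed (G := G) F = ⊥)
    (N : Subgroup G) [N.Normal] [IsSMulInvariant A N] [Group.IsNilpotent N] :
    FixedPointsLift S N := by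
  induction hn : Nat.card G using Nat.strong_induction_on generalizing G with | _ n ih
  subst hn
  obtain rfl | hN := eq_or_ne N ⊥
  · exact FixedPointsLift.bot S
  obtain ⟨r, X, hX, hXN⟩ := exists_isElementaryInvariant_of_ne_bot (A := A) hN
  have := hX.normal
  have := hX.isSMulInvariant
  have := hX.isElementaryAbelian
  have := Fact.mk hX.prime
  have hnorm := Normal.map ‹N.Normal› (QuotientGroup.mk' X) (QuotientGroup.mk'_surjective X)
  have := Group.nilpotent_of_surjective ((QuotientGroup.mk' X).subgroupMap N)
    ((QuotientGroup.mk' X).subgroupMap_surjective N)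
  have hFX := FixedPointsLift.of_isPGroup hF (isPGroup_of_isElementaryAbelian (p := r) (G := X))
  exact (hS G hF r X hX).of_map (ih _ (card_quotient_lt_of_ne_bot hX.ne_bot)
    (hFX.autFixed_quotient_eq_bot hF) _ rfl) hXN

theorem fixedPointsLift_of_isNilpotent {A : Type*} [Group A] [Finite A] {F : Subgroup A}
    [F.Normal] [Group.IsNilpotent F] {G : Type*} [Group G] [Finite G] [MulDistribMulAction A G]
    (hF : autFixed (G := G) F = ⊥) (N : Subgroup G) [N.Normal] [IsSMulInvariant A N]
    [Group.IsNilpotent N] : FixedPointsLift F N :=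
  fixedPointsLift_of_isElementaryInvariant (fun _ _ _ _ hF r _ hV ↦
    have := Fact.mk hV.prime
    have := hV.isSMulInvariant
    have := hV.isElementaryAbelian
    .of_isPGroup hF (isPGroup_of_isElementaryAbelian (p := r))) hF N

theorem IsFrobeniusPair.fixedPointsLift {A : Type*} [Group A] [Finite A] {F H : Subgroup A}
    (hFH : IsFrobeniusPair F H) [F.Normal] [Group.IsNilpotent F] {G : Type*} [Group G] [Finite G]
    [MulDistribMulAction A G] (hF : autFixed (G := G) F = ⊥) (N : Subgroup G) [N.Normal]
    [IsSMulInvariant A N] [Group.IsNilpotent N] : FixedPointsLift H N :=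
  fixedPointsLift_of_isElementaryInvariant (fun _ _ _ _ hF _ _ hV ↦
    have := hV.isSMulInvariant
    have := hV.isElementaryAbelian
    have := this.toIsMulCommutative
    .of_isMulCommutative hFH hF) hF N

end FixedPointsLift

/-! ### Fixed-point-free automorphisms of prime order -/

section Reduction

universe u

variable {A : Type*} [Group A]

theorem autFixed_eq_subgroupOf {G : Type*} [Group G] [MulDistribMulAction A G] (S : Subgroup A)
    (N : Subgroup G) [IsSMulInvariant A N] :
    autFixed (G := N) S = (autFixed S).subgroupOf N := by
  ext n
  exact forall₂_congr fun a _ ↦ Subtype.ext_iff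

theorem autFixed_subgroup_eq_bot {G : Type*} [Group G] [MulDistribMulAction A G] {S : Subgroup A}
    (hS : autFixed (G := G) S = ⊥) (N : Subgroup G) [IsSMulInvariant A N] :
    autFixed (G := N) S = ⊥ := by
  rw [autFixed_eq_subgroupOf, hS, bot_subgroupOf]

theorem isNilpotent_of_not_isMinimalNonNilpotent [Finite A] {F S : Subgroup A} [F.Normal]
    [Group.IsNilpotent F]
    (hlift : ∀ (G : Type u) [Group G] [Finite G] [MulDistribMulAction A G],
      autFixed (G := G) F = ⊥ → ∀ (N : Subgroup G) [N.Normal] [IsSMulInvariant A N]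
      [Group.IsNilpotent N], FixedPointsLift S N)
    (hmin : ∀ (G : Type u) [Group G] [Finite G] [MulDistribMulAction A G],
      autFixed (G := G) F = ⊥ → Group.IsNilpotent (autFixed (G := G) S) →
      ¬ IsMinimalNonNilpotent A G)
    {G : Type u} [Group G] [Finite G] [MulDistribMulAction A G] (hF : autFixed (G := G) F = ⊥)
    (hS : Group.IsNilpotent (autFixed (G := G) S)) : Group.IsNilpotent G := by
  induction hn : Nat.card G using Nat.strong_induction_on generalizing G with | _ n ih
  subst hn
  by_contra hG
  have hsub (N : Subgroup G) [IsSMulInvariant A N] (hN : N ≠ ⊤) : Group.IsNilpotent N := by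
    refine ih _ (card_lt_of_ne_top hN) (autFixed_subgroup_eq_bot hF N) ?_ rfl
    rw [autFixed_eq_subgroupOf]
    refine Subgroup.isNilpotent_of_ker_le_center (N.subtype.subgroupComap (autFixed S))
      (((MonoidHom.ker_eq_bot_iff _).2 fun _ _ h ↦ Subtype.ext (Subtype.ext ?_)).trans_le bot_le)
    exact congr(($h : G))
  refine hmin G hF hS ⟨hG, hsub, fun N _ _ hN ↦ ?_⟩
  obtain rfl | hNtop := eq_or_ne N ⊤
  · have := QuotientGroup.subsingleton_quotient_top (G := G)
    infer_instance
  have := hsub N hNtop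
  refine ih _ (card_quotient_lt_of_ne_bot hN)
    ((fixedPointsLift_of_isNilpotent hF N).autFixed_quotient_eq_bot hF) ?_ rfl
  rw [(hlift G hF N).autFixed_quotient]
  exact Group.nilpotent_of_surjective ((QuotientGroup.mk' N).subgroupMap _)
    ((QuotientGroup.mk' N).subgroupMap_surjective _)

theorem IsMinimalNonNilpotent.autFixed_quotient_centralizer_eq_bot [Finite A] {F : Subgroup A}
    [F.Normal] [Group.IsNilpotent F] {G : Type*} [Group G] [Finite G] [MulDistribMulAction A G]
    (hG : IsMinimalNonNilpotent A G) (hF : autFixed (G := G) F = ⊥) {r : ℕ} {V : Subgroup G}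
    [V.Normal] [IsSMulInvariant A V] (hV : IsElementaryInvariant A r V) :
    autFixed (G := G ⧸ centralizer (V : Set G)) F = ⊥ := by
  have := hG.isNilpotent_of_ne_top _ (hG.centralizer_ne_top hV)
  exact (fixedPointsLift_of_isNilpotent hF _).autFixed_quotient_eq_bot hF

end Reduction

section PrimeOrder

theorem isFrobeniusAction_of_prime_card {Γ U : Type*} [Group Γ] [Group U] [MulDistribMulAction Γ U]
    (hΓ : (Nat.card Γ).Prime) (hU : autFixed (G := U) (⊤ : Subgroup Γ) = ⊥) :
    IsFrobeniusAction Γ U := fun h hh u hu ↦ by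
  have := Fact.mk hΓ
  rwa [← mem_bot, ← hU, ← zpowers_eq_top_of_prime_card rfl hh, mem_autFixed_zpowers]

instance smulDistribClass_subgroup {A K V : Type*} [Group A] [Group K] [MulDistribMulAction A K]
    [SMul A V] [MulAction K V] [SMulDistribClass A K V] (U : Subgroup K) [IsSMulInvariant A U] :
    SMulDistribClass A U V :=
  ⟨fun a u ↦ smul_distrib_smul a (u : K)⟩

theorem isNilpotent_of_prime_card {Γ G : Type*} [Group Γ] [Group G] [Finite G]
    [MulDistribMulAction Γ G] (hΓ : (Nat.card Γ).Prime)
    (hfix : autFixed (G := G) (⊤ : Subgroup Γ) = ⊥) : Group.IsNilpotent G := by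
  have := Nat.finite_of_card_ne_zero hΓ.ne_zero
  have := Fact.mk hΓ
  have := Fintype.ofFinite Γ
  have : Group.IsNilpotent Γ := (IsPGroup.of_card (pow_one _).symm : IsPGroup _ Γ).isNilpotent
  refine isNilpotent_of_not_isMinimalNonNilpotent (F := (⊤ : Subgroup Γ)) (S := ⊤)
    (fun _ _ _ _ hF N _ _ _ ↦ fixedPointsLift_of_isNilpotent hF N) (fun G _ _ _ hF _ hG ↦ ?_) hfix
    (hfix ▸ inferInstance)
  obtain ⟨r, V₀, hV₀⟩ := hG.exists_isElementaryInvariant ⊤ hF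
  obtain ⟨V, -, hV⟩ := (Set.toFinite {V | IsElementaryInvariant Γ r V}).exists_le_minimal hV₀
  have := hV.prop.normal
  have := hV.prop.isSMulInvariant
  have := hV.prop.isElementaryAbelian
  obtain ⟨q, hq, hqr, hUV⟩ := hG.exists_autFixed_omegaCenter_eq_bot hV
  set U := omegaCenter q (G ⧸ centralizer (V : Set G))
  have := Fintype.ofFinite U
  have hfree : IsFrobeniusAction Γ U := isFrobeniusAction_of_prime_card hΓ
    (autFixed_subgroup_eq_bot (hG.autFixed_quotient_centralizer_eq_bot hF hV.prop) U)
  have htrU : autFixed (G := V) (⊤ : Subgroup U) = ⊥ :=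
    eq_bot_iff.2 fun v hv ↦ hUV ▸ fun u hu ↦ hv ⟨u, hu⟩ (mem_top _)
  refine hV.prop.ne_bot (eq_bot_iff.2 fun v hv ↦ ?_)
  have hpow : (⟨v, hv⟩ : V) ^ Nat.card U = 1 := by
    rw [hfree.pow_card_eq_prod (traceHom_eq_one htrU)]
    simp only [traceHom_eq_one (autFixed_subgroup_eq_bot hF V), smul_one, Finset.prod_const_one]
  have := Fact.mk hq
  obtain ⟨m, hm⟩ := IsPGroup.iff_card.1 (isPGroup_of_isElementaryAbelian (p := q) (G := U))
  rw [hm] at hpow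
  exact congrArg Subtype.val ((pow_eq_one_iff_of_coprime
    (((Nat.coprime_primes hq hV.prop.prime).2 hqr).pow_left m)).1
    ⟨hpow, IsElementaryAbelian.pow_eq_one _⟩)

theorem IsFrobeniusPair.isNilpotent {A : Type*} [Group A] [Finite A] {F H : Subgroup A}
    (hFH : IsFrobeniusPair F H) (hHF : H ≤ normalizer (F : Set A)) (hH : H ≠ ⊥) :
    Group.IsNilpotent F := by
  obtain ⟨p, hp, hpH⟩ := Nat.exists_prime_and_dvd (mt card_eq_one.1 hH)
  have := Fact.mk hp
  obtain ⟨h, hh⟩ := exists_prime_orderOf_dvd_card' p hpH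
  let := conjAction hHF
  refine isNilpotent_of_prime_card (Γ := zpowers h) (by rwa [Nat.card_zpowers, hh])
    (eq_bot_iff.2 fun f hf ↦ hFH.isFrobeniusAction hHF h ?_ f (hf ⟨h, mem_zpowers h⟩ (mem_top _)))
  rw [Ne, ← orderOf_eq_one_iff, hh]
  exact hp.ne_one

end PrimeOrder

/-! ### Frobenius permutation groups -/

section FrobeniusKernel

/-- The regular normal subgroup of a Frobenius permutation group, without normality or regularity:
the nontrivial elements of `N` fix no point and the elements outside `N` fix exactly one. -/
structure IsFrobeniusKernel {A : Type*} [Group A] (N : Subgroup A) (X : Type*) [MulAction A X] :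
    Prop where
  smul_ne : ∀ n ∈ N, n ≠ 1 → ∀ x : X, n • x ≠ x
  existsUnique : ∀ a ∉ N, ∃! x : X, a • x = x

/-- The points of `X` whose stabilizer in `A` is nontrivial. -/
def nontrivialStabilizer (A X : Type*) [Group A] [MulAction A X] : SubMulAction A X where
  carrier := {x | stabilizer A x ≠ ⊥}
  smul_mem' a x hx := by
    rwa [Set.mem_ofPred_eq, stabilizer_smul_eq_stabilizer_map_conj, Ne,
      map_eq_bot_iff_of_injective _ (MulAut.conj a).injective]

variable {A : Type*} [Group A] {N : Subgroup A} {X : Type*} [MulAction A X]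

theorem mem_nontrivialStabilizer {x : X} :
    x ∈ nontrivialStabilizer A X ↔ stabilizer A x ≠ ⊥ := Iff.rfl

theorem stabilizer_nontrivialStabilizer_ne_bot (y : nontrivialStabilizer A X) :
    stabilizer A y ≠ ⊥ := by
  rw [SubMulAction.stabilizer_of_subMul]
  exact y.2

theorem two_mul_card_le_sum_card_fixedBy [Fintype A] [Finite X]
    (hstab : ∀ x : X, stabilizer A x ≠ ⊥) :
    2 * Nat.card X ≤ ∑ a : A, Nat.card (fixedBy X a) := by
  classical
  have := Fintype.ofFinite X
  have hcount := Finset.sum_card_bipartiteAbove_eq_sum_card_bipartiteBelow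
    (s := (Finset.univ : Finset A)) (t := (Finset.univ : Finset X)) fun a x ↦ a • x = x
  simp only [Finset.bipartiteAbove, Finset.bipartiteBelow, ← Fintype.card_subtype,
    ← Nat.card_eq_fintype_card] at hcount
  refine le_trans ?_ hcount.ge
  rw [mul_comm, Nat.card_eq_fintype_card, ← Finset.card_univ, ← smul_eq_mul]
  exact Finset.card_nsmul_le_sum _ _ _ fun x _ ↦ (one_lt_card_iff_ne_bot _).2 (hstab x)

namespace IsFrobeniusKernel

theorem subgroupOf (h : IsFrobeniusKernel N X) (S : Subgroup A) :
    IsFrobeniusKernel (N.subgroupOf S) X where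
  smul_ne n hn hne := h.smul_ne n hn (mt OneMemClass.coe_eq_one.1 hne)
  existsUnique a ha := h.existsUnique a ha

theorem nontrivialStabilizer (h : IsFrobeniusKernel N X) :
    IsFrobeniusKernel N (nontrivialStabilizer A X) where
  smul_ne n hn hne x hx := h.smul_ne n hn hne x congr(($hx : X))
  existsUnique a ha := by
    obtain ⟨x, hx, huniq⟩ := h.existsUnique a ha
    have hmem : stabilizer A x ≠ ⊥ := fun hbot ↦
      ha (by rw [(mem_bot.1 (hbot ▸ hx : a ∈ (⊥ : Subgroup A)))]; exact one_mem N)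
    exact ⟨⟨x, hmem⟩, Subtype.ext hx, fun y hy ↦ Subtype.ext (huniq y congr(($hy : X)))⟩

theorem sum_card_fixedBy [Fintype A] (h : IsFrobeniusKernel N X) :
    ∑ a : A, Nat.card (fixedBy X a) + Nat.card N = Nat.card X + Nat.card A := by
  classical
  have hcard (a : A) : Nat.card (fixedBy X a) + (if a ∈ N then 1 else 0) =
      (if a = 1 then Nat.card X else 0) + 1 := by
    by_cases ha : a ∈ N
    · rw [if_pos ha]
      split_ifs with ha1
      · rw [ha1, fixedBy_one_eq_univ, Nat.card_univ]
      · rw [show fixedBy X a = ∅ from Set.eq_empty_of_forall_notMem (h.smul_ne a ha ha1),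
          Nat.card_of_isEmpty]
    · obtain ⟨x, hx, huniq⟩ := h.existsUnique a ha
      rw [if_neg ha, if_neg fun h1 : a = 1 ↦ ha (h1 ▸ one_mem N),
        show fixedBy X a = {x} from Set.eq_singleton_iff_unique_mem.2 ⟨hx, huniq⟩,
        Nat.card_unique]
  have hsum := Finset.sum_congr (rfl : (Finset.univ : Finset A) = _) fun a _ ↦ hcard a
  simpa only [Finset.sum_add_distrib, Finset.sum_boole, Finset.sum_ite_eq', Finset.mem_univ,
    if_true, Finset.sum_const, Finset.card_univ, smul_eq_mul, mul_one, Nat.cast_id,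
    ← Fintype.card_subtype, ← Nat.card_eq_fintype_card] using hsum

/- Burnside's lemma gives at most `2 (|A| - |N|) / |A| < 2` orbits. -/
theorem isPretransitive_and_card_eq [Finite A] [Finite X] [Nonempty X]
    (h : IsFrobeniusKernel N X) (hstab : ∀ x : X, stabilizer A x ≠ ⊥) :
    IsPretransitive A X ∧ Nat.card X = Nat.card N := by
  classical
  have := Fintype.ofFinite A
  have := Fintype.ofFinite X
  have hfix := h.sum_card_fixedBy
  have hle := two_mul_card_le_sum_card_fixedBy hstab
  have hburnside := sum_card_fixedBy_eq_card_orbits_mul_card_group A X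
  simp only [← Nat.card_eq_fintype_card] at hburnside
  have : Nonempty (orbitRel.Quotient A X) := (nonempty_quotient_iff _).2 ‹_›
  have hpos : 0 < Nat.card (orbitRel.Quotient A X) := Nat.card_pos
  have hN : 0 < Nat.card N := Nat.card_pos
  have horbits : Nat.card (orbitRel.Quotient A X) = 1 := by
    by_contra hne
    have := Nat.mul_le_mul_right (Nat.card A) (show 2 ≤ Nat.card (orbitRel.Quotient A X) by lia)
    lia
  refine ⟨(pretransitive_iff_subsingleton_quotient A X).2 (Nat.card_eq_one_iff_unique.1 horbits).1,
    ?_⟩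
  rw [horbits, one_mul] at hburnside
  lia

end IsFrobeniusKernel

end FrobeniusKernel

section CosetAction

variable {A : Type*} [Group A] {F H : Subgroup A}

theorem IsFrobeniusPair.inf_eq_bot (hFH : IsFrobeniusPair F H) : F ⊓ H = ⊥ :=
  eq_bot_iff.2 fun a ⟨haF, haH⟩ ↦ by_contra fun hne ↦
    hne (hFH a haH hne a haF (mul_inv_cancel_right a a))

theorem exists_mem_mk_eq_of_sup_eq_top [F.Normal] (hsup : F ⊔ H = ⊤) (x : A ⧸ H) :
    ∃ f ∈ F, (f : A ⧸ H) = x := by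
  obtain ⟨a, rfl⟩ := QuotientGroup.mk_surjective x
  obtain ⟨f, hf, h, hh, rfl⟩ := mem_sup_of_normal_left.1 (hsup ▸ mem_top a : a ∈ F ⊔ H)
  exact ⟨f, hf, QuotientGroup.eq.2 (by simpa using hh)⟩

namespace IsFrobeniusPair

theorem eq_one_of_smul_mk_eq [F.Normal] (hFH : IsFrobeniusPair F H) {f h : A} (hf : f ∈ F)
    (hh : h ∈ H) (hh1 : h ≠ 1) (hfix : h • (f : A ⧸ H) = f) : f = 1 := by
  have hmem : f⁻¹ * (h * f * h⁻¹) ∈ F ⊓ H := by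
    refine ⟨F.mul_mem (F.inv_mem hf) (‹F.Normal›.conj_mem f hf h), ?_⟩
    rw [← mul_assoc]
    exact H.mul_mem (QuotientGroup.eq.1 hfix.symm) (H.inv_mem hh)
  rw [hFH.inf_eq_bot, mem_bot, inv_mul_eq_one] at hmem
  exact hFH h hh hh1 f hf hmem.symm

theorem exists_eq_conj_of_notMem [Finite A] [F.Normal] (hFH : IsFrobeniusPair F H)
    (hsup : F ⊔ H = ⊤) {a : A} (ha : a ∉ F) :
    ∃ f ∈ F, ∃ h ∈ H, h ≠ 1 ∧ f * h * f⁻¹ = a := by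
  obtain ⟨f, hf, h, hh, rfl⟩ := mem_sup_of_normal_left.1 (hsup ▸ mem_top a : a ∈ F ⊔ H)
  have hh1 : h ≠ 1 := by
    rintro rfl
    exact ha ((mul_one f).symm ▸ hf)
  have hHF : H ≤ normalizer (F : Set A) := (F.normalizer_eq_top).symm ▸ le_top
  let := conjAction hHF
  have hinj := (hFH.isFrobeniusAction hHF).injective_mul_smul_inv (h := ⟨h, hh⟩)
    (mt Subtype.ext_iff.1 hh1)
  obtain ⟨y, hy⟩ := Finite.injective_iff_surjective.1 hinj ⟨f, hf⟩
  have hyf : (y : A) * (h * (y : A)⁻¹ * h⁻¹) = f := congr(($hy : A))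
  exact ⟨y, y.2, h, hh, hh1, by rw [← hyf]; group⟩

theorem isFrobeniusKernel [Finite A] [F.Normal] (hFH : IsFrobeniusPair F H) (hsup : F ⊔ H = ⊤) :
    IsFrobeniusKernel F (A ⧸ H) where
  smul_ne a ha ha1 x hx := by
    obtain ⟨g, rfl⟩ := QuotientGroup.mk_surjective x
    have hmem : g⁻¹ * a * g⁻¹⁻¹ ∈ F ⊓ H := by
      refine ⟨‹F.Normal›.conj_mem a ha g⁻¹, ?_⟩
      rw [inv_inv, mul_assoc]
      exact QuotientGroup.eq.1 hx.symm
    rw [hFH.inf_eq_bot, mem_bot, conj_eq_one_iff] at hmem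
    exact ha1 hmem
  existsUnique a ha := by
    obtain ⟨y, -, h, hh, hh1, rfl⟩ := hFH.exists_eq_conj_of_notMem hsup ha
    refine ⟨y, ?_, fun x hx ↦ ?_⟩
    · exact QuotientGroup.eq.2 (by simpa [mul_assoc] using hh)
    · obtain ⟨f, hf, hfx⟩ := exists_mem_mk_eq_of_sup_eq_top hsup (y⁻¹ • x)
      have hfix : h • (f : A ⧸ H) = f := by
        rwa [hfx, eq_inv_smul_iff, ← mul_smul, ← mul_smul]
      rw [hFH.eq_one_of_smul_mk_eq hf hh hh1 hfix, eq_inv_smul_iff] at hfx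
      rw [← hfx, MulAction.Quotient.smul_coe, smul_eq_mul, mul_one]

end IsFrobeniusPair

end CosetAction

/-! ### Modules over a Frobenius group -/

section Hyperplane

theorem mem_of_zpow_mem_of_isCoprime {G : Type*} [Group G] {S : Subgroup G} {g : G} {m n : ℤ}
    (hmn : IsCoprime m n) (hm : g ^ m ∈ S) (hn : g ^ n ∈ S) : g ∈ S := by
  obtain ⟨x, y, hxy⟩ := hmn
  rw [← zpow_one g, ← hxy, zpow_add, zpow_mul', zpow_mul']
  exact S.mul_mem (S.zpow_mem hm x) (S.zpow_mem hn y)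

theorem isCoatom_of_sup_zpowers_eq_top {U : Type*} [Group U] [IsMulCommutative U] {q : ℕ}
    (hq : q.Prime) {B : Subgroup U} {a : U} (hB : B ≠ ⊤) (ha : a ^ (q : ℤ) = 1)
    (hBa : B ⊔ zpowers a = ⊤) : IsCoatom B := by
  refine ⟨hB, fun C hBC ↦ ?_⟩
  obtain ⟨c, hc, hcB⟩ := SetLike.exists_of_lt hBC
  obtain ⟨b, hb, _, ⟨i, rfl⟩, rfl⟩ := mem_sup.1 (hBa ▸ mem_top c : c ∈ B ⊔ zpowers a)
  dsimp only at hc hcB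
  have hai : a ^ i ∈ C := (mul_mem_cancel_left (hBC.le hb)).1 hc
  have hi : IsCoprime (q : ℤ) i := by
    rw [(Nat.prime_iff_prime_int.1 hq).coprime_iff_not_dvd]
    rintro ⟨j, rfl⟩
    refine hcB ?_
    rwa [zpow_mul, ha, one_zpow, mul_one]
  rw [eq_top_iff, ← hBa, sup_le_iff, zpowers_le]
  exact ⟨hBC.le, mem_of_zpow_mem_of_isCoprime hi (ha ▸ C.one_mem) hai⟩

theorem exists_isCoatom_autFixed_ne_bot {q : ℕ} (hq : q.Prime) (U V : Type*) [Group U] [Group V]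
    [IsElementaryAbelian q U] [IsMulCommutative V] [Finite V] [Nontrivial V]
    [MulDistribMulAction U V] (hUV : autFixed (G := V) (⊤ : Subgroup U) = ⊥) :
    ∃ B : Subgroup U, IsCoatom B ∧ autFixed (G := V) B ≠ ⊥ := by
  obtain ⟨B, a, hBa, hB⟩ := exists_sup_zpowers_eq_top_and_autFixed_ne_bot U V
  exact ⟨B, isCoatom_of_sup_zpowers_eq_top hq (fun h ↦ hB (h ▸ hUV))
    ((zpow_natCast a q).trans (IsElementaryAbelian.pow_eq_one a)) hBa, hB⟩

theorem traceHom_eq_one_of_isCoatom {U V : Type*} [Group U] [IsMulCommutative U] [Group V]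
    [IsMulCommutative V] [MulDistribMulAction U V]
    (hUV : autFixed (G := V) (⊤ : Subgroup U) = ⊥) {B : Subgroup U} [Fintype B] (hB : IsCoatom B)
    {u : U} (hu : u ∉ B) {v : V} (huv : u • v = v) : traceHom B V v = 1 := by
  have hBu : B ⊔ zpowers u = ⊤ := hB.2 _ (left_lt_sup.2 fun h ↦ hu (h (mem_zpowers u)))
  rw [← mem_bot, ← hUV, ← hBu, autFixed_sup, mem_inf, mem_autFixed_zpowers]
  refine ⟨fun b hb ↦ smul_traceHom (⟨b, hb⟩ : B) v, ?_⟩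
  rw [← traceHom_smul_of_mem_centralizer (mem_centralizer_iff.2 fun b _ ↦ mul_comm b u), huv]

end Hyperplane

section CentralizerMod

variable {A U V : Type*} [Group A] [Group U] [IsMulCommutative U] [MulDistribMulAction A U]

/-- The subgroup `C_A(U / B)` of the elements of `A` that act trivially on `U` modulo `B`; the
subgroup `B` need not be `A`-invariant. -/
def centralizerMod (A : Type*) [Group A] [MulDistribMulAction A U] (B : Subgroup U) :
    Subgroup A where
  carrier := {a | ∀ u : U, a • u / u ∈ B}
  one_mem' u := by simp
  mul_mem' {a b} ha hb u := by
    rw [mul_smul, ← div_mul_div_cancel _ (b • u)]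
    exact B.mul_mem (ha _) (hb u)
  inv_mem' {a} ha u := by
    simpa using B.inv_mem (ha (a⁻¹ • u))

variable [Group V] [IsMulCommutative V] [MulDistribMulAction A V] [MulDistribMulAction U V]
  [SMulDistribClass A U V]

theorem exists_smul_notMem_of_notMem_centralizerMod {B : Subgroup U} (hB : IsCoatom B) {c : U}
    (hcB : c ∉ B) {a : A} (hac : a • c = c) (ha : a ∉ centralizerMod A B) :
    ∃ b ∈ B, a • b ∉ B := by
  contrapose! ha
  intro u
  have hBc : B ⊔ zpowers c = ⊤ := hB.2 _ (left_lt_sup.2 fun h ↦ hcB (h (mem_zpowers c)))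
  obtain ⟨b, hb, _, ⟨i, rfl⟩, rfl⟩ := mem_sup.1 (hBc ▸ mem_top u : u ∈ B ⊔ zpowers c)
  rw [smul_mul', smul_zpow', hac, mul_div_mul_right_eq_div]
  exact B.div_mem (ha b hb) hb

/- If `c ∉ B`, the trace of `B` kills both `∏ a, a • v`, which `c` fixes, and every `a • v` with
`a ≠ 1`, which some `a • b ∉ B` fixes; so it also kills `v`. -/
theorem mem_of_centralizerMod_eq_bot [Finite A]
    (hUV : autFixed (G := V) (⊤ : Subgroup U) = ⊥) {B : Subgroup U} [Finite B] (hB : IsCoatom B)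
    (hcop : (Nat.card B).Coprime (Nat.card V)) (hBV : autFixed (G := V) B ≠ ⊥)
    (htriv : centralizerMod A B = ⊥) {c : U} (hc : c ∈ autFixed (⊤ : Subgroup A))
    (hcV : ∀ v ∈ autFixed (G := V) (⊤ : Subgroup A), c • v = v) : c ∈ B := by
  have := Fintype.ofFinite A
  have := Fintype.ofFinite B
  by_contra hcB
  have htr {u : U} (hu : u ∉ B) {v : V} (huv : u • v = v) : traceHom B V v = 1 :=
    traceHom_eq_one_of_isCoatom hUV hB hu huv
  refine hBV (eq_bot_iff.2 fun v hv ↦ ?_)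
  have hsmul (a : A) (ha : a ≠ 1) : traceHom B V (a • v) = 1 := by
    obtain ⟨b, hb, hab⟩ := exists_smul_notMem_of_notMem_centralizerMod hB hcB
      (hc a (mem_top a)) (by rwa [htriv, mem_bot])
    exact htr hab (by rw [← smul_distrib_smul, hv b hb])
  have hsum : traceHom B V (traceHom A V v) = 1 :=
    htr hcB (hcV _ fun a _ ↦ smul_traceHom a v)
  rw [traceHom_apply (A := A), map_prod, Finset.prod_eq_single_of_mem 1 (Finset.mem_univ _)
    fun a _ ↦ hsmul a, one_smul] at hsum
  exact eq_one_of_traceHom_eq_one hcop (fun b ↦ hv b b.2) hsum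

end CentralizerMod

section EquivariantMap

variable {A U X : Type*} [Group A] [Group U] [IsMulCommutative U] [MulDistribMulAction A U]
  [MulAction A X]

theorem prod_mem_autFixed_top [Fintype X] (f : X →[A] U) :
    ∏ x, f x ∈ autFixed (⊤ : Subgroup A) := fun a _ ↦ by
  simp only [Finset.smul_prod', ← map_smul]
  exact (toPerm a).bijective.prod_comp f

/- Off the points with nontrivial stabilizer in `C_A(U / B)` the map `f` is trivial modulo `B`, on
them it is constant modulo `B`, and its product over all points is `1`. -/
theorem IsFrobeniusKernel.apply_mem [Finite A] [Finite X] {F : Subgroup A}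
    (hF : IsFrobeniusKernel F X) (hUF : autFixed (G := U) F = ⊥)
    (hcop : (Nat.card F).Coprime (Nat.card U)) {B : Subgroup U} (f : X →[A] U)
    (hB : ∀ x, stabilizer (centralizerMod A B) x = ⊥ → f x ∈ B) (x : X) : f x ∈ B := by
  classical
  have := Fintype.ofFinite X
  let S := centralizerMod A B
  let Y := _root_.nontrivialStabilizer S X
  by_cases hx : x ∈ Y
  swap
  · exact hB x (not_not.1 (mt mem_nontrivialStabilizer.2 hx))
  have : Nonempty Y := ⟨⟨x, hx⟩⟩
  obtain ⟨htrans, hcard⟩ := (hF.subgroupOf S).nontrivialStabilizer.isPretransitive_and_card_eq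
    stabilizer_nontrivialStabilizer_ne_bot
  have hconst (y : Y) : (f y : U ⧸ B) = f x := by
    obtain ⟨s, rfl⟩ := MulAction.exists_smul_eq S (⟨x, hx⟩ : Y) y
    rw [QuotientGroup.eq_iff_div_mem]
    exact (map_smul f (s : A) x).symm ▸ s.2 (f x)
  have hpow : (f x : U ⧸ B) ^ Nat.card Y = 1 := calc
    (f x : U ⧸ B) ^ Nat.card Y = ∏ y : Y, (f y : U ⧸ B) := by
      simp only [hconst, Finset.prod_const, Finset.card_univ, Nat.card_eq_fintype_card]
    _ = ∏ z : X, (f z : U ⧸ B) := by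
      rw [← Finset.prod_subtype (Finset.univ.filter (· ∈ Y)) (by simp) fun z ↦ (f z : U ⧸ B)]
      refine Finset.prod_filter_of_ne fun z _ hz ↦ ?_
      contrapose! hz
      exact (QuotientGroup.eq_one_iff _).2 (hB z (not_not.1 (mt mem_nontrivialStabilizer.2 hz)))
    _ = ((∏ z : X, f z : U) : U ⧸ B) := (map_prod (QuotientGroup.mk' B) _ _).symm
    _ = 1 := by
      have hprod : ∏ z : X, f z ∈ autFixed F := autFixed_anti le_top (prod_mem_autFixed_top f)
      rw [hUF, mem_bot] at hprod
      rw [hprod, QuotientGroup.mk_one]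
  have hYU : (Nat.card Y).Coprime (Nat.card U) := hcop.coprime_dvd_left
    (hcard ▸ card_comap_dvd_of_injective F S.subtype S.subtype_injective)
  exact mem_of_pow_mem_of_coprime (hYU.coprime_dvd_right (orderOf_dvd_natCard _))
    ((QuotientGroup.eq_one_iff _).1 hpow)

end EquivariantMap

section Frobenius

theorem exists_mulActionHom_mk_eq {A X : Type*} [Group A] [MulAction A X] {H : Subgroup A} {x : X}
    (hx : H ≤ stabilizer A x) : ∃ f : A ⧸ H →[A] X, ∀ a : A, f a = a • x :=
  ⟨{toFun p := p.liftOn' (· • x) fun a b hab ↦ by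
      rw [eq_comm, ← inv_smul_eq_iff, ← mul_smul]
      exact hx (QuotientGroup.leftRel_apply.1 hab)
    map_smul' a p := by
      obtain ⟨b, rfl⟩ := QuotientGroup.mk_surjective p
      exact mul_smul a b x}, fun _ ↦ rfl⟩

theorem autFixed_subgroupOf {A G : Type*} [Group A] [Group G] [MulDistribMulAction A G]
    {S K : Subgroup A} (hSK : S ≤ K) : autFixed (G := G) (S.subgroupOf K) = autFixed S :=
  le_antisymm (fun _ hg a ha ↦ hg ⟨a, hSK ha⟩ ha) fun _ hg a ha ↦ hg a ha

namespace IsFrobeniusPair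

theorem subgroupOf {A : Type*} [Group A] {F H : Subgroup A} (hFH : IsFrobeniusPair F H)
    (K : Subgroup A) : IsFrobeniusPair (F.subgroupOf K) (H.subgroupOf K) :=
  fun h hh hne f hf hhf ↦ Subtype.ext <|
    hFH h hh (mt OneMemClass.coe_eq_one.1 hne) f hf congr(($hhf : A))

variable {A U V : Type*} [Group A] [Finite A] [Group U] [Finite U] [Group V]
  [IsMulCommutative V] [MulDistribMulAction A U] [MulDistribMulAction A V]
  [MulDistribMulAction U V] [SMulDistribClass A U V] {F H : Subgroup A} [F.Normal]

theorem smul_mem_of_isCoatom [IsMulCommutative U] (hFH : IsFrobeniusPair F H) (hsup : F ⊔ H = ⊤)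
    (hUF : autFixed (G := U) F = ⊥) (hFU : (Nat.card F).Coprime (Nat.card U))
    (hUcard : (Nat.card U).Coprime (Nat.card V)) (hUV : autFixed (G := V) (⊤ : Subgroup U) = ⊥)
    {B : Subgroup U} (hB : IsCoatom B) (hBV : autFixed (G := V) B ≠ ⊥) {c : U}
    (hc : c ∈ autFixed H) (hcV : ∀ v ∈ autFixed (G := V) H, c • v = v) (a : A) : a • c ∈ B := by
  obtain ⟨f, hf⟩ := exists_mulActionHom_mk_eq (mem_autFixed_iff_le_stabilizer.1 hc)
  rw [← hf]
  refine (hFH.isFrobeniusKernel hsup).apply_mem hUF hFU f (fun x hx ↦ ?_) a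
  obtain ⟨g, rfl⟩ := QuotientGroup.mk_surjective x
  refine mem_of_centralizerMod_eq_bot (A := stabilizer A (g : A ⧸ H)) hUV hB
    (hUcard.coprime_dvd_left (card_subgroup_dvd_card B)) hBV (eq_bot_iff.2 fun k hk ↦ ?_)
    (fun k _ ↦ ?_) fun v hv ↦ ?_
  · have hkB : (k : A) ∈ centralizerMod A B := hk
    have hk1 : (⟨k, hkB⟩ : centralizerMod A B) = 1 := mem_bot.1 (hx.le k.2)
    exact Subtype.ext congr(($hk1 : A))
  · rw [Subgroup.smul_def, ← map_smul, k.2]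
  · have hgv : c • g⁻¹ • v = g⁻¹ • v := hcV _ fun h hh ↦ by
      have hgh : g * h * g⁻¹ ∈ stabilizer A (g : A ⧸ H) :=
        QuotientGroup.eq.2 (by simpa [mul_assoc] using hh)
      rw [eq_inv_smul_iff, ← mul_smul, ← mul_smul]
      exact hv ⟨_, hgh⟩ (mem_top _)
    rw [hf, ← smul_inv_smul g v, ← smul_distrib_smul, hgv]

theorem exists_smul_ne_of_sup_eq_top [Finite V] [Nontrivial V] {q : ℕ} (hq : q.Prime)
    [IsElementaryAbelian q U] (hFH : IsFrobeniusPair F H) (hsup : F ⊔ H = ⊤)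
    (hUF : autFixed (G := U) F = ⊥) (hFU : (Nat.card F).Coprime (Nat.card U))
    (hUcard : (Nat.card U).Coprime (Nat.card V)) (hUV : autFixed (G := V) (⊤ : Subgroup U) = ⊥) :
    ∃ c ∈ autFixed (G := U) H, ∃ v ∈ autFixed (G := V) H, c • v ≠ v := by
  have := Fintype.ofFinite F
  have := Fintype.ofFinite H
  by_contra! hcV
  obtain ⟨B, hB, hBV⟩ := exists_isCoatom_autFixed_ne_bot hq U V hUV
  have hHF : H ≤ normalizer (F : Set A) := (F.normalizer_eq_top).symm ▸ le_top
  let := conjAction hHF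
  have := smulDistribClass_conjAction U hHF
  refine hB.1 (eq_top_iff.2 fun u _ ↦ ?_)
  have hpow : u ^ Nat.card F ∈ B := by
    rw [(hFH.isFrobeniusAction hHF).pow_card_eq_prod
      (traceHom_eq_one (eq_bot_iff.2 fun w hw ↦ hUF ▸ fun a ha ↦ hw ⟨a, ha⟩ (mem_top _)))]
    refine B.prod_mem fun a _ ↦ ?_
    have htr : traceHom H U (a⁻¹ • u) ∈ autFixed H := fun h hh ↦ smul_traceHom (⟨h, hh⟩ : H) _
    exact hFH.smul_mem_of_isCoatom hsup hUF hFU hUcard hUV hB hBV htr (hcV _ htr) a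
  exact mem_of_pow_mem_of_coprime (hFU.coprime_dvd_right (orderOf_dvd_natCard u)) hpow

theorem exists_smul_ne [Finite V] [Nontrivial V] {q : ℕ} (hq : q.Prime) [IsElementaryAbelian q U]
    (hFH : IsFrobeniusPair F H) (hUF : autFixed (G := U) F = ⊥)
    (hFU : (Nat.card F).Coprime (Nat.card U)) (hUcard : (Nat.card U).Coprime (Nat.card V))
    (hUV : autFixed (G := V) (⊤ : Subgroup U) = ⊥) :
    ∃ c ∈ autFixed (G := U) H, ∃ v ∈ autFixed (G := V) H, c • v ≠ v := by
  have hF : F ≤ F ⊔ H := le_sup_left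
  have hH : H ≤ F ⊔ H := le_sup_right
  have : SMulDistribClass (F ⊔ H : Subgroup A) U V := ⟨fun a ↦ smul_distrib_smul (a : A)⟩
  obtain ⟨c, hc, v, hv, hcv⟩ := (hFH.subgroupOf (F ⊔ H)).exists_smul_ne_of_sup_eq_top (U := U)
    (V := V) hq (by rw [← subgroupOf_sup hF hH, subgroupOf_self])
    (by rwa [autFixed_subgroupOf hF]) (by rwa [Nat.card_congr (subgroupOfEquivOfLe hF).toEquiv])
    hUcard hUV
  rw [autFixed_subgroupOf hH] at hc hv
  exact ⟨c, hc, v, hv, hcv⟩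

end IsFrobeniusPair

end Frobenius

/-! ### Nilpotency of the acted-on group -/

section Main

theorem exists_commute_pow_of_isNilpotent {p : ℕ} [hp : Fact p.Prime] {G : Type*} [Group G]
    [Finite G] [Group.IsNilpotent G] {y : G} {k : ℕ} (hy : y ^ p ^ k = 1) (g : G) :
    ∃ j, Commute (g ^ p ^ j) y := by
  obtain ⟨N, hN, hNc, hNp⟩ := isPNilpotent_of_isNilpotent p G
  obtain ⟨m, -, hm⟩ := (Nat.dvd_prime_pow hp.out).1 (orderOf_dvd_of_pow_eq_one hy)
  obtain ⟨P, hP⟩ := (IsPGroup.of_card ((Nat.card_zpowers y).trans hm)).exists_le_sylow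
  obtain ⟨j, hj⟩ := isPGroup_quotient_iff.1 hNp g
  exact ⟨j, commute_of_normal_of_disjoint N P hN inferInstance
    (disjoint_of_coprime_of_isPGroup hNc P.2) _ y hj (hP (mem_zpowers y))⟩

variable {A G : Type*} [Group A] [Group G] [Finite G] [MulDistribMulAction A G]

theorem smul_eq_of_mem_autFixed_quotient_centralizer {S : Subgroup A}
    [Group.IsNilpotent (autFixed (G := G) S)] {r : ℕ} [Fact r.Prime] {V : Subgroup G} [V.Normal]
    [IsSMulInvariant A V] (hV : IsPGroup r V) (hlift : FixedPointsLift S (centralizer (V : Set G)))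
    {c : G ⧸ centralizer (V : Set G)} (hcr : r.Coprime (orderOf c))
    (hc : c ∈ autFixed S) {v : V} (hv : v ∈ autFixed S) : c • v = v := by
  rw [hlift.autFixed_quotient] at hc
  obtain ⟨g, hg, rfl⟩ := hc
  obtain ⟨k, hk⟩ := hV v
  have hvS : (v : G) ∈ autFixed S := (autFixed_eq_subgroupOf S V).le hv
  obtain ⟨j, hj⟩ := exists_commute_pow_of_isNilpotent (G := autFixed (G := G) S) (p := r) (k := k)
    (y := ⟨v, hvS⟩) (Subtype.ext congr(($hk : G))) ⟨g, hg⟩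
  refine mem_of_pow_mem_of_coprime (S := stabilizer _ v) (hcr.pow_left j) (Subtype.ext ?_)
  exact mul_inv_eq_iff_eq_mul.2 congr(($hj : G))

theorem IsFrobeniusPair.not_isMinimalNonNilpotent [Finite A] {F H : Subgroup A} [F.Normal]
    [Group.IsNilpotent F] (hFH : IsFrobeniusPair F H) (hF : autFixed (G := G) F = ⊥)
    (hH : Group.IsNilpotent (autFixed (G := G) H)) : ¬ IsMinimalNonNilpotent A G := fun hG ↦ by
  obtain ⟨r, V₀, hV₀⟩ := hG.exists_isElementaryInvariant F hF
  obtain ⟨V, -, hV⟩ := (Set.toFinite {V | IsElementaryInvariant A r V}).exists_le_minimal hV₀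
  have := hV.prop.normal
  have := hV.prop.isSMulInvariant
  have := hV.prop.isElementaryAbelian
  have := hG.isNilpotent_of_ne_top _ (hG.centralizer_ne_top hV.prop)
  obtain ⟨q, hq, hqr, hUV⟩ := hG.exists_autFixed_omegaCenter_eq_bot hV
  set U := omegaCenter q (G ⧸ centralizer (V : Set G))
  have := Fact.mk hq
  have := Fact.mk hV.prop.prime
  have : Nontrivial V := (nontrivial_iff_ne_bot _).2 hV.prop.ne_bot
  obtain ⟨n, hn⟩ := IsPGroup.iff_card.1 (isPGroup_of_isElementaryAbelian (p := q) (G := U))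
  obtain ⟨m, hm⟩ := IsPGroup.iff_card.1 (isPGroup_of_isElementaryAbelian (p := r) (G := V))
  obtain ⟨E, P, hE, -, rfl, hEq, hP⟩ := exists_normal_sup_eq_of_isNilpotent q F
  have hUE : autFixed (G := U) E = ⊥ := by
    rw [autFixed_eq_subgroupOf, subgroupOf_eq_bot, disjoint_iff, inf_comm]
    exact inf_autFixed_eq_bot hP (hG.autFixed_quotient_centralizer_eq_bot hF hV.prop)
      isPGroup_of_isElementaryAbelian
  have hEH : IsFrobeniusPair E H := fun h hh hne f hf ↦ hFH h hh hne f (le_sup_left (b := P) hf)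
  obtain ⟨c, hc, v, hv, hcv⟩ := hEH.exists_smul_ne hq hUE (hn ▸ hEq.pow_right n)
    (hn ▸ hm ▸ ((Nat.coprime_primes hq hV.prop.prime).2 hqr).pow n m)
    (eq_bot_iff.2 fun v hv ↦ hUV ▸ fun u hu ↦ hv ⟨u, hu⟩ (mem_top _))
  have hcr : r.Coprime (orderOf (c : G ⧸ centralizer (V : Set G))) :=
    ((Nat.coprime_primes hV.prop.prime hq).2 hqr.symm).coprime_dvd_right <|
      (orderOf_coe c).dvd.trans (orderOf_dvd_of_pow_eq_one (IsElementaryAbelian.pow_eq_one c))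
  exact hcv (smul_eq_of_mem_autFixed_quotient_centralizer isPGroup_of_isElementaryAbelian
    (hFH.fixedPointsLift hF _) hcr ((autFixed_eq_subgroupOf H U).le hc) hv)

end Main

/-- If a finite group `G` admits a Frobenius group of automorphisms `FH` with
`C_G(F) = 1` and `C_G(H)` is nilpotent, then `G` is nilpotent. -/
theorem stmt7 {A G : Type*} [Group A] [Group G] [Finite A] [Finite G]
    [MulDistribMulAction A G]
    (F H : Subgroup A) (hFnorm : F.Normal) (hsup : F ⊔ H = ⊤) (hinf : F ⊓ H = ⊥)
    (hHne : H ≠ ⊥)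
    (hfrob : ∀ h ∈ H, h ≠ 1 → ∀ f ∈ F, h * f * h⁻¹ = f → f = 1)
    (hfpf : autFixed (G := G) F = ⊥)
    (hnil : Group.IsNilpotent (autFixed (G := G) H)) :
    Group.IsNilpotent G := by
  have hFH : IsFrobeniusPair F H := hfrob
  have : Group.IsNilpotent F := hFH.isNilpotent (F.normalizer_eq_top.symm ▸ le_top) hHne
  exact isNilpotent_of_not_isMinimalNonNilpotent (fun _ _ _ _ hF N ↦ hFH.fixedPointsLift hF N)
    (fun _ _ _ _ hF hH ↦ hFH.not_isMinimalNonNilpotent hF hH) hfpf hnil
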